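/- arXiv:1503.07915 — 2 statements merged into one kernel-verified Lean document; each statement's English description precedes it below -/
import Mathlib

section
/- For all nonnegative integers a and b, the number of plane partitions contained in an a×a×2b box equals the number of symmetric plane partitions contained in that box multiplied by the number of transpose-complementary plane partitions contained in that box. (Equation (1.1): P(a,a,2b) = S(a,a,2b)·TC(a,a,2b).) -/
/-- The transpose of (the diagram of) a plane partition contained in an `a × a × c` box:
`(i,j,k)` is in the transpose iff `(j,i,k)` is in `T`. -/
def ppTranspose {a c : ℕ} (T : Set (Fin a × Fin a × Fin c)) : Set (Fin a × Fin a × Fin c) :=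
  {x | (x.2.1, x.1, x.2.2) ∈ T}

/-- The complement of (the diagram of) a plane partition contained in an `a × b × c` box:
`(i,j,k)` is in the complement iff `(a-1-i, b-1-j, c-1-k)` is not in `T`. -/
def ppComplement {a b c : ℕ} (T : Set (Fin a × Fin b × Fin c)) : Set (Fin a × Fin b × Fin c) :=
  {x | (x.1.rev, x.2.1.rev, x.2.2.rev) ∉ T}

open Finset Matrix

def cc : ℕ → ℤ → ℤ
  | 0, z => if z = 0 then 1 else 0
  | t + 1, z => cc t z + cc t (z - 1)

def bb : ℕ → ℤ → ℤ
  | 0, d => Int.sign d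
  | a + 1, d => 2 * bb a d + bb a (d + 1) + bb a (d - 1)

def gg (a : ℕ) (d : ℤ) : ℤ := cc (2 * a) (a + d)

theorem cc_symm (t : ℕ) : ∀ z, cc t (t - z) = cc t z := by
  induction t with
  | zero => intro z; simp [cc]
  | succ t ih =>
    intro z
    simp only [cc]
    have h1 := ih z
    have h2 := ih (z - 1)
    push_cast
    rw [show (t : ℤ) + 1 - z - 1 = t - z by ring, show (t : ℤ) + 1 - z = t - (z - 1) by ring, h1, h2]
    ring

theorem cc_neg (t : ℕ) : ∀ z, z < 0 → cc t z = 0 := by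
  induction t with
  | zero => intro z hz; simp [cc]; omega
  | succ t ih => intro z hz; simp only [cc]; rw [ih z hz, ih (z-1) (by omega)]; rfl

theorem cc_gt (t : ℕ) (z : ℤ) (h : t < z) : cc t z = 0 := by
  rw [← cc_symm]; exact cc_neg t _ (by omega)

theorem gg_zero (d : ℤ) : gg 0 d = if d = 0 then 1 else 0 := by simp [gg, cc]

theorem gg_succ (a : ℕ) (d : ℤ) : gg (a + 1) d = 2 * gg a d + gg a (d + 1) + gg a (d - 1) := by
  unfold gg
  rw [show 2 * (a + 1) = 2 * a + 1 + 1 by ring]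
  simp only [cc]
  push_cast
  ring_nf

theorem gg_neg (a : ℕ) (d : ℤ) : gg a (-d) = gg a d := by
  unfold gg
  rw [← cc_symm]; congr 1; push_cast; ring

theorem bb_neg (a : ℕ) : ∀ d, bb a (-d) = - bb a d := by
  induction a with
  | zero => intro d; simp [bb, Int.sign_neg]
  | succ a ih =>
    intro d
    simp only [bb]
    rw [ih, show -d + 1 = -(d - 1) by ring, show -d - 1 = -(d + 1) by ring, ih, ih]; ring

theorem bb_diff (a : ℕ) : ∀ d, bb a (d + 1) - bb a d = gg a d + gg a (d + 1) := by
  induction a with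
  | zero =>
    intro d; simp only [bb, gg_zero]
    rcases lt_trichotomy d 0 with h | h | h
    · rcases eq_or_ne (d + 1) 0 with h' | h'
      · rw [h', Int.sign_eq_neg_one_of_neg h]; simp [h.ne]
      · rw [Int.sign_eq_neg_one_of_neg h, Int.sign_eq_neg_one_of_neg (by omega)]; simp [h.ne, h']
    · subst h; simp
    · rw [Int.sign_eq_one_of_pos h, Int.sign_eq_one_of_pos (by omega)]
      simp [h.ne', show d + 1 ≠ 0 by omega]
  | succ a ih =>
    intro d
    simp only [bb, gg_succ]
    have h1 := ih d
    have h2 := ih (d + 1)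
    have h3 := ih (d - 1)
    rw [show d - 1 + 1 = d by ring] at h3
    rw [show d + 1 - 1 = d by ring]
    linarith

theorem kernel_eq (n a : ℕ) : ∀ i j : ℤ, 0 ≤ i → i + a < n → 0 ≤ j → j + a < n →
    ∑ s : Fin n, ∑ t : Fin n, cc a ((s : ℤ) - i) * Int.sign ((t : ℤ) - s) * cc a ((t : ℤ) - j)
      = bb a (j - i) := by
  induction a with
  | zero =>
    intro i j hi hi' hj hj'
    lift i to ℕ using hi
    lift j to ℕ using hj
    simp only [cc, bb]
    rw [Finset.sum_eq_single (⟨i, by simpa using hi'⟩ : Fin n)]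
    · rw [Finset.sum_eq_single (⟨j, by simpa using hj'⟩ : Fin n)]
      · simp
      · intro t _ ht
        have : ¬ ((t : ℤ) - j = 0) := fun h => ht (Fin.ext (by simp; omega))
        simp [this]
      · simp
    · intro t _ ht
      have : ¬ ((t : ℤ) - i = 0) := fun h => ht (Fin.ext (by simp; omega))
      simp [this]
    · simp
  | succ a ih =>
    intro i j hi hi' hj hj'
    push_cast at hi' hj'
    have e1 := ih i j (by omega) (by omega) (by omega) (by omega)
    have e2 := ih (i+1) j (by omega) (by omega) (by omega) (by omega)
    have e3 := ih i (j+1) (by omega) (by omega) (by omega) (by omega)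
    have e4 := ih (i+1) (j+1) (by omega) (by omega) (by omega) (by omega)
    simp only [bb]
    rw [show j - (i+1) = j - i - 1 by ring] at e2
    rw [show j + 1 - i = j - i + 1 by ring] at e3
    rw [show j + 1 - (i+1) = j - i by ring] at e4
    rw [two_mul]
    nth_rw 1 [← e1]
    rw [← e4, ← e2, ← e3]
    simp only [← Finset.sum_add_distrib]
    refine Finset.sum_congr rfl fun s _ => Finset.sum_congr rfl fun t _ => ?_
    simp only [cc, ← sub_sub]
    ring

/-! Pfaffian-like sums. -/
section PF
set_option linter.unusedSectionVars false
variable {κ N : Type} [Fintype κ] [DecidableEq κ] [Fintype N] [DecidableEq N]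

def pf (A : Matrix (κ ⊕ κ) (κ ⊕ κ) ℤ) : ℤ :=
  ∑ σ : Equiv.Perm (κ ⊕ κ), (Equiv.Perm.sign σ : ℤ) * ∏ k, A (σ (Sum.inl k)) (σ (Sum.inr k))

theorem pf_expand (M : Matrix (κ ⊕ κ) N ℤ) (Q : Matrix N N ℤ) :
    pf (M * Q * Mᵀ) = ∑ f : κ ⊕ κ → N,
      (∏ k, Q (f (Sum.inl k)) (f (Sum.inr k))) * (Matrix.of fun i j => M i (f j)).det := by
  have h : ∀ p q, (M * Q * Mᵀ) p q = ∑ s, ∑ t, M p s * Q s t * M q t := by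
    intro p q
    simp only [Matrix.mul_apply, Matrix.transpose_apply, Finset.sum_mul]
    exact Finset.sum_comm
  unfold pf
  simp only [h, Finset.prod_univ_sum, Matrix.det_apply', Finset.mul_sum, Fintype.piFinset_univ]
  conv_rhs => rw [Finset.sum_comm]
  refine Finset.sum_congr rfl fun σ _ => ?_
  rw [← (Equiv.sumArrowEquivProdArrow κ κ N).symm.sum_comp, Fintype.sum_prod_type]
  refine Finset.sum_congr rfl fun f _ => Finset.sum_congr rfl fun g _ => ?_
  simp only [Equiv.sumArrowEquivProdArrow, Equiv.coe_fn_symm_mk, Sum.elim_inl, Sum.elim_inr, Fintype.prod_sum_type, Matrix.of_apply, Finset.prod_mul_distrib, Int.cast_id]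
  ring

theorem det_of_noninj {ι : Type} [Fintype ι] [DecidableEq ι] (M : Matrix ι N ℤ) (f : ι → N) (hf : ¬ Function.Injective f) :
    (Matrix.of fun i j => M i (f j)).det = 0 := by
  simp only [Function.Injective, not_forall] at hf
  obtain ⟨i, j, h, hij⟩ := hf
  exact Matrix.det_zero_of_column_eq hij (by simp [h])

theorem pf_congr (P A : Matrix (κ ⊕ κ) (κ ⊕ κ) ℤ) : pf (P * A * Pᵀ) = P.det * pf A := by
  rw [pf_expand]
  have := Fintype.sum_of_injective (fun σ : Equiv.Perm (κ ⊕ κ) => (σ : κ ⊕ κ → κ ⊕ κ))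
    (DFunLike.coe_injective)
    (fun σ => P.det * ((Equiv.Perm.sign σ : ℤ) * ∏ k, A (σ (Sum.inl k)) (σ (Sum.inr k))))
    (fun f => (∏ k, A (f (Sum.inl k)) (f (Sum.inr k))) * (Matrix.of fun i j => P i (f j)).det)
    (by
      intro f hf
      rw [det_of_noninj, mul_zero]
      intro hinj
      exact hf ⟨Equiv.ofBijective f (Finite.injective_iff_bijective.mp hinj), rfl⟩)
    (by
      intro σ
      have : (Matrix.of fun i j => P i (σ j)).det = Equiv.Perm.sign σ * P.det := by
        simpa [Matrix.submatrix] using Matrix.det_permute' σ P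
      simp only [this]; ring)
  rw [← this, pf, Finset.mul_sum]

theorem pf_blocks (X : Matrix κ κ ℤ) :
    pf (Matrix.fromBlocks 0 X (-Xᵀ) 0) = X.det * pf (Matrix.fromBlocks 0 1 (-1) 0 : Matrix (κ ⊕ κ) (κ ⊕ κ) ℤ) := by
  have h : (Matrix.fromBlocks 0 X (-Xᵀ) 0)
     = Matrix.fromBlocks X 0 0 1 * (Matrix.fromBlocks 0 1 (-1) 0) * (Matrix.fromBlocks X 0 0 1)ᵀ := by
    simp [Matrix.fromBlocks_transpose, Matrix.fromBlocks_multiply]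
  rw [h, pf_congr]; simp

end PF

theorem pfJ_term (κ : Type) [Fintype κ] [DecidableEq κ] (σ : Equiv.Perm (κ ⊕ κ)) :
    0 ≤ (Equiv.Perm.sign σ : ℤ) * ∏ k, (Matrix.fromBlocks 0 1 (-1) 0 : Matrix (κ ⊕ κ) (κ ⊕ κ) ℤ)
      (σ (Sum.inl k)) (σ (Sum.inr k)) := by
  by_cases h0 : ∃ k, (Matrix.fromBlocks 0 1 (-1) 0 : Matrix (κ ⊕ κ) (κ ⊕ κ) ℤ)
      (σ (Sum.inl k)) (σ (Sum.inr k)) = 0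
  · obtain ⟨k, hk⟩ := h0
    rw [Finset.prod_eq_zero (Finset.mem_univ k) hk, mul_zero]
  push Not at h0
  have h1 : ∀ k, ∃ t : κ, ∃ e : Equiv.Perm Bool,
      σ (Sum.inl k) = Equiv.boolProdEquivSum κ (e false, t) ∧
      σ (Sum.inr k) = Equiv.boolProdEquivSum κ (e true, t) ∧
      (Matrix.fromBlocks 0 1 (-1) 0 : Matrix (κ ⊕ κ) (κ ⊕ κ) ℤ)
      (σ (Sum.inl k)) (σ (Sum.inr k)) = Equiv.Perm.sign e := by
    intro k
    have hk := h0 k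
    rcases h : σ (Sum.inl k) with p | p <;> rcases h' : σ (Sum.inr k) with q | q <;>
      rw [h, h'] at hk <;> simp [Matrix.one_apply] at hk
    · subst hk
      exact ⟨p, 1, by simp [Equiv.boolProdEquivSum]⟩
    · subst hk
      exact ⟨p, Equiv.swap false true, by simp [Equiv.boolProdEquivSum]⟩
  choose t e h2 h3 h4 using h1
  have htinj : Function.Injective t := by
    intro k k' hkk
    have hb : ∀ (x y : Bool), ∃ z, y = x ∨ (z = y) := by simp
    have hex : ∃ x, e k' x = e k false := (e k').surjective _
    obtain ⟨x, hx⟩ := hex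
    have hl := h2 k
    rw [← hx, hkk] at hl
    cases x
    · rw [← h2 k'] at hl; simpa using hl
    · rw [← h3 k'] at hl; simp at hl
  let τ : Equiv.Perm κ := Equiv.ofBijective t (Finite.injective_iff_bijective.mp htinj)
  have hσ : σ = (Equiv.boolProdEquivSum κ).permCongr
      (Equiv.prodCongrRight (fun _ : Bool => τ) * Equiv.prodCongrLeft e) := by
    ext x
    rcases x with k | k
    · rw [h2]; cases hh : e k false <;> simp [Equiv.permCongr_apply, τ, Equiv.boolProdEquivSum, hh]
    · rw [h3]; cases hh : e k true <;> simp [Equiv.permCongr_apply, τ, Equiv.boolProdEquivSum, hh]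
  have hs : Equiv.Perm.sign σ = ∏ k, Equiv.Perm.sign (e k) := by
    rw [hσ, Equiv.Perm.sign_permCongr, Equiv.Perm.sign_mul, Equiv.Perm.sign_prodCongrRight,
      Equiv.Perm.sign_prodCongrLeft]
    simp
  rw [hs, Finset.prod_congr rfl (fun k _ => h4 k)]
  push_cast
  exact mul_self_nonneg _

theorem pfJ_pos (κ : Type) [Fintype κ] [DecidableEq κ] :
    0 < pf (Matrix.fromBlocks 0 1 (-1) 0 : Matrix (κ ⊕ κ) (κ ⊕ κ) ℤ) := by
  unfold pf
  refine Finset.sum_pos' (fun σ _ => pfJ_term κ σ) ⟨1, Finset.mem_univ _, ?_⟩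
  simp

/-- positions -/
def ph (b : ℕ) : Fin b ⊕ Fin b ≃ Fin (2 * b) where
  toFun := Sum.elim (fun i => ⟨b + i, by omega⟩) (fun i => ⟨b - 1 - i, by omega⟩)
  invFun p := if h : b ≤ p.1 then Sum.inl ⟨p.1 - b, by omega⟩ else Sum.inr ⟨b - 1 - p.1, by omega⟩
  left_inv := by
    rintro (i | i)
    · simp
    · have := i.2
      simp [show ¬ (b ≤ b - 1 - i.1) by omega, Fin.ext_iff]; omega
  right_inv := by
    intro p
    by_cases h : b ≤ p.1
    · simp [h]
    · simp [h, Fin.ext_iff]; omega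

theorem ph_inl (b : ℕ) (i : Fin b) : (((ph b (Sum.inl i) : Fin (2*b)) : ℕ) : ℤ) = b + i := by
  simp [ph]
theorem ph_inr (b : ℕ) (i : Fin b) : (((ph b (Sum.inr i) : Fin (2*b)) : ℕ) : ℤ) = b - 1 - i := by
  simp [ph]; omega

def Dp (a b : ℕ) : Matrix (Fin b) (Fin b) ℤ := Matrix.of fun i j => gg a ((i : ℤ) - j) + gg a ((i : ℤ) + j + 1)
def Dm (a b : ℕ) : Matrix (Fin b) (Fin b) ℤ := Matrix.of fun i j => gg a ((i : ℤ) - j) - gg a ((i : ℤ) + j + 1)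

theorem det_factor {κ : Type} [Fintype κ] [DecidableEq κ] (A B : Matrix κ κ ℤ) :
    (Matrix.fromBlocks A B B A).det = (A + B).det * (A - B).det := by
  have h : Matrix.fromBlocks 1 0 (-1) 1 * Matrix.fromBlocks A B B A * Matrix.fromBlocks 1 0 1 1
      = Matrix.fromBlocks (A + B) B 0 (A - B) := by
    simp [Matrix.fromBlocks_multiply]; abel
  have := congrArg Matrix.det h
  simpa [Matrix.det_mul] using this

theorem detP (a b : ℕ) :
    (Matrix.of fun i k : Fin (2 * b) => gg a ((i : ℤ) - k)).det = (Dp a b).det * (Dm a b).det := by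
  rw [← Matrix.det_submatrix_equiv_self (ph b)]
  have := det_factor (Matrix.of fun i j : Fin b => gg a ((i : ℤ) - j)) (Matrix.of fun i j : Fin b => gg a ((i : ℤ) + j + 1))
  rw [show Dp a b = _ + _ from rfl, show Dm a b = _ - _ from rfl]
  refine Eq.trans (congrArg Matrix.det ?_) this
  ext x y
  rcases x with x | x <;> rcases y with y | y <;> simp only [Matrix.submatrix_apply, Matrix.of_apply, Matrix.fromBlocks_apply₁₁, Matrix.fromBlocks_apply₁₂, Matrix.fromBlocks_apply₂₁, Matrix.fromBlocks_apply₂₂, ph_inl, ph_inr]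
  · congr 1; ring
  · congr 1; ring
  · rw [← gg_neg]; congr 1; ring
  · rw [← gg_neg]; congr 1; ring

/-- the matrix X' -/
def Xp (a b : ℕ) : Matrix (Fin b) (Fin b) ℤ := Matrix.of fun i j => bb a ((j : ℤ) - i) + bb a ((i : ℤ) + j + 1)

def upp (b : ℕ) (c : ℤ) : Matrix (Fin b) (Fin b) ℤ :=
  Matrix.of fun i j => if i = j then 1 else if (i : ℕ) + 1 = j then c else 0

theorem upp_det (b : ℕ) (c : ℤ) : (upp b c).det = 1 := by
  rw [Matrix.det_of_isUpperTriangular]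
  · simp [upp]
  · intro i j h
    simp only [id] at h
    simp only [upp, Matrix.of_apply]
    rw [if_neg h.ne', if_neg]
    have : (j : ℕ) < i := h
    omega

theorem mul_upp (b : ℕ) (c : ℤ) (A : Matrix (Fin b) (Fin b) ℤ) (i j : Fin b) :
    (A * upp b c) i j = A i j + if h : 0 < (j : ℕ) then c * A i ⟨j - 1, by omega⟩ else 0 := by
  rw [Matrix.mul_apply]
  have : ∀ k, A i k * upp b c k j = (if k = j then A i k else 0) + (if (k : ℕ) + 1 = j then c * A i k else 0) := by
    intro k
    simp only [upp, Matrix.of_apply]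
    by_cases h : k = j
    · subst h; simp
    · simp [h, mul_comm]
  simp only [this, Finset.sum_add_distrib, Finset.sum_ite_eq', Finset.mem_univ, if_true]
  congr 1
  split_ifs with h
  · rw [Finset.sum_eq_single ⟨j - 1, by omega⟩]
    · rw [if_pos]; simp; omega
    · intro k _ hk
      rw [if_neg]; intro h'; apply hk; ext; simp; omega
    · simp
  · apply Finset.sum_eq_zero
    intro k _; rw [if_neg]; omega

theorem Xp_det (a b : ℕ) : (Xp a b).det = (Dp a b).det := by
  have h : Xp a b * upp b (-1) = Dp a b * upp b 1 := by
    ext i j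
    rw [mul_upp, mul_upp]
    simp only [Xp, Dp, Matrix.of_apply]
    split_ifs with h
    · have e : ((j.1 - 1 : ℕ) : ℤ) = (j : ℤ) - 1 := by omega
      have h1 := bb_diff a ((j : ℤ) - 1 - i)
      have h2 := bb_diff a ((i : ℤ) + j)
      simp only [e]
      rw [show (j : ℤ) - 1 - i + 1 = j - i by ring] at h1
      rw [show (i : ℤ) + (j - 1) + 1 = i + j by ring, ← gg_neg a ((i : ℤ) - j), ← gg_neg a ((i : ℤ) - (j - 1)),
        show -((i : ℤ) - (j - 1)) = j - 1 - i by ring, show -((i : ℤ) - j) = j - i by ring]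
      linarith
    · have e : (j : ℤ) = 0 := by omega
      have h2 := bb_diff a (i : ℤ)
      rw [e, zero_sub, bb_neg]
      simp only [add_zero, sub_zero]
      linarith
  have := congrArg Matrix.det h
  simpa [Matrix.det_mul, upp_det] using this

def Bm (a b : ℕ) : Matrix (Fin b ⊕ Fin b) (Fin b ⊕ Fin b) ℤ :=
  Matrix.of fun i j => bb a ((ph b j : ℤ) - (ph b i : ℤ))

def Em (b : ℕ) : Matrix (Fin b ⊕ Fin b) (Fin b ⊕ Fin b) ℤ := Matrix.fromBlocks 1 1 1 (-1)

theorem pfB (a b : ℕ) : (Em b).det * pf (Bm a b) = 2 ^ b * (Dp a b).det *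
    pf (Matrix.fromBlocks 0 1 (-1) 0 : Matrix (Fin b ⊕ Fin b) (Fin b ⊕ Fin b) ℤ) := by
  let T : Matrix (Fin b) (Fin b) ℤ := Matrix.of fun i j => bb a ((j : ℤ) - i)
  let H : Matrix (Fin b) (Fin b) ℤ := Matrix.of fun i j => bb a ((i : ℤ) + j + 1)
  have hT : Tᵀ = - T := by
    ext i j; simp only [T, Matrix.transpose_apply, Matrix.neg_apply, Matrix.of_apply]
    rw [← bb_neg]; congr 1; ring
  have hH : Hᵀ = H := by
    ext i j; simp only [H, Matrix.transpose_apply, Matrix.of_apply]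
    congr 1; ring
  have hB : Bm a b = Matrix.fromBlocks T (-H) H (-T) := by
    ext x y
    rcases x with x | x <;> rcases y with y | y <;> simp only [Bm, T, H, Matrix.of_apply, Matrix.fromBlocks_apply₁₁, Matrix.fromBlocks_apply₁₂, Matrix.fromBlocks_apply₂₁, Matrix.fromBlocks_apply₂₂, ph_inl, ph_inr, Matrix.neg_apply]
    · congr 1; ring
    · rw [← bb_neg]; congr 1; ring
    · congr 1; ring
    · rw [← bb_neg]; congr 1; ring
  have hX : Em b * Bm a b * (Em b)ᵀ = Matrix.fromBlocks 0 ((2 : ℤ) • (T + H)) (-((2 : ℤ) • (T + H))ᵀ) 0 := by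
    rw [hB, Em]
    simp only [Matrix.fromBlocks_transpose, Matrix.fromBlocks_multiply, Matrix.transpose_smul, Matrix.transpose_add, hT, hH,
      Matrix.transpose_one, Matrix.transpose_neg, Matrix.one_mul, Matrix.mul_one, Matrix.mul_neg, Matrix.neg_mul]
    congr 1
    · abel
    · simp only [two_smul]; abel
    · simp only [two_smul]; abel
    · abel
  rw [← pf_congr, hX, pf_blocks, Matrix.det_smul, Fintype.card_fin, ← Xp_det]
  rfl

/-- minor summation -/
theorem minor_sum (n b : ℕ) (M : Matrix (Fin (2 * b)) (Fin n) ℤ) :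
    pf ((M.submatrix (ph b) id) * (Matrix.of fun s t : Fin n => Int.sign ((t : ℤ) - s)) * (M.submatrix (ph b) id)ᵀ)
      = (∑ x : {x : Fin (2 * b) → Fin n // StrictMono x}, (Matrix.of fun i k => M i (x.1 k)).det) *
        pf (Matrix.of fun p q : Fin b ⊕ Fin b => Int.sign ((ph b q : ℤ) - ph b p)) := by
  classical
  rw [pf_expand, pf, Finset.sum_mul_sum, ← Fintype.sum_prod_type']
  symm
  apply Fintype.sum_of_injective
    (fun xt : {x : Fin (2 * b) → Fin n // StrictMono x} × Equiv.Perm (Fin b ⊕ Fin b) =>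
      (xt.1.1 ∘ ph b ∘ xt.2 : Fin b ⊕ Fin b → Fin n))
  · rintro ⟨⟨x, hx⟩, σ⟩ ⟨⟨y, hy⟩, τ⟩ h
    simp only at h
    have hxy : x = y := by
      rw [← StrictMono.range_inj hx hy]
      have := congrArg Set.range h
      rwa [← Function.comp_assoc, ← Function.comp_assoc, EquivLike.range_comp, EquivLike.range_comp, EquivLike.range_comp, EquivLike.range_comp] at this
    subst hxy
    congr 1
    ext p
    have := congrFun h p
    exact (ph b).injective (hx.injective this)
  · intro f hf
    rw [det_of_noninj, mul_zero]
    intro hinj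
    apply hf
    let g := f ∘ (ph b).symm
    have hg : Function.Injective g := hinj.comp (ph b).symm.injective
    refine ⟨⟨⟨g ∘ Tuple.sort g, (Tuple.monotone_sort g).strictMono_of_injective (hg.comp (Equiv.injective _))⟩,
      ((ph b).trans (Tuple.sort g).symm).trans (ph b).symm⟩, ?_⟩
    ext p
    simp [g]
  · rintro ⟨⟨x, hx⟩, σ⟩
    simp only [Matrix.of_apply, Function.comp, Matrix.submatrix_apply, id]
    have h1 : ∀ p q : Fin (2 * b), Int.sign (((x q : ℕ) : ℤ) - (x p : ℕ)) = Int.sign ((q : ℤ) - p) := by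
      intro p q
      rcases lt_trichotomy p q with h | h | h
      · have h' : ((x p : ℕ) : ℤ) < (x q : ℕ) := by exact_mod_cast hx h
        have h'' : (p : ℤ) < q := by exact_mod_cast h
        rw [Int.sign_eq_one_of_pos (by omega), Int.sign_eq_one_of_pos (by omega)]
      · subst h; simp
      · have h' : ((x q : ℕ) : ℤ) < (x p : ℕ) := by exact_mod_cast hx h
        have h'' : (q : ℤ) < p := by exact_mod_cast h
        rw [Int.sign_eq_neg_one_of_neg (by omega), Int.sign_eq_neg_one_of_neg (by omega)]
    simp only [h1]
    have h2 : (Matrix.of fun i j => M (ph b i) (x (ph b (σ j)))).det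
       = Equiv.Perm.sign σ * (Matrix.of fun i k => M i (x k)).det := by
      rw [← Matrix.det_submatrix_equiv_self (ph b) (Matrix.of fun i k => M i (x k))]
      simpa [Matrix.submatrix] using Matrix.det_permute' σ ((Matrix.of fun i k => M i (x k)).submatrix (ph b) (ph b))
    rw [h2]
    ring

def Ssum (a b : ℕ) : ℤ := ∑ x : {x : Fin (2 * b) → Fin (a + 2 * b) // StrictMono x},
    (Matrix.of fun i k : Fin (2 * b) => cc a ((x.1 k : ℤ) - i)).det

theorem Ssum_pf (a b : ℕ) : pf (Bm a b) =
    Ssum a b * pf (Matrix.of fun p q : Fin b ⊕ Fin b => Int.sign ((ph b q : ℤ) - ph b p)) := by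
  have := minor_sum (a + 2 * b) b (Matrix.of fun i p => cc a ((p : ℤ) - i))
  rw [Ssum]
  simp only [Matrix.of_apply] at this
  rw [← this]
  congr 1
  ext p q
  simp only [Matrix.mul_apply, Matrix.transpose_apply, Finset.sum_mul, Matrix.submatrix_apply, Matrix.of_apply, id, Bm]
  rw [Finset.sum_comm, kernel_eq]
  all_goals omega

theorem Ssum_zero (b : ℕ) : Ssum 0 b = 1 := by
  have hu : ∀ x : Fin (2 * b) → Fin (0 + 2 * b), StrictMono x → ∀ k, (x k : ℕ) = k := by
    intro x hx k
    let y : Fin (2 * b) → Fin (2 * b) := fun k => ⟨x k, by omega⟩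
    have hy : StrictMono y := fun p q h => hx h
    have := le_antisymm hy.apply_le (hy.le_apply (x := k))
    exact congrArg Fin.val this
  have hid : StrictMono (fun k : Fin (2 * b) => (⟨k, by omega⟩ : Fin (0 + 2 * b))) := fun p q h => h
  rw [Ssum, Fintype.sum_eq_single ⟨_, hid⟩]
  · convert Matrix.det_one (n := Fin (2 * b)) (R := ℤ)
    ext i k
    simp only [Matrix.of_apply, cc, Matrix.one_apply, sub_eq_zero, Fin.ext_iff, Nat.cast_inj, eq_comm]
  · rintro ⟨x, hx⟩ hne
    exact absurd (Subtype.ext (funext fun k => Fin.ext (hu x hx k))) hne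

theorem Dp_zero (b : ℕ) : (Dp 0 b).det = 1 := by
  convert Matrix.det_one (n := Fin b) (R := ℤ)
  ext i k
  simp only [Dp, Matrix.of_apply, gg_zero, Matrix.one_apply, sub_eq_zero, Fin.ext_iff, Nat.cast_inj]
  rw [if_neg (show ¬ ((i : ℤ) + k + 1 = 0) by omega), add_zero]

theorem Ssum_eq (a b : ℕ) : Ssum a b = (Dp a b).det := by
  have h1 := pfB a b
  have h0 := pfB 0 b
  rw [Ssum_pf] at h1 h0
  rw [Ssum_zero, Dp_zero] at h0
  have hJ := pfJ_pos (Fin b)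
  have h2 : (2 : ℤ) ^ b * pf (Matrix.fromBlocks 0 1 (-1) 0 : Matrix (Fin b ⊕ Fin b) (Fin b ⊕ Fin b) ℤ) ≠ 0 := by positivity
  apply mul_right_cancel₀ h2
  linear_combination h1 - Ssum a b * h0

/-! Chains -/
def Good {m : ℕ} (w : ℕ → ℤ → Prop) (t : ℕ) (y : Fin m → ℤ) : Prop :=
  Antitone y ∧ ∀ k, w t (y k)

def Ch (m : ℕ) (w : ℕ → ℤ → Prop) (t : ℕ) (y : Fin m → ℤ) : Set (ℕ → Fin m → ℤ) :=
  {h | h 0 = 0 ∧ (∀ s < t, ∀ k, h (s+1) k = h s k ∨ h (s+1) k = h s k + 1) ∧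
    (∀ s, t ≤ s → h s = y) ∧ (∀ s ≤ t, Good w s (h s))}

def pre {m : ℕ} (s : Finset (Fin m)) (y : Fin m → ℤ) : Fin m → ℤ := s.piecewise y (fun k => y k - 1)

theorem pre_apply {m : ℕ} (s : Finset (Fin m)) (y : Fin m → ℤ) (k : Fin m) :
    pre s y k = if k ∈ s then y k else y k - 1 := by
  simp [pre, Finset.piecewise]

theorem pre_inj {m : ℕ} (s s' : Finset (Fin m)) (y : Fin m → ℤ) (h : pre s y = pre s' y) : s = s' := by
  ext k
  have := congrFun h k
  rw [pre_apply, pre_apply] at this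
  split_ifs at this <;> first | omega | simp_all

theorem Ch_step_card {m : ℕ} (w : ℕ → ℤ → Prop) (t : ℕ) (y : Fin m → ℤ) (hy : Good w (t+1) y)
    : Nonempty ((Σ s : Finset (Fin m), Ch m w t (pre s y)) ≃ Ch m w (t+1) y) := by
  refine ⟨Equiv.ofBijective (fun p => ⟨fun s => if s ≤ t then p.2.1 s else y, ?_⟩) ⟨?_, ?_⟩⟩
  · obtain ⟨S, h, h0, hs, hl, hg⟩ := p
    refine ⟨by simpa using h0, ?_, ?_, ?_⟩
    · intro s hst k
      simp only [show s ≤ t by omega, if_true]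
      by_cases h1 : s + 1 ≤ t
      · simp only [h1, if_true]; exact hs s (by omega) k
      · have : s = t := by omega
        subst this
        simp only [h1, if_false, hl s le_rfl, pre_apply]
        split_ifs <;> omega
    · intro s hst
      simp only [show ¬ s ≤ t by omega, if_false]
    · intro s hst
      by_cases h1 : s ≤ t
      · simp only [h1, if_true]; exact hg s h1
      · have : s = t + 1 := by omega
        subst this
        simp only [h1, if_false]; exact hy
  · rintro ⟨S, h, hh⟩ ⟨S', h', hh'⟩ e
    have e1 : ∀ s, s ≤ t → h s = h' s := by
      intro s hs
      have := congrFun (congrArg Subtype.val e) s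
      simpa [hs] using this
    have e2 : S = S' := by
      apply pre_inj S S' y
      rw [← hh.2.2.1 t le_rfl, ← hh'.2.2.1 t le_rfl]; exact e1 t le_rfl
    subst e2
    congr 2
    funext s
    by_cases hs : s ≤ t
    · exact e1 s hs
    · rw [hh.2.2.1 s (by omega), hh'.2.2.1 s (by omega)]
  · rintro ⟨h, h0, hs, hl, hg⟩
    have hpre : pre (Finset.univ.filter fun k => h t k = y k) y = h t := by
      funext k
      rw [pre_apply]
      have := hs t (by omega) k
      rw [hl (t+1) le_rfl] at this
      simp only [Finset.mem_filter, Finset.mem_univ, true_and]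
      split_ifs <;> omega
    refine ⟨⟨Finset.univ.filter fun k => h t k = y k, fun s => if s ≤ t then h s else h t, ?_⟩, ?_⟩
    · refine ⟨by simpa using h0, ?_, ?_, ?_⟩
      · intro s hst k
        simp only [show s ≤ t by omega, show s + 1 ≤ t by omega, if_true]
        exact hs s (by omega) k
      · intro s hst
        rw [hpre]
        by_cases h1 : s ≤ t
        · rw [show s = t by omega]; simp
        · simp [h1]
      · intro s hst
        simp only [hst, if_true]; exact hg s (by omega)
    · ext s k
      by_cases h1 : s ≤ t
      · simp [h1]
      · simp [h1, hl s (by omega)]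

theorem lgv (m : ℕ) (w : ℕ → ℤ → Prop) (v : ℕ → Fin m → ℤ → ℤ)
    (hv : ∀ t i x, v (t+1) i x = v t i x + v t i (x-1))
    (h0 : ∀ y, Good w 0 y → (Matrix.of fun i k => v 0 i (y k - k)).det = if y = 0 then 1 else 0)
    (hw : ∀ t y S, Good w (t+1) y → Antitone (pre S y) → ¬ Good w t (pre S y) →
      (Matrix.of fun i k => v t i (pre S y k - k)).det = 0) (t : ℕ) :
    ∀ y, Good w t y → Finite (Ch m w t y) ∧
      (Nat.card (Ch m w t y) : ℤ) = (Matrix.of fun i k => v t i (y k - k)).det := by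
  induction t with
  | zero =>
    intro y hy
    rw [h0 y hy]
    by_cases h : y = 0
    · have : Ch m w 0 y = {fun _ => 0} := by
        ext f
        constructor
        · rintro ⟨_, _, h2, _⟩
          ext s; rw [h2 s (by omega), h]
        · rintro rfl
          refine ⟨rfl, by simp, by simp [h], ?_⟩
          intro s hs
          rw [show s = 0 by omega]
          exact h ▸ hy
      rw [this]
      simp [h]
      infer_instance
    · have : Ch m w 0 y = ∅ := by
        ext f
        simp only [Set.mem_empty_iff_false, iff_false]
        rintro ⟨h1, _, h2, _⟩
        exact h (by rw [← h2 0 le_rfl, h1])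
      rw [this]
      simp [h]
      infer_instance
  | succ t ih =>
    intro y hy
    obtain ⟨e⟩ := Ch_step_card w t y hy
    have hempty : ∀ z, ¬ Good w t z → IsEmpty (Ch m w t z) := by
      intro z hz
      refine ⟨fun h => hz ?_⟩
      have := h.2.2.2.2 t le_rfl
      rwa [h.2.2.2.1 t le_rfl] at this
    have hfin : ∀ z, Finite (Ch m w t z) := by
      intro z
      by_cases hz : Good w t z
      · exact (ih z hz).1
      · have := hempty z hz; infer_instance
    refine ⟨Finite.of_equiv _ e, ?_⟩
    rw [← Nat.card_congr e, Nat.card_sigma]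
    push_cast
    have hterm : ∀ S : Finset (Fin m), (Nat.card (Ch m w t (pre S y)) : ℤ) =
        (Matrix.of fun i k => v t i (pre S y k - k)).det := by
      intro S
      by_cases hz : Good w t (pre S y)
      · exact (ih _ hz).2
      · have := hempty _ hz
        rw [Nat.card_of_isEmpty, Nat.cast_zero]
        symm
        by_cases ha : Antitone (pre S y)
        · exact hw t y S hy ha hz
        · obtain ⟨n, rfl⟩ : ∃ n, m = n + 1 := by
            rcases m with _ | n
            · exact absurd (fun i => i.elim0) ha
            · exact ⟨n, rfl⟩
          rw [Fin.antitone_iff_succ_le] at ha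
          push Not at ha
          obtain ⟨i, hi⟩ := ha
          have hyi := hy.1 (Fin.castSucc_lt_succ (i := i)).le
          have : pre S y i.succ = pre S y i.castSucc + 1 := by
            rw [pre_apply, pre_apply] at *
            split_ifs at * <;> omega
          apply Matrix.det_zero_of_column_eq (i := i.succ) (j := i.castSucc) (Fin.castSucc_lt_succ).ne'
          intro r
          simp only [Matrix.of_apply, this]
          congr 1
          simp
    simp only [hterm]
    have key := (Matrix.detRowAlternating (n := Fin m) (R := ℤ)).map_add_univ
      (fun k i => v t i (y k - k)) (fun k i => v t i (y k - 1 - k))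
    rw [← Matrix.det_transpose]
    have e1 : (Matrix.of fun i k : Fin m => v (t+1) i (y k - k))ᵀ = (fun k i => v t i (y k - k)) + (fun k i => v t i (y k - 1 - k)) := by
      ext k i
      simp only [Matrix.transpose_apply, Matrix.of_apply, Pi.add_apply, hv]
      congr 2; ring
    rw [e1]
    refine Eq.trans (Finset.sum_congr rfl fun S _ => ?_) key.symm
    rw [← Matrix.det_transpose]
    change _ = Matrix.det _
    congr 1
    ext k i
    simp only [Matrix.transpose_apply, Matrix.of_apply, pre_apply, Finset.piecewise]
    split_ifs <;> rfl

theorem base_det (m : ℕ) (y : Fin m → ℤ) (hy : Antitone y) :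
    (Matrix.of fun i k : Fin m => cc 0 (y k - k + i)).det = if y = 0 then 1 else 0 := by
  split_ifs with h
  · subst h
    convert Matrix.det_one (n := Fin m) (R := ℤ)
    ext i k
    simp only [Matrix.of_apply, cc, Matrix.one_apply, Fin.ext_iff, Pi.zero_apply]
    congr 1
    simp only [eq_iff_iff]; omega
  · by_cases hz : ∃ k : Fin m, ¬ (0 ≤ (k : ℤ) - y k ∧ (k : ℤ) - y k < m)
    · obtain ⟨k, hk⟩ := hz
      apply Matrix.det_eq_zero_of_column_eq_zero k
      intro i
      simp only [Matrix.of_apply, cc]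
      rw [if_neg]
      intro h'; apply hk
      omega
    · push Not at hz
      exfalso
      apply h
      let p : Fin m → Fin m := fun k => ⟨((k : ℤ) - y k).toNat, by have := hz k; omega⟩
      have hp : StrictMono p := by
        intro k l hkl
        have h1 := hy hkl.le
        have h2 := hz k
        have h3 := hz l
        have : (k : ℕ) < l := hkl
        simp only [p, Fin.mk_lt_mk]; omega
      ext k
      have h1 := congrArg Fin.val (le_antisymm hp.apply_le (hp.le_apply (x := k)))
      have h2 := hz k
      simp only [p] at h1
      simp; omega

theorem chain_free (m t : ℕ) (y : Fin m → ℤ) (hy : Antitone y) :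
    Finite (Ch m (fun _ _ => True) t y) ∧ (Nat.card (Ch m (fun _ _ => True) t y) : ℤ) =
      (Matrix.of fun i k : Fin m => cc t (y k - k + i)).det := by
  apply lgv m (fun _ _ => True) (fun t i x => cc t (x + i))
  · intro t i x
    simp only [cc]; congr 2; ring
  · intro y hy
    exact base_det m y hy.1
  · intro t y S _ h1 h2
    exact absurd ⟨h1, fun _ => trivial⟩ h2
  · exact ⟨hy, fun _ => trivial⟩

theorem chain_wall (m t : ℕ) (y : Fin m → ℤ) (hy : Antitone y) (hyw : ∀ k, 2 * y k ≤ t) :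
    Finite (Ch m (fun t y => 2 * y ≤ t) t y) ∧ (Nat.card (Ch m (fun t y => 2 * y ≤ t) t y) : ℤ) =
      (Matrix.of fun i k : Fin m => cc t (y k - k + i) - cc t (y k - k - 1 - i)).det := by
  apply lgv m (fun t y => 2 * y ≤ t) (fun t i x => cc t (x + i) - cc t (x - 1 - i))
  · intro t i x
    simp only [cc]
    rw [show x + (i : ℤ) - 1 = x - 1 + i by ring, show x - 1 - (i : ℤ) - 1 = x - 1 - 1 - i by ring]; ring
  · intro y hy
    rw [← base_det m y hy.1]
    congr 1
    ext i k
    have := hy.2 k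
    simp only [Matrix.of_apply]
    rw [cc_neg 0 (y k - k - 1 - i), sub_zero]
    push_cast at this
    omega
  · intro t y S hy h1 h2
    have : ∃ k, ¬ (2 * pre S y k ≤ t) := by
      by_contra h3; push Not at h3; exact h2 ⟨h1, h3⟩
    obtain ⟨k, hk⟩ := this
    have hpos : 0 < m := by have := k.2; omega
    have h3 := h1 (show (⟨0, hpos⟩ : Fin m) ≤ k from Nat.zero_le _)
    have h4 := hy.2 ⟨0, hpos⟩
    have h5 : 2 * pre S y ⟨0, hpos⟩ = t + 1 := by
      have h6 := pre_apply S y ⟨0, hpos⟩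
      push_cast at h4
      split_ifs at h6 <;> omega
    apply Matrix.det_eq_zero_of_column_eq_zero ⟨0, hpos⟩
    intro i
    simp only [Matrix.of_apply]
    rw [← cc_symm, sub_eq_zero]
    congr 1
    push_cast
    omega
  · exact ⟨hy, hyw⟩

/-! Lower sets and chains -/
abbrev W : ℕ → ℤ → Prop := fun _ _ => True

theorem Ch_bounds {m : ℕ} {w : ℕ → ℤ → Prop} {t : ℕ} {y : Fin m → ℤ} {h : ℕ → Fin m → ℤ}
    (hh : h ∈ Ch m w t y) (k : Fin m) (s : ℕ) (hs : s ≤ t) :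
    0 ≤ h s k ∧ h s k ≤ s ∧ h s k ≤ y k ∧ y k + s ≤ h s k + t := by
  obtain ⟨h0, hst, hl, _⟩ := hh
  have a1 : ∀ s, s ≤ t → 0 ≤ h s k ∧ h s k ≤ s := by
    intro s
    induction s with
    | zero => intro _; simp [h0]
    | succ s ih => intro hs; have := ih (by omega); have := hst s (by omega) k; push_cast; omega
  have a2 : ∀ d, ∀ s, s + d = t → h s k ≤ y k ∧ y k + s ≤ h s k + t := by
    intro d
    induction d with
    | zero => intro s hs; rw [hl s (by omega)]; simp; omega
    | succ d ih =>
      intro s hs; have := ih (s+1) (by omega); have := hst s (by omega) k; push_cast at *; omega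
  have := a1 s hs
  have := a2 (t - s) s (by omega)
  omega

def ext' {a c : ℕ} (T : Set (Fin a × Fin a × Fin c)) (i j : ℤ) (k : Fin c) : Prop :=
  i < 0 ∨ j < 0 ∨ ∃ p q : Fin a, (p : ℤ) = i ∧ (q : ℤ) = j ∧ (p, q, k) ∈ T

theorem ext_iff' {a c : ℕ} (T : Set (Fin a × Fin a × Fin c)) (p q : Fin a) (k : Fin c) :
    ext' T p q k ↔ (p, q, k) ∈ T := by
  constructor
  · rintro (h | h | ⟨p', q', h1, h2, h⟩)
    · omega
    · omega
    · have e1 : p' = p := Fin.ext (by omega)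
      have e2 : q' = q := Fin.ext (by omega)
      subst e1 e2; exact h
  · intro h; exact Or.inr (Or.inr ⟨p, q, rfl, rfl, h⟩)

theorem ext_lower {a c : ℕ} {T : Set (Fin a × Fin a × Fin c)} (hT : IsLowerSet T) {i j i' j' : ℤ} {k k' : Fin c}
    (h : ext' T i j k) (hi : i' ≤ i) (hj : j' ≤ j) (hk : k' ≤ k) : ext' T i' j' k' := by
  rcases h with h | h | ⟨p, q, h1, h2, h⟩
  · left; omega
  · right; left; omega
  · by_cases hi0 : i' < 0
    · left; exact hi0
    by_cases hj0 : j' < 0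
    · right; left; exact hj0
    right; right
    refine ⟨⟨i'.toNat, by omega⟩, ⟨j'.toNat, by omega⟩, by simp; omega, by simp; omega, ?_⟩
    refine hT ?_ h
    refine ⟨?_, ?_, hk⟩
    · change i'.toNat ≤ (p : ℕ); omega
    · change j'.toNat ≤ (q : ℕ); omega

def PRel {a c : ℕ} (T : Set (Fin a × Fin a × Fin c)) (h : ℕ → Fin c → ℤ) : Prop :=
  ∀ t ≤ 2 * a, ∀ k, ∀ i : ℤ, i < h t k ↔ ext' T i (i + a - t) k

abbrev PC (a c : ℕ) := Ch c W (2 * a) (fun _ => (a : ℤ))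

theorem exists_cut (P : ℤ → Prop) (hlow : ∀ i j, j ≤ i → P i → P j) (B : ℤ) (hB : ∀ i, P i → i < B)
    (hne : ∃ i, P i) : ∃ y : ℤ, ∀ i, i < y ↔ P i := by
  obtain ⟨u, hu, hmax⟩ := Int.exists_greatest_of_bdd ⟨B, fun z hz => (hB z hz).le⟩ hne
  refine ⟨u + 1, fun i => ⟨fun h => hlow u i (by omega) hu, fun h => ?_⟩⟩
  have := hmax i h; omega

theorem exists_chain {a c : ℕ} (T : Set (Fin a × Fin a × Fin c)) (hT : IsLowerSet T) :
    ∃ h ∈ PC a c, PRel T h := by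
  have hex : ∀ t : ℕ, ∀ k : Fin c, ∃ y : ℤ, ∀ i, i < y ↔ ext' T i (i + a - t) k := by
    intro t k
    apply exists_cut _ _ (a + t : ℤ)
    · rintro i (h | h | ⟨p, q, h1, h2, h⟩) <;> omega
    · exact ⟨-1, Or.inl (by omega)⟩
    · intro i j hij h
      exact ext_lower hT h hij (by omega) le_rfl
  choose y hy using hex
  have y0 : ∀ k, y 0 k = 0 := by
    intro k
    have h1 := hy 0 k (-1)
    have h2 := hy 0 k 0
    have : -1 < y 0 k := h1.2 (Or.inl (by omega))
    have : ¬ (0 < y 0 k) := by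
      rw [h2]
      rintro (h | h | ⟨p, q, h1, h2, h⟩) <;> push_cast at * <;> omega
    omega
  have yl : ∀ k, y (2 * a) k = a := by
    intro k
    have h1 := hy (2 * a) k (a - 1)
    have h2 := hy (2 * a) k a
    have : (a : ℤ) - 1 < y (2 * a) k := h1.2 (Or.inr (Or.inl (by push_cast; omega)))
    have : ¬ (a < y (2 * a) k) := by
      rw [h2]
      rintro (h | h | ⟨p, q, h1, h2, h⟩) <;> push_cast at * <;> omega
    omega
  refine ⟨fun t => y (min t (2 * a)), ⟨?_, ?_, ?_, ?_⟩, ?_⟩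
  · ext k; simp [y0]
  · intro s hs k
    simp only [show min s (2 * a) = s by omega, show min (s+1) (2 * a) = s + 1 by omega]
    have h1 : y s k ≤ y (s+1) k := by
      by_contra hlt
      have h1 := (hy s k (y (s+1) k)).1 (by omega)
      have h2 := (hy (s+1) k (y (s+1) k)).2 (ext_lower hT h1 le_rfl (by push_cast; omega) le_rfl)
      omega
    have h2 : y (s+1) k - 1 ≤ y s k := by
      by_contra hlt
      have h1 := (hy (s+1) k (y s k + 1)).1 (by omega)
      have h2 := (hy s k (y s k)).2 (ext_lower hT h1 (by omega) (by push_cast; omega) le_rfl)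
      omega
    omega
  · intro s hs
    ext k
    simp only [show min s (2 * a) = 2 * a by omega, yl]
  · intro s hs
    refine ⟨?_, fun _ => trivial⟩
    intro k l hkl
    simp only [show min s (2 * a) = s by omega]
    by_contra hlt
    have h1 := (hy s l (y s k)).1 (by omega)
    have h2 := (hy s k (y s k)).2 (ext_lower hT h1 le_rfl le_rfl hkl)
    omega
  · intro t ht k i
    simp only [show min t (2 * a) = t by omega]
    exact hy t k i

def toT {a c : ℕ} (h : ℕ → Fin c → ℤ) : Set (Fin a × Fin a × Fin c) :=
  {x | ((x.1 : ℕ) : ℤ) < h ((x.1 : ℕ) + a - (x.2.1 : ℕ)) x.2.2}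

theorem Rel_toT {a c : ℕ} {h : ℕ → Fin c → ℤ} (hh : h ∈ PC a c) : PRel (a := a) (toT h) h := by
  intro t ht k i
  have hb := Ch_bounds hh k t ht
  push_cast at hb
  constructor
  · intro hi
    by_cases h1 : i < 0
    · exact Or.inl h1
    by_cases h2 : i + a - t < 0
    · exact Or.inr (Or.inl h2)
    refine Or.inr (Or.inr ⟨⟨i.toNat, by omega⟩, ⟨(i + a - t).toNat, by omega⟩, by simp; omega, by simp; omega, ?_⟩)
    simp only [toT, Set.mem_ofPred_eq]
    rw [show i.toNat + a - (i + a - t).toNat = t by omega]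
    omega
  · rintro (h1 | h1 | ⟨p, q, h1, h2, h3⟩)
    · omega
    · omega
    · simp only [toT, Set.mem_ofPred_eq] at h3
      rw [show (p : ℕ) + a - (q : ℕ) = t by omega] at h3
      omega

theorem Rel_unique {a c : ℕ} {T : Set (Fin a × Fin a × Fin c)} {h h' : ℕ → Fin c → ℤ}
    (hh : h ∈ PC a c) (hh' : h' ∈ PC a c) (r : PRel T h) (r' : PRel T h') : h = h' := by
  funext s
  by_cases hs : s ≤ 2 * a
  · funext k
    have e : ∀ i, i < h s k ↔ i < h' s k := fun i => (r s hs k i).trans (r' s hs k i).symm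
    have := e (h s k)
    have := e (h' s k)
    omega
  · rw [hh.2.2.1 s (by omega), hh'.2.2.1 s (by omega)]

theorem Rel_mem {a c : ℕ} {T : Set (Fin a × Fin a × Fin c)} {h : ℕ → Fin c → ℤ} (r : PRel T h)
    (p q : Fin a) (k : Fin c) : (p, q, k) ∈ T ↔ ((p : ℕ) : ℤ) < h ((p : ℕ) + a - (q : ℕ)) k := by
  rw [r _ (by omega) k, ← ext_iff']
  rw [show (((p : ℕ) : ℤ) + a - (((p : ℕ) + a - (q : ℕ) : ℕ) : ℤ)) = (q : ℕ) by omega]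

theorem Rel_toT_eq {a c : ℕ} {T : Set (Fin a × Fin a × Fin c)} {h : ℕ → Fin c → ℤ} (r : PRel T h) : toT h = T := by
  ext ⟨p, q, k⟩
  rw [Rel_mem r]; rfl

theorem chain_mono {m : ℕ} {w : ℕ → ℤ → Prop} {t : ℕ} {y : Fin m → ℤ} {h : ℕ → Fin m → ℤ}
    (hh : h ∈ Ch m w t y) (k : Fin m) (s d : ℕ) (hs : s + d ≤ t) :
    h s k ≤ h (s + d) k ∧ h (s + d) k ≤ h s k + d := by
  induction d with
  | zero => simp
  | succ d ih =>
    have h1 := ih (by omega)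
    have h2 := hh.2.1 (s + d) (by omega) k
    rw [← add_assoc]
    push_cast
    omega

theorem toT_lower {a c : ℕ} {h : ℕ → Fin c → ℤ} (hh : h ∈ PC a c) : IsLowerSet (toT h : Set (Fin a × Fin a × Fin c)) := by
  rintro ⟨p, q, k⟩ ⟨p', q', k'⟩ ⟨hp, hq, hk⟩ hx
  simp only [toT, Set.mem_ofPred_eq] at hx ⊢
  have hp : (p' : ℕ) ≤ p := hp
  have hq : (q' : ℕ) ≤ q := hq
  have hk : k' ≤ k := hk
  have h1 := (hh.2.2.2 ((p : ℕ) + a - q) (by omega)).1 hk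
  have h2 := (chain_mono hh k' ((p' : ℕ) + a - q) (p - p') (by omega)).2
  have h3 := (chain_mono hh k' ((p' : ℕ) + a - q) (q - q') (by omega)).1
  rw [show (p' : ℕ) + a - q + (p - p') = p + a - q by omega] at h2
  rw [show (p' : ℕ) + a - q + (q - q') = p' + a - q' by omega] at h3
  omega

theorem card_transfer {a c : ℕ} (p : Set (Fin a × Fin a × Fin c) → Prop) (q : (ℕ → Fin c → ℤ) → Prop)
    (hpq : ∀ T h, h ∈ PC a c → PRel T h → (p T ↔ q h)) :
    Nat.card {T : Set (Fin a × Fin a × Fin c) // IsLowerSet T ∧ p T} = Nat.card {h // h ∈ PC a c ∧ q h} := by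
  symm
  apply Nat.card_eq_of_bijective (fun h : {h // h ∈ PC a c ∧ q h} =>
    (⟨toT h.1, toT_lower h.2.1, (hpq _ _ h.2.1 (Rel_toT h.2.1)).2 h.2.2⟩ :
      {T : Set (Fin a × Fin a × Fin c) // IsLowerSet T ∧ p T}))
  constructor
  · rintro ⟨h, hh, hq⟩ ⟨h', hh', hq'⟩ e
    have e : (toT h : Set (Fin a × Fin a × Fin c)) = toT h' := congrArg Subtype.val e
    have r := Rel_toT hh
    rw [e] at r
    exact Subtype.ext (Rel_unique hh hh' r (Rel_toT hh'))
  · rintro ⟨T, hT, hp⟩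
    obtain ⟨h, hh, r⟩ := exists_chain T hT
    exact ⟨⟨h, hh, (hpq T h hh r).1 hp⟩, Subtype.ext (Rel_toT_eq r)⟩

def SymC (a : ℕ) {c : ℕ} (h : ℕ → Fin c → ℤ) : Prop :=
  ∀ t ≤ a, ∀ k, h (2 * a - t) k = h t k + a - t

def TCC (a : ℕ) {c : ℕ} (h : ℕ → Fin c → ℤ) : Prop :=
  ∀ t ≤ 2 * a, ∀ k, h t k + h t k.rev = t

theorem sym_iff {a c : ℕ} (T : Set (Fin a × Fin a × Fin c)) (h) (hh : h ∈ PC a c) (r : PRel T h) :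
    ppTranspose T = T ↔ SymC a h := by
  constructor
  · intro hT t ht k
    have hs : ∀ i j, ext' T i j k ↔ ext' T j i k := by
      have key : ∀ i j, ext' T i j k → ext' T j i k := by
        rintro i j (h | h | ⟨p, q, h1, h2, h⟩)
        · exact Or.inr (Or.inl h)
        · exact Or.inl h
        · rw [← hT] at h
          exact Or.inr (Or.inr ⟨q, p, h2, h1, h⟩)
      exact fun i j => ⟨key i j, key j i⟩
    have e : ∀ i, i < h (2 * a - t) k ↔ i < h t k + a - t := by
      intro i
      rw [r _ (by omega), hs]
      have := r t (by omega) k (i + a - (2 * a - t : ℕ))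
      rw [show i + a - ((2 * a - t : ℕ) : ℤ) + a - t = i by omega] at this
      rw [← this]
      omega
    have := e (h (2 * a - t) k)
    have := e (h t k + a - t)
    omega
  · intro hS
    ext ⟨p, q, k⟩
    change (q, p, k) ∈ T ↔ _
    rw [Rel_mem r, Rel_mem r]
    rcases le_total (p : ℕ) q with hpq | hpq
    · have := hS ((p : ℕ) + a - q) (by omega) k
      rw [show 2 * a - ((p : ℕ) + a - q) = q + a - p by omega] at this
      omega
    · have := hS ((q : ℕ) + a - p) (by omega) k
      rw [show 2 * a - ((q : ℕ) + a - p) = p + a - q by omega] at this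
      omega

theorem tc_iff {a c : ℕ} (T : Set (Fin a × Fin a × Fin c)) (h) (hh : h ∈ PC a c) (r : PRel T h) :
    ppComplement T = ppTranspose T ↔ TCC a h := by
  have hmem : ppComplement T = ppTranspose T ↔ ∀ p q k, (p, q, k) ∈ T ↔ (q.rev, p.rev, k.rev) ∉ T := by
    constructor
    · intro h p q k
      have := Set.ext_iff.1 h (q, p, k)
      exact this.symm
    · intro h
      ext ⟨p, q, k⟩
      exact (h q p k).symm
  rw [hmem]
  constructor
  · intro hT t ht k
    have b1 := Ch_bounds hh k t ht
    have b2 := Ch_bounds hh k.rev t ht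
    push_cast at b1 b2
    have e : ∀ i : ℤ, 0 ≤ i → t - a ≤ i → i < a → i < t → (i < h t k ↔ i < t - h t k.rev) := by
      intro i h1 h2 h3 h4
      have := hT ⟨i.toNat, by omega⟩ ⟨(i + a - t).toNat, by omega⟩ k
      rw [Rel_mem r, Rel_mem r] at this
      simp only [Fin.val_rev] at this
      rw [show i.toNat + a - (i + a - t).toNat = t by omega,
        show a - ((i + a - t).toNat + 1) + a - (a - (i.toNat + 1)) = t by omega] at this
      omega
    have := e (h t k)
    have := e (t - h t k.rev)
    omega
  · intro hS p q k
    rw [Rel_mem r, Rel_mem r]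
    have := hS ((p : ℕ) + a - q) (by omega) k
    simp only [Fin.val_rev]
    rw [show a - ((q : ℕ) + 1) + a - (a - ((p : ℕ) + 1)) = p + a - q by omega]
    omega

theorem card_P (a c : ℕ) : (Nat.card {T : Set (Fin a × Fin a × Fin c) // IsLowerSet T} : ℤ)
    = (Matrix.of fun i k : Fin c => gg a ((i : ℤ) - k)).det := by
  have h1 := card_transfer (a := a) (c := c) (fun _ => True) (fun _ => True) (by simp)
  simp only [and_true] at h1
  rw [h1]
  have h2 := (chain_free c (2 * a) (fun _ => (a : ℤ)) (fun _ _ _ => le_rfl)).2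
  refine Eq.trans h2 ?_
  congr 1
  ext i k
  simp only [Matrix.of_apply, gg]
  congr 1; ring

abbrev Wl : ℕ → ℤ → Prop := fun t y => 2 * y ≤ t

theorem tc_bij (a b : ℕ) : Nat.card {h // h ∈ PC a (2 * b) ∧ TCC a h}
    = Nat.card (Ch b Wl (2 * a) (fun _ => (a : ℤ))) := by
  apply Nat.card_eq_of_bijective (fun h : {h // h ∈ PC a (2 * b) ∧ TCC a h} =>
    (⟨fun s k => h.1 s ⟨b + k, by omega⟩, by
      obtain ⟨h, ⟨h0, hs, hl, hg⟩, ht⟩ := h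
      refine ⟨?_, ?_, ?_, ?_⟩
      · ext k; simp [h0]
      · intro s hst k; exact hs s hst _
      · intro s hst; ext k; simp [hl s hst]
      · intro s hst
        refine ⟨fun k l hkl => (hg s hst).1 (by simpa using hkl), fun k => ?_⟩
        have h1 := ht s hst ⟨b + k, by omega⟩
        have h2 := (hg s hst).1 (show (⟨b + k, by omega⟩ : Fin (2 * b)).rev ≤ ⟨b + k, by omega⟩ by
          rw [Fin.le_def, Fin.val_rev]; simp only; omega)
        simp only [Wl]; omega⟩ : Ch b Wl (2 * a) (fun _ => (a : ℤ))))
  constructor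
  · rintro ⟨h, hh, ht⟩ ⟨h', hh', ht'⟩ e
    have e : ∀ s (k : Fin b), h s ⟨b + k, by omega⟩ = h' s ⟨b + k, by omega⟩ := by
      intro s k
      exact congrFun (congrFun (congrArg Subtype.val e) s) k
    have e1 : ∀ s (k : Fin (2 * b)), b ≤ k.1 → h s k = h' s k := by
      intro s k hk
      have := e s ⟨k - b, by omega⟩
      simpa [show b + (k.1 - b) = k by omega] using this
    apply Subtype.ext
    funext s k
    simp only
    by_cases hs : s ≤ 2 * a
    · by_cases hk : b ≤ k.1
      · exact e1 s k hk
      · have h1 := e1 s k.rev (by rw [Fin.val_rev]; omega)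
        have h2 := ht s hs k
        have h3 := ht' s hs k
        omega
    · rw [hh.2.2.1 s (by omega), hh'.2.2.1 s (by omega)]
  · rintro ⟨g, hg⟩
    have hgw : ∀ s ≤ 2 * a, ∀ k, 2 * g s k ≤ s := fun s hs k => (hg.2.2.2 s hs).2 k
    refine ⟨⟨fun s k => if hk : b ≤ k.1 then g s ⟨k - b, by omega⟩
      else (min s (2 * a) : ℕ) - g s ⟨b - 1 - k, by omega⟩, ⟨?_, ?_, ?_, ?_⟩, ?_⟩, ?_⟩
    · ext k; simp [hg.1]
    · intro s hs k
      simp only [show min s (2 * a) = s by omega, show min (s+1) (2 * a) = s + 1 by omega]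
      split_ifs with hk
      · exact hg.2.1 s hs _
      · have := hg.2.1 s hs ⟨b - 1 - k, by omega⟩
        push_cast; omega
    · intro s hs
      ext k
      simp only [show min s (2 * a) = 2 * a by omega, hg.2.2.1 s hs]
      split_ifs
      · rfl
      · push_cast; ring
    · intro s hs
      refine ⟨fun k l hkl => ?_, fun _ => trivial⟩
      have hkl' : k.1 ≤ l.1 := hkl
      simp only [show min s (2 * a) = s by omega]
      have hanti := (hg.2.2.2 s hs).1
      split_ifs with h1 h2 h2
      · exact hanti (by simp only [Fin.le_def]; omega)
      · have := hgw s hs ⟨b - 1 - k, by omega⟩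
        have := hgw s hs ⟨l - b, by omega⟩
        omega
      · omega
      · have := hanti (show (⟨b - 1 - l, by omega⟩ : Fin b) ≤ ⟨b - 1 - k, by omega⟩ by simp only [Fin.le_def]; omega)
        omega
    · intro s hs k
      simp only [show min s (2 * a) = s by omega, Fin.val_rev]
      by_cases hk : b ≤ k.1
      · rw [dif_pos hk, dif_neg (by omega)]
        have : (⟨b - 1 - (2 * b - (k.1 + 1)), by omega⟩ : Fin b) = ⟨k - b, by omega⟩ := by
          ext; simp only; omega
        rw [this]; ring
      · rw [dif_neg hk, dif_pos (by omega)]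
        have : (⟨2 * b - (k.1 + 1) - b, by omega⟩ : Fin b) = ⟨b - 1 - k, by omega⟩ := by
          ext; simp only; omega
        rw [this]; ring
    · apply Subtype.ext
      funext s k
      simp

theorem card_TC (a b : ℕ) : (Nat.card {T : Set (Fin a × Fin a × Fin (2 * b)) //
            IsLowerSet T ∧ ppComplement T = ppTranspose T} : ℤ) = (Dm a b).det := by
  rw [card_transfer _ _ tc_iff, tc_bij]
  have h2 := (chain_wall b (2 * a) (fun _ => (a : ℤ)) (fun _ _ _ => le_rfl) (by intro; push_cast; omega)).2
  refine Eq.trans h2 ?_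
  congr 1
  ext i k
  simp only [Matrix.of_apply, Dm]
  rw [← gg_neg a ((i : ℤ) + k + 1)]
  simp only [gg]
  congr 2 <;> ring

abbrev SM (a b : ℕ) := {x : Fin (2 * b) → Fin (a + 2 * b) // StrictMono x}

def zx {a b : ℕ} (x : SM a b) : Fin (2 * b) → ℤ := fun k => a + k - x.1 k

theorem sm_gap {m n : ℕ} (x : Fin m → Fin n) (hx : StrictMono x) (k l : Fin m) (h : k ≤ l) :
    (x k : ℕ) + l ≤ x l + k := by
  obtain ⟨d, hd⟩ : ∃ d, l.1 = k.1 + d := ⟨l.1 - k.1, by have : k.1 ≤ l.1 := h; omega⟩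
  induction d generalizing l with
  | zero => have : l = k := Fin.ext (by omega)
            subst this; exact le_rfl
  | succ d ih =>
    have h1 := ih ⟨k.1 + d, by omega⟩ (by simp [Fin.le_def]) rfl
    have h2 : x ⟨k.1 + d, by omega⟩ < x l := hx (by simp only [Fin.lt_def]; omega)
    have h2 : (x ⟨k.1 + d, by omega⟩ : ℕ) < x l := h2
    simp only at h1
    omega

theorem zx_anti {a b : ℕ} (x : SM a b) : Antitone (zx x) := by
  intro k l h
  have := sm_gap x.1 x.2 k l h
  simp only [zx]; omega

theorem sym_bij (a b : ℕ) : Nat.card {h // h ∈ PC a (2 * b) ∧ SymC a h}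
    = Nat.card (Σ x : SM a b, Ch (2 * b) W a (zx x)) := by
  symm
  apply Nat.card_eq_of_bijective (fun p : (Σ x : SM a b, Ch (2 * b) W a (zx x)) =>
    (⟨fun s k => if s ≤ a then p.2.1 s k else p.2.1 (2 * a - s) k + (min s (2 * a) : ℕ) - a, by
      obtain ⟨x, h, hh⟩ := p
      have ⟨h0, hs, hl, hg⟩ := hh
      refine ⟨⟨?_, ?_, ?_, ?_⟩, ?_⟩
      · ext k; simp [h0]
      · intro s hst k
        simp only [show min s (2 * a) = s by omega, show min (s+1) (2 * a) = s + 1 by omega]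
        rcases lt_trichotomy s a with h1 | h1 | h1
        · simp only [show s ≤ a by omega, show s + 1 ≤ a by omega, if_true]
          exact hs s h1 k
        · subst h1
          simp only [le_refl, if_true, show ¬ (s + 1 ≤ s) by omega, if_false]
          have := hs (s - 1) (by omega) k
          rw [show s - 1 + 1 = s by omega] at this
          rw [show 2 * s - (s + 1) = s - 1 by omega]
          push_cast
          omega
        · simp only [show ¬ s ≤ a by omega, show ¬ s + 1 ≤ a by omega, if_false]
          have := hs (2 * a - (s + 1)) (by omega) k
          rw [show 2 * a - (s + 1) + 1 = 2 * a - s by omega] at this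
          push_cast
          omega
      · intro s hst
        ext k
        by_cases h1 : s ≤ a
        · have : a = 0 := by omega
          subst this
          have : s = 0 := by omega
          subst this
          simp [h0]
        · simp only [h1, if_false, show 2 * a - s = 0 by omega, show min s (2 * a) = 2 * a by omega, h0]
          push_cast; simp; ring
      · intro s hst
        refine ⟨fun k l hkl => ?_, fun _ => trivial⟩
        simp only
        split_ifs with h1
        · exact (hg s h1).1 hkl
        · have := (hg (2 * a - s) (by omega)).1 hkl
          omega
      · intro t ht k
        simp only [ht, if_true]
        by_cases h1 : t = a
        · subst h1
          simp only [show 2 * t - t = t by omega, le_refl, if_true]; ring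
        · simp only [show ¬ (2 * a - t ≤ a) by omega, if_false, show 2 * a - (2 * a - t) = t by omega]
          omega⟩ : {h // h ∈ PC a (2 * b) ∧ SymC a h}))
  constructor
  · rintro ⟨x, h, hh⟩ ⟨x', h', hh'⟩ e
    have e1 : ∀ s, s ≤ a → h s = h' s := by
      intro s hs
      funext k
      have := congrFun (congrFun (congrArg Subtype.val e) s) k
      simpa [hs] using this
    have hx : x = x' := by
      have h1 : zx x = zx x' := by
        rw [← hh.2.2.1 a le_rfl, ← hh'.2.2.1 a le_rfl, e1 a le_rfl]
      apply Subtype.ext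
      funext k
      have := congrFun h1 k
      simp only [zx] at this
      apply Fin.ext; omega
    subst hx
    congr 2
    funext s
    by_cases hs : s ≤ a
    · exact e1 s hs
    · rw [hh.2.2.1 s (by omega), hh'.2.2.1 s (by omega)]
  · rintro ⟨g, hg, hS⟩
    have hb := fun k => Ch_bounds hg k a (by omega)
    have hanti := (hg.2.2.2 a (by omega)).1
    let x : SM a b := ⟨fun k => ⟨(a + k - g a k).toNat, by have := hb k; omega⟩, by
      intro k l hkl
      have h1 := hanti hkl.le
      have h2 := hb k
      have h3 : k.1 < l.1 := hkl
      simp only [Fin.lt_def]; omega⟩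
    have hx : zx x = g a := by
      funext k
      have := hb k
      simp only [zx, x]; omega
    refine ⟨⟨x, fun s => g (min s a), ?_, ?_, ?_, ?_⟩, ?_⟩
    · simp [hg.1]
    · intro s hs k
      simp only [show min s a = s by omega, show min (s+1) a = s + 1 by omega]
      exact hg.2.1 s (by omega) k
    · intro s hs
      simp only [show min s a = a by omega, hx]
    · intro s hs
      simp only [show min s a = s by omega]
      exact ⟨(hg.2.2.2 s (by omega)).1, fun _ => trivial⟩
    · apply Subtype.ext
      funext s k
      simp only
      split_ifs with h1
      · rw [show min s a = s by omega]
      · by_cases h2 : s ≤ 2 * a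
        · rw [show min (2 * a - s) a = 2 * a - s by omega, show min s (2 * a) = s by omega]
          have := hS (2 * a - s) (by omega) k
          rw [show 2 * a - (2 * a - s) = s by omega] at this
          omega
        · rw [show 2 * a - s = 0 by omega, show min s (2 * a) = 2 * a by omega, hg.2.2.1 s (by omega)]
          simp [hg.1]; ring

theorem card_S (a b : ℕ) : (Nat.card {T : Set (Fin a × Fin a × Fin (2 * b)) //
          IsLowerSet T ∧ ppTranspose T = T} : ℤ) = (Dp a b).det := by
  rw [card_transfer _ _ sym_iff, sym_bij, ← Ssum_eq, Ssum]
  have hf : ∀ x : SM a b, Finite (Ch (2 * b) W a (zx x)) := fun x => (chain_free _ _ _ (zx_anti x)).1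
  rw [Nat.card_sigma]
  push_cast
  refine Finset.sum_congr rfl fun x _ => ?_
  refine ((chain_free _ _ _ (zx_anti x)).2).trans ?_
  congr 1
  ext i k
  simp only [Matrix.of_apply, zx]
  rw [← cc_symm]
  congr 1; ring

/-- Equation (1.1): `P(a,a,2b) = S(a,a,2b) · TC(a,a,2b)`.
Plane partitions in the box are identified with lower sets of
`{0,…,a−1} × {0,…,a−1} × {0,…,2b−1}` with the (componentwise) product order. -/
theorem pp_eq_symmetric_mul_transpose_complementary (a b : ℕ) :
    Nat.card {T : Set (Fin a × Fin a × Fin (2 * b)) // IsLowerSet T}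
      = Nat.card {T : Set (Fin a × Fin a × Fin (2 * b)) //
          IsLowerSet T ∧ ppTranspose T = T}
        * Nat.card {T : Set (Fin a × Fin a × Fin (2 * b)) //
            IsLowerSet T ∧ ppComplement T = ppTranspose T} := by
  have h : ∀ m n p : ℕ, (m : ℤ) = n * p → m = n * p := fun m n p h => by exact_mod_cast h
  apply h
  rw [card_P, card_S, card_TC, detP]
end

section
/- For all nonnegative integers a and b, the number of self-complementary plane partitions contained in an a×a×2b box equals the square of the number of plane partitions contained in that box which are both symmetric and self-complementary. (Equation (1.2): SC(a,a,2b) = SSC(a,a,2b)².) -/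
namespace SCP
open Matrix Finset Polynomial

section part1

theorem det_rank1 {R : Type*} [CommRing R] [IsDomain R] {n : ℕ} (A : Matrix (Fin n) (Fin n) R)
    (p q : Fin n → R) : (A + vecMulVec p q).det = A.det + q ⬝ᵥ (A.adjugate *ᵥ p) := by
  have key : ∀ {S : Type _} [CommRing S] [IsDomain S] (A : Matrix (Fin n) (Fin n) S)
      (p q : Fin n → S), A.det ≠ 0 →
      (A + vecMulVec p q).det = A.det + q ⬝ᵥ (A.adjugate *ᵥ p) := by
    intro S _ _ A p q hA
    have hinj := IsFractionRing.injective S (FractionRing S)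
    apply hinj
    set φ := algebraMap S (FractionRing S)
    have h1 : φ (A + vecMulVec p q).det
        = (A.map φ + replicateCol Unit (φ ∘ p) * replicateRow Unit (φ ∘ q)).det := by
      rw [RingHom.map_det]
      congr 1
      ext i j
      simp [vecMulVec_apply, Matrix.mul_apply]
    have hu : IsUnit (A.map φ).det := by
      have : (A.map φ).det = φ A.det := (RingHom.map_det φ A).symm
      rw [this, isUnit_iff_ne_zero]
      simpa [φ] using hA
    rw [h1, det_add_replicateCol_mul_replicateRow hu]
    have h2 : (A.map φ).det = φ A.det := (RingHom.map_det φ A).symm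
    have h3 : (A.map φ).adjugate = A.adjugate.map φ := (RingHom.map_adjugate φ A).symm
    rw [h2, det_unique (n := Unit), Matrix.add_apply, Matrix.one_apply_eq, mul_add, mul_one, map_add]
    congr 1
    rw [Matrix.inv_def, h2, h3]
    rw [Matrix.mul_smul, Matrix.smul_mul, Matrix.smul_apply, Ring.inverse_eq_inv', smul_eq_mul,
      ← mul_assoc, mul_inv_cancel₀ (by simpa [φ] using hA), one_mul]
    simp only [Matrix.mul_apply, dotProduct, mulVec, map_sum, map_mul, replicateRow_apply,
      replicateCol_apply, Matrix.map_apply, Function.comp, Finset.mul_sum, Finset.sum_mul]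
    rw [Finset.sum_comm]
    simp only [mul_assoc]
  have h := key (S := R[X]) ((X : R[X]) • (1 : Matrix (Fin n) (Fin n) R[X]) + A.map C) (C ∘ p) (C ∘ q)
    (by
      intro h0
      have := Polynomial.leadingCoeff_det_X_one_add_C A
      rw [h0] at this
      simp at this)
  have h' := congrArg (Polynomial.evalRingHom (0:R)) h
  rw [map_add, RingHom.map_det, RingHom.map_det] at h'
  have e1 : (evalRingHom (0:R)).mapMatrix ((X : R[X]) • (1 : Matrix (Fin n) (Fin n) R[X]) + A.map C) = A := by
    ext i j; simp [Matrix.one_apply]; split_ifs <;> simp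
  have e2 : (evalRingHom (0:R)).mapMatrix ((X : R[X]) • (1 : Matrix (Fin n) (Fin n) R[X]) + A.map C
      + vecMulVec (C ∘ p) (C ∘ q)) = A + vecMulVec p q := by
    ext i j; simp [Matrix.one_apply, vecMulVec_apply]; split_ifs <;> simp
  rw [e1, e2] at h'
  rw [h']
  congr 1
  simp only [dotProduct, mulVec, map_sum, map_mul, Function.comp]
  have e3 : ∀ i j, (evalRingHom (0:R))
    (((X : R[X]) • (1 : Matrix (Fin n) (Fin n) R[X]) + A.map C).adjugate i j) = A.adjugate i j := by
    intro i j
    have := RingHom.map_adjugate (evalRingHom (0:R)) ((X : R[X]) • (1 : Matrix (Fin n) (Fin n) R[X]) + A.map C)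
    rw [e1] at this
    rw [← this]; rfl
  simp only [e3]
  simp

/-- strictly monotone index maps -/
noncomputable def SM (m N : ℕ) : Finset (Fin m → Fin N) :=
  open Classical in Finset.univ.filter StrictMono

theorem mem_SM {m N : ℕ} {f : Fin m → Fin N} : f ∈ SM m N ↔ StrictMono f := by
  simp [SM]

theorem sum_SM_succ {R : Type*} [AddCommMonoid R] {m N : ℕ} (h : (Fin (m+1) → Fin (N+1)) → R) :
    ∑ f ∈ SM (m+1) (N+1), h f = ∑ g ∈ SM (m+1) N, h (Fin.succ ∘ g)
      + ∑ g ∈ SM m N, h (Fin.cons 0 (Fin.succ ∘ g) : Fin (m+1) → Fin (N+1)) := by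
  classical
  rw [← Finset.sum_filter_add_sum_filter_not (SM (m+1) (N+1)) (fun f => f 0 ≠ 0)]
  congr 1
  · symm
    apply Finset.sum_bij (fun g _ => Fin.succ ∘ g)
    · intro g hg
      rw [mem_SM] at hg
      rw [Finset.mem_filter, mem_SM]
      exact ⟨(Fin.strictMono_succ).comp hg, Fin.succ_ne_zero _⟩
    · intro g _ g' _ e
      funext i
      exact Fin.succ_injective _ (congrFun e i)
    · intro f hf
      rw [Finset.mem_filter, mem_SM] at hf
      have hne : ∀ i, f i ≠ 0 := by
        intro i hi
        have : f 0 ≤ f i := hf.1.monotone (Fin.zero_le i)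
        rw [hi] at this
        exact hf.2 (Fin.le_zero_iff.mp this)
      refine ⟨fun i => (f i).pred (hne i), ?_, ?_⟩
      · rw [mem_SM]
        intro i j hij
        exact Fin.pred_lt_pred_iff.mpr (hf.1 hij)
      · funext i; simp
    · intro g _; rfl
  · symm
    apply Finset.sum_bij (fun g _ => (Fin.cons 0 (Fin.succ ∘ g) : Fin (m+1) → Fin (N+1)))
    · intro g hg
      rw [mem_SM] at hg
      rw [Finset.mem_filter, mem_SM]
      refine ⟨?_, by simp⟩
      intro i j hij
      induction j using Fin.cases with
      | zero => exact absurd hij (Fin.not_lt_zero i)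
      | succ j =>
        induction i using Fin.cases with
        | zero => simp
        | succ i => simpa using hg (by simpa using hij)
    · intro g _ g' _ e
      funext i
      have := congrFun e i.succ
      simpa using this
    · intro f hf
      rw [Finset.mem_filter, mem_SM] at hf
      have h0 : f 0 = 0 := by simpa using hf.2
      have hne : ∀ i : Fin m, f i.succ ≠ 0 := by
        intro i hi
        have := hf.1 (Fin.succ_pos i)
        rw [hi, h0] at this
        exact lt_irrefl _ this
      refine ⟨fun i => (f i.succ).pred (hne i), ?_, ?_⟩
      · rw [mem_SM]
        intro i j hij
        exact Fin.pred_lt_pred_iff.mpr (hf.1 (Fin.succ_lt_succ_iff.mpr hij))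
      · funext i
        induction i using Fin.cases with
        | zero => simp [h0]
        | succ i => simp
    · intro g _; rfl

theorem SM_zero (N : ℕ) : SM 0 N = Finset.univ := by
  ext f; simp only [mem_SM, Finset.mem_univ, iff_true]
  intro i; exact i.elim0

theorem SM_succ_zero (m : ℕ) : SM (m+1) 0 = ∅ := by
  ext f; exact (f 0).elim0

/-- border a matrix by a first column -/
def bord {R : Type*} {m N : ℕ} (u : Fin (m+1) → R) (Φ : Matrix (Fin (m+1)) (Fin N) R)
    (g : Fin m → Fin N) : Matrix (Fin (m+1)) (Fin (m+1)) R :=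
  Matrix.of fun i j => (Fin.cons (u i) (fun j => Φ i (g j)) : Fin (m+1) → R) j

variable {R : Type*} [CommRing R]

theorem det_bord {m N : ℕ} (u : Fin (m+1) → R) (Φ : Matrix (Fin (m+1)) (Fin N) R)
    (g : Fin m → Fin N) : (bord u Φ g).det =
      ∑ i : Fin (m+1), (-1)^(i:ℕ) * u i * ((Φ.submatrix i.succAbove id).submatrix id g).det := by
  rw [det_succ_column_zero]
  apply Finset.sum_congr rfl
  intro i _
  congr 1

theorem cauchyBinet [IsDomain R] (N : ℕ) : ∀ (m : ℕ) (Φ Ψ : Matrix (Fin m) (Fin N) R),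
    (Φ * Ψᵀ).det = ∑ f ∈ SM m N, (Φ.submatrix id f).det * (Ψ.submatrix id f).det := by
  induction N with
  | zero =>
    intro m Φ Ψ
    cases m with
    | zero => rw [SM_zero]; simp
    | succ m =>
      rw [SM_succ_zero]
      have : Φ * Ψᵀ = 0 := by ext i j; simp [Matrix.mul_apply]
      rw [this]; simp [det_zero]
  | succ N ih =>
    intro m Φ Ψ
    cases m with
    | zero => rw [SM_zero]; simp
    | succ m =>
      have hM : Φ * Ψᵀ = (Φ.submatrix id Fin.succ) * (Ψ.submatrix id Fin.succ)ᵀ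
          + vecMulVec (fun i => Φ i 0) (fun i => Ψ i 0) := by
        ext i j
        simp [Matrix.mul_apply, Fin.sum_univ_succ, vecMulVec_apply, add_comm]
      rw [hM, det_rank1, ih, sum_SM_succ]
      congr 1
      set Φ' := Φ.submatrix id Fin.succ with hΦ
      set Ψ' := Ψ.submatrix id Fin.succ with hΨ
      have e1 : ∀ g : Fin m → Fin N, (Φ.submatrix id (Fin.cons 0 (Fin.succ ∘ g))).det
          = (bord (fun i => Φ i 0) Φ' g).det := by
        intro g; congr 1; ext i j
        refine Fin.cases ?_ (fun j => ?_) j <;> simp [bord, hΦ]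
      have e2 : ∀ g : Fin m → Fin N, (Ψ.submatrix id (Fin.cons 0 (Fin.succ ∘ g))).det
          = (bord (fun i => Ψ i 0) Ψ' g).det := by
        intro g; congr 1; ext i j
        refine Fin.cases ?_ (fun j => ?_) j <;> simp [bord, hΨ]
      simp only [e1, e2, det_bord]
      simp only [dotProduct, mulVec, adjugate_fin_succ_eq_det_submatrix]
      have e3 : ∀ i j : Fin (m+1), ((Φ' * Ψ'ᵀ).submatrix j.succAbove i.succAbove).det
          = ∑ g ∈ SM m N, ((Φ'.submatrix j.succAbove id).submatrix id g).det
            * ((Ψ'.submatrix i.succAbove id).submatrix id g).det := by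
        intro i j
        rw [← ih]
        rfl
      simp only [e3, Finset.mul_sum, Finset.sum_mul]
      rw [Finset.sum_congr rfl (fun i _ => Finset.sum_comm), Finset.sum_comm]
      apply Finset.sum_congr rfl
      intro g _
      apply Finset.sum_congr rfl
      intro i _
      apply Finset.sum_congr rfl
      intro j _
      rw [pow_add]; ring

end part1
end SCP

namespace SCP
open Matrix Finset Polynomial

section part2

def Lm (R : Type*) [CommRing R] (N : ℕ) : Matrix (Fin N) (Fin N) R :=
  Matrix.of fun i j => if j < i then 2 else if i = j then 1 else 0

noncomputable def Fs {R : Type*} [CommRing R] {m N : ℕ} (Φ : Matrix (Fin m) (Fin N) R) : R :=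
  ∑ f ∈ SM m N, (Φ.submatrix id f).det

noncomputable def Fu {R : Type*} [CommRing R] {m N : ℕ} (u : Fin (m+1) → R)
    (Φ : Matrix (Fin (m+1)) (Fin N) R) : R :=
  ∑ g ∈ SM m N, (bord u Φ g).det

def Mm {R : Type*} [CommRing R] {m N : ℕ} (Φ : Matrix (Fin m) (Fin N) R) :
    Matrix (Fin m) (Fin m) R := Φ * Lm R N * Φᵀ

variable {R : Type*} [CommRing R]

theorem Fs_succ {m N : ℕ} (Φ : Matrix (Fin (m+1)) (Fin (N+1)) R) :
    Fs Φ = Fs (Φ.submatrix id Fin.succ) + Fu (fun i => Φ i 0) (Φ.submatrix id Fin.succ) := by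
  unfold Fs Fu
  rw [sum_SM_succ]
  congr 1
  apply Finset.sum_congr rfl
  intro g _
  congr 1; ext i j
  refine Fin.cases ?_ (fun j => ?_) j <;> simp [bord]

theorem Mm_succ {m N : ℕ} (Φ : Matrix (Fin m) (Fin (N+1)) R) :
    Mm Φ = Mm (Φ.submatrix id Fin.succ)
      + vecMulVec ((fun i => Φ i 0) + (2:R) • ((Φ.submatrix id Fin.succ) *ᵥ 1)) (fun i => Φ i 0) := by
  ext i j
  simp [Mm, Matrix.mul_apply, Fin.sum_univ_succ, vecMulVec_apply, Lm, mulVec, dotProduct,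
    Finset.mul_sum, Finset.sum_mul, add_mul, Finset.sum_add_distrib]
  simp only [mul_comm]
  ring

theorem Fs_mul {m N : ℕ} (g : Matrix (Fin m) (Fin m) R) (Φ : Matrix (Fin m) (Fin N) R) :
    Fs (g * Φ) = g.det * Fs Φ := by
  unfold Fs
  rw [Finset.mul_sum]
  apply Finset.sum_congr rfl
  intro f _
  rw [← det_mul]
  rfl

theorem Fu_mul {m N : ℕ} (g : Matrix (Fin (m+1)) (Fin (m+1)) R) (u : Fin (m+1) → R)
    (Φ : Matrix (Fin (m+1)) (Fin N) R) :
    Fu (g *ᵥ u) (g * Φ) = g.det * Fu u Φ := by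
  unfold Fu
  rw [Finset.mul_sum]
  apply Finset.sum_congr rfl
  intro f _
  rw [← det_mul]
  congr 1
  ext i j
  refine Fin.cases ?_ (fun j => ?_) j <;> simp [bord, Matrix.mul_apply, mulVec, dotProduct]

theorem Mm_mul {m N : ℕ} (g : Matrix (Fin m) (Fin m) R) (Φ : Matrix (Fin m) (Fin N) R) :
    Mm (g * Φ) = g * Mm Φ * gᵀ := by
  unfold Mm
  rw [transpose_mul]
  simp only [Matrix.mul_assoc]

theorem Fu_single {m N : ℕ} (i : Fin (m+1)) (Φ : Matrix (Fin (m+1)) (Fin N) R) :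
    Fu (Pi.single i 1) Φ = (-1)^(i:ℕ) * Fs (Φ.submatrix i.succAbove id) := by
  unfold Fu Fs
  rw [Finset.mul_sum]
  apply Finset.sum_congr rfl
  intro f _
  rw [det_bord, Finset.sum_eq_single i]
  · simp
  · intro j _ hj; simp [Pi.single_eq_of_ne hj]
  · simp

theorem Mm_sub {m m' N : ℕ} (e : Fin m' → Fin m) (Φ : Matrix (Fin m) (Fin N) R) :
    Mm (Φ.submatrix e id) = (Mm Φ).submatrix e e := rfl

theorem Fs_map {S : Type*} [CommRing S] (φ : R →+* S) {m N : ℕ} (Φ : Matrix (Fin m) (Fin N) R) :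
    Fs (Φ.map φ) = φ (Fs Φ) := by
  unfold Fs
  rw [map_sum]
  apply Finset.sum_congr rfl
  intro f _
  rw [RingHom.map_det]; rfl

theorem Fu_map {S : Type*} [CommRing S] (φ : R →+* S) {m N : ℕ} (u : Fin (m+1) → R)
    (Φ : Matrix (Fin (m+1)) (Fin N) R) :
    Fu (φ ∘ u) (Φ.map φ) = φ (Fu u Φ) := by
  unfold Fu
  rw [map_sum]
  apply Finset.sum_congr rfl
  intro f _
  rw [RingHom.map_det]
  congr 1
  ext i j
  refine Fin.cases ?_ (fun j => ?_) j <;> simp [bord]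

theorem Lm_map {S : Type*} [CommRing S] (φ : R →+* S) (N : ℕ) : (Lm R N).map φ = Lm S N := by
  ext i j
  simp [Lm, apply_ite φ, map_ofNat φ 2]

theorem Mm_map {S : Type*} [CommRing S] (φ : R →+* S) {m N : ℕ} (Φ : Matrix (Fin m) (Fin N) R) :
    Mm (Φ.map φ) = (Mm Φ).map φ := by
  unfold Mm
  rw [Matrix.map_mul, Matrix.map_mul, Lm_map, transpose_map]

/-- the bilinear quantity -/
def Qq {m N : ℕ} (u : Fin m → R) (Φ : Matrix (Fin m) (Fin N) R) : R :=
  u ⬝ᵥ ((Mm Φ).adjugate *ᵥ (Φ *ᵥ 1))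

theorem Qq_map {S : Type*} [CommRing S] (φ : R →+* S) {m N : ℕ} (u : Fin m → R)
    (Φ : Matrix (Fin m) (Fin N) R) :
    Qq (φ ∘ u) (Φ.map φ) = φ (Qq u Φ) := by
  unfold Qq
  rw [Mm_map]
  have h3 : ((Mm Φ).map φ).adjugate = (Mm Φ).adjugate.map φ := (RingHom.map_adjugate φ _).symm
  rw [h3]
  simp [dotProduct, mulVec, map_sum]

theorem Mm_symm {m N : ℕ} (Φ : Matrix (Fin m) (Fin N) R) :
    Mm Φ + (Mm Φ)ᵀ = (2:R) • vecMulVec (Φ *ᵥ 1) (Φ *ᵥ 1) := by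
  have hL : Lm R N + (Lm R N)ᵀ = (2:R) • vecMulVec 1 1 := by
    ext i j
    simp only [Lm, Matrix.add_apply, transpose_apply, Matrix.of_apply, Matrix.smul_apply, vecMulVec_apply, Pi.one_apply]
    rcases lt_trichotomy i j with h | h | h
    · simp [h, h.not_gt, h.ne]
    · subst h; simp; norm_num
    · simp [h, h.not_gt, h.ne', h.ne]
  have : Mm Φ + (Mm Φ)ᵀ = Φ * (Lm R N + (Lm R N)ᵀ) * Φᵀ := by
    unfold Mm
    simp only [transpose_mul, transpose_transpose, Matrix.mul_add, Matrix.add_mul, Matrix.mul_assoc]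
  rw [this, hL]
  ext i j
  simp [Matrix.mul_apply, vecMulVec_apply, mulVec, dotProduct, Finset.mul_sum, Finset.sum_mul]
  refine Finset.sum_congr rfl fun _ _ => Finset.sum_congr rfl fun _ _ => ?_
  ring

theorem Qq_sq [IsDomain R] [CharZero R] {m N : ℕ} (u : Fin m → R) (Φ : Matrix (Fin m) (Fin N) R) :
    Qq u Φ ^ 2 = (Mm Φ).det * (u ⬝ᵥ ((Mm Φ).adjugate *ᵥ u)) := by
  set M := Mm Φ with hM
  set s := Φ *ᵥ (1 : Fin N → R) with hs
  have h1 : M.adjugate * (M + Mᵀ) * M.adjugateᵀ = M.det • (M.adjugateᵀ + M.adjugate) := by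
    have : Mᵀ * M.adjugateᵀ = M.det • 1 := by
      rw [← transpose_mul, adjugate_mul, transpose_smul, transpose_one]
    rw [Matrix.mul_add, Matrix.add_mul, adjugate_mul, Matrix.mul_assoc, this, smul_add]
    simp
  rw [hM, Mm_symm, ← hM, ← hs] at h1
  have h2 := congrArg (fun A => u ⬝ᵥ (A *ᵥ u)) h1
  simp only [smul_mulVec, add_mulVec, dotProduct_add, dotProduct_smul, Matrix.mul_smul, Matrix.smul_mul,
    mulVec_transpose, smul_eq_mul] at h2
  have h3 : u ⬝ᵥ u ᵥ* M.adjugate = u ⬝ᵥ M.adjugate *ᵥ u := by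
    rw [dotProduct_comm, ← dotProduct_mulVec]
  have h4 : u ⬝ᵥ (M.adjugate * vecMulVec s s * M.adjugateᵀ) *ᵥ u = Qq u Φ ^ 2 := by
    have : M.adjugate * vecMulVec s s * M.adjugateᵀ
        = vecMulVec (M.adjugate *ᵥ s) (M.adjugate *ᵥ s) := by
      rw [mul_vecMulVec, vecMulVec_mul, vecMul_transpose]
    rw [this, vecMulVec_mulVec]
    unfold Qq
    rw [← hM, ← hs, dotProduct_comm (M.adjugate *ᵥ s) u]
    simp [sq]
  rw [h3, h4, ← two_mul] at h2
  have h5 : (2:R) * Qq u Φ ^ 2 = 2 * (M.det * (u ⬝ᵥ M.adjugate *ᵥ u)) := by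
    rw [h2]; ring
  exact mul_left_cancel₀ two_ne_zero h5

def PN (N : ℕ) : Prop := ∀ (K : Type) [Field K] [CharZero K] (m : ℕ) (Φ : Matrix (Fin m) (Fin N) K),
  (Mm Φ).det = Fs Φ ^ 2

theorem PN_R {N : ℕ} (h : PN N) {K : Type} [Field K] [CharZero K] {m : ℕ}
    (u : Fin (m+1) → K) (Φ : Matrix (Fin (m+1)) (Fin N) K) :
    u ⬝ᵥ ((Mm Φ).adjugate *ᵥ u) = Fu u Φ ^ 2 := by
  by_cases hu : u = 0
  · subst hu
    have : Fu (0 : Fin (m+1) → K) Φ = 0 := by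
      unfold Fu
      apply Finset.sum_eq_zero
      intro g _
      rw [det_bord]; simp
    rw [this]; simp
  obtain ⟨i, hi⟩ : ∃ i, u i ≠ 0 := by
    by_contra hc; push Not at hc; exact hu (funext hc)
  set g : Matrix (Fin (m+1)) (Fin (m+1)) K := (1 : Matrix _ _ K).updateCol i u with hg
  have hdet : g.det = u i := by
    have : (1 : Matrix (Fin (m+1)) (Fin (m+1)) K).cramer u i = g.det := by rw [cramer_apply]
    rw [← this, cramer_one]; rfl
  have hgu : g *ᵥ (Pi.single i 1) = u := by
    ext k; simp [hg, mulVec_single]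
  have hunit : IsUnit g.det := by rw [hdet]; exact isUnit_iff_ne_zero.mpr hi
  set Φ' := g⁻¹ * Φ with hΦ'
  have hΦ : Φ = g * Φ' := by
    rw [hΦ', ← Matrix.mul_assoc, Matrix.mul_nonsing_inv _ hunit, Matrix.one_mul]
  have hF : Fu u Φ = g.det * ((-1)^(i:ℕ) * Fs (Φ'.submatrix i.succAbove id)) := by
    rw [hΦ]; nth_rewrite 1 [← hgu]; rw [Fu_mul, Fu_single]
  have hA : (Mm Φ').adjugate i i = Fs (Φ'.submatrix i.succAbove id) ^ 2 := by
    rw [adjugate_fin_succ_eq_det_submatrix, ← Mm_sub, h K]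
    rw [← two_mul, pow_mul]; simp
  have hL : u ⬝ᵥ ((Mm Φ).adjugate *ᵥ u) = g.det ^ 2 * (Mm Φ').adjugate i i := by
    rw [hΦ, Mm_mul, adjugate_mul_distrib, adjugate_mul_distrib, ← adjugate_transpose]
    have e1 : g.adjugate *ᵥ u = g.det • Pi.single i 1 := by
      rw [← hgu, mulVec_mulVec, adjugate_mul, smul_mulVec, one_mulVec]
    rw [← mulVec_mulVec, ← mulVec_mulVec, e1, dotProduct_mulVec, vecMul_transpose, e1]
    simp [mulVec_smul, sq]
    ring
  rw [hL, hF, hA, mul_pow, mul_pow, ← pow_mul, mul_comm (i:ℕ) 2, pow_mul]; simp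

theorem PN_Qsq {N : ℕ} (h : PN N) {D : Type} [CommRing D] [IsDomain D] [CharZero D] {m : ℕ}
    (u : Fin (m+1) → D) (Φ : Matrix (Fin (m+1)) (Fin N) D) :
    Qq u Φ ^ 2 = (Fs Φ * Fu u Φ) ^ 2 := by
  have hinj := IsFractionRing.injective D (FractionRing D)
  have : CharZero (FractionRing D) := charZero_of_injective_algebraMap hinj
  apply hinj
  set φ := algebraMap D (FractionRing D)
  rw [map_pow, map_pow, map_mul, ← Qq_map, ← Fs_map, ← Fu_map, Qq_sq, h, PN_R h, mul_pow]

/-- reference matrix -/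
def Φ0 (D : Type) [CommRing D] (m N : ℕ) : Matrix (Fin m) (Fin N) D :=
  Matrix.of fun i j => if (i:ℕ) = j then 1 else 0

theorem strictMono_eq {m N : ℕ} (c : ℕ) (f : Fin m → Fin N) (hf : StrictMono f)
    (h1 : ∀ j, c ≤ (f j : ℕ)) (h2 : ∀ j, (f j : ℕ) < m + c) (j : Fin m) : (f j : ℕ) = j + c := by
  have lo : ∀ k : ℕ, ∀ hk : k < m, k + c ≤ (f ⟨k, hk⟩ : ℕ) := by
    intro k
    induction k with
    | zero => intro hk; simpa using h1 _
    | succ k ih =>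
      intro hk
      have a1 := ih (by omega)
      have a2 : f ⟨k, by omega⟩ < f ⟨k+1, hk⟩ := hf (by simp [Fin.lt_def])
      rw [Fin.lt_def] at a2
      omega
  have hi : ∀ k : ℕ, ∀ hk : k < m, (f ⟨m - 1 - k, by omega⟩ : ℕ) + k + 1 ≤ m + c := by
    intro k
    induction k with
    | zero => intro hk; have := h2 ⟨m - 1 - 0, by omega⟩; omega
    | succ k ih =>
      intro hk
      have a1 := ih (by omega)
      have a2 : f ⟨m - 1 - (k+1), by omega⟩ < f ⟨m-1-k, by omega⟩ := hf (by simp [Fin.lt_def]; omega)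
      rw [Fin.lt_def] at a2
      omega
  have b1 : (j:ℕ) + c ≤ (f j : ℕ) := lo j j.2
  have b2 := hi (m - 1 - j) (by omega)
  have : (⟨m - 1 - (m - 1 - (j:ℕ)), by omega⟩ : Fin m) = j := by
    ext; simp; omega
  rw [this] at b2
  omega

theorem Fs_Φ0 (D : Type) [CommRing D] {m N : ℕ} (hN : m ≤ N) : Fs (Φ0 D m N) = 1 := by
  unfold Fs
  rw [Finset.sum_eq_single (Fin.castLE hN)]
  · have : (Φ0 D m N).submatrix id (Fin.castLE hN) = 1 := by
      ext i j
      simp [Φ0, Matrix.one_apply, Fin.ext_iff]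
    rw [this, det_one]
  · intro f hf hne
    rw [mem_SM] at hf
    by_cases hex : ∃ j, m ≤ (f j : ℕ)
    · obtain ⟨j, hj⟩ := hex
      apply det_eq_zero_of_column_eq_zero j
      intro i
      simp [Φ0]; omega
    · push Not at hex
      exfalso; apply hne
      funext j
      ext
      have := strictMono_eq 0 f hf (by simp) (by simpa using hex) j
      simpa using this
  · intro hc
    exact absurd (mem_SM.mpr (Fin.strictMono_castLE hN)) hc

theorem Fu_Φ0 (D : Type) [CommRing D] {m N : ℕ} (hN : m + 1 ≤ N) :
    Fu (Pi.single 0 1) (Φ0 D (m+1) N) = 1 := by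
  rw [Fu_single]
  simp only [Fin.val_zero, pow_zero, one_mul]
  unfold Fs
  have hlt : ∀ j : Fin m, (j:ℕ) + 1 < N := fun j => by omega
  rw [Finset.sum_eq_single (fun j : Fin m => (⟨j + 1, hlt j⟩ : Fin N))]
  · have : ((Φ0 D (m+1) N).submatrix (Fin.succAbove 0) id).submatrix id
        (fun j : Fin m => (⟨j + 1, hlt j⟩ : Fin N)) = 1 := by
      ext i j
      simp [Φ0, Matrix.one_apply, Fin.ext_iff]
    rw [this, det_one]
  · intro f hf hne
    rw [mem_SM] at hf
    by_cases hex : ∃ j, m + 1 ≤ (f j : ℕ) ∨ (f j : ℕ) < 1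
    · obtain ⟨j, hj⟩ := hex
      apply det_eq_zero_of_column_eq_zero j
      intro i
      simp [Φ0]; omega
    · push Not at hex
      exfalso; apply hne
      funext j
      ext
      exact strictMono_eq 1 f hf (fun j => (hex j).2) (fun j => (hex j).1) j
  · intro hc
    exact absurd (mem_SM.mpr (fun a b hab => by rw [Fin.lt_def] at *; simp only; omega)) hc

theorem Qq_Φ0 (D : Type) [CommRing D] [IsDomain D] [CharZero D] {m N : ℕ} (hN : m + 1 ≤ N)
    (h : PN N) :
    Qq (Pi.single 0 1) (Φ0 D (m+1) N) = 1 := by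
  have hΦ : Φ0 D (m+1) N = (1 : Matrix (Fin N) (Fin N) D).submatrix (Fin.castLE hN) id := by
    ext i j
    simp [Φ0, Matrix.one_apply, Fin.ext_iff]
  have hM' : Mm (Φ0 D (m+1) N) = Lm D (m+1) := by
    rw [hΦ, Mm_sub]
    ext i j
    simp [Mm, Lm]
  have hdet : (Lm D (m+1)).det = 1 := by
    rw [det_of_isLowerTriangular]
    · simp [Lm]
    · intro i j hij
      have hij' : i < j := hij
      simp [Lm, hij'.not_gt, hij'.ne]
  unfold Qq
  rw [hM', dotProduct_mulVec]
  have e1 : (Pi.single 0 1 : Fin (m+1) → D) ᵥ* Lm D (m+1) = Pi.single 0 1 := by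
    ext j
    rw [single_one_vecMul]
    refine Fin.cases ?_ (fun j => ?_) j
    · simp [Lm]
    · simp [Lm, Fin.succ_ne_zero, (Fin.succ_ne_zero _).symm]
  have e2 : (Pi.single 0 1 : Fin (m+1) → D) ᵥ* (Lm D (m+1)).adjugate = Pi.single 0 1 := by
    nth_rewrite 1 [← e1]
    rw [vecMul_vecMul, mul_adjugate, hdet, one_smul, vecMul_one]
  rw [e2, single_one_dotProduct]
  have e : ∀ k : Fin N, ((0:ℕ) = k) ↔ k = Fin.castLE hN 0 := by
      intro k; rw [Fin.ext_iff]; simp [eq_comm]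
  simp only [mulVec, dotProduct, Φ0, Matrix.of_apply, Fin.val_zero, e]
  simp

theorem PN_Q {N : ℕ} (h : PN N) {K : Type} [Field K] [CharZero K] {m : ℕ}
    (u : Fin (m+1) → K) (Φ : Matrix (Fin (m+1)) (Fin N) K) :
    Qq u Φ = Fs Φ * Fu u Φ := by
  rcases Nat.lt_or_ge N (m+1) with hN | hN
  · have h0 : Fs Φ = 0 := by
      unfold Fs
      apply Finset.sum_eq_zero
      intro f hf
      rw [mem_SM] at hf
      have := Fintype.card_le_of_injective f hf.injective
      simp at this; omega
    have := PN_Qsq h u Φ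
    rw [h0, zero_mul, zero_pow two_ne_zero] at this
    rw [h0, zero_mul]
    exact pow_eq_zero_iff two_ne_zero |>.mp this
  · set ΦX : Matrix (Fin (m+1)) (Fin N) K[X] :=
      Matrix.of fun i j => C (Φ0 K (m+1) N i j) + X * C (Φ i j - Φ0 K (m+1) N i j)
    set u0 : Fin (m+1) → K := Pi.single 0 1 with hu0
    set uX : Fin (m+1) → K[X] := fun i => C (u0 i) + X * C (u i - u0 i)
    have hX := PN_Qsq h uX ΦX
    have m0 : ΦX.map (evalRingHom (0:K)) = Φ0 K (m+1) N := by ext i j; simp [ΦX]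
    have m1 : ΦX.map (evalRingHom (1:K)) = Φ := by ext i j; simp [ΦX]
    have v0 : (evalRingHom (0:K)) ∘ uX = u0 := by ext i; simp [uX]
    have v1 : (evalRingHom (1:K)) ∘ uX = u := by ext i; simp [uX]
    rcases sq_eq_sq_iff_eq_or_eq_neg.mp hX with h1 | h1
    · have := congrArg (evalRingHom (1:K)) h1
      rw [map_mul, ← Qq_map, ← Fs_map, ← Fu_map, m1, v1] at this
      exact this
    · exfalso
      have := congrArg (evalRingHom (0:K)) h1
      rw [map_neg, map_mul, ← Qq_map, ← Fs_map, ← Fu_map, m0, v0, hu0, Qq_Φ0 K hN h, Fs_Φ0 K hN,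
        Fu_Φ0 K hN] at this
      norm_num at this

theorem PN_all (N : ℕ) : PN N := by
  induction N with
  | zero =>
    intro K _ _ m Φ
    cases m with
    | zero => simp [Fs, SM_zero]
    | succ m =>
      have : Mm Φ = 0 := by ext i j; simp [Mm, Matrix.mul_apply]
      rw [this]; simp [Fs, SM_succ_zero, det_zero]
  | succ N ih =>
    intro K _ _ m Φ
    cases m with
    | zero => simp [Fs, SM_zero]
    | succ m =>
      rw [Mm_succ, det_rank1, Fs_succ, ih, mulVec_add, dotProduct_add, PN_R ih, mulVec_smul,
        dotProduct_smul]
      have := PN_Q ih (fun i => Φ i 0) (Φ.submatrix id Fin.succ)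
      unfold Qq at this
      rw [this, smul_eq_mul]; ring

/-- main linear algebra identity -/
theorem main_LA {m N : ℕ} (Φ Ψ : Matrix (Fin m) (Fin N) ℚ)
    (h : ∀ i x, Ψ i x = ∑ y, Lm ℚ N x y * Φ i y) :
    (∑ f ∈ SM m N, (Φ.submatrix id f).det) ^ 2
      = ∑ f ∈ SM m N, (Φ.submatrix id f).det * (Ψ.submatrix id f).det := by
  rw [← cauchyBinet]
  have : Φ * Ψᵀ = Mm Φ := by
    unfold Mm
    rw [Matrix.mul_assoc]
    congr 1
    ext x i
    simp [h, Matrix.mul_apply]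
  rw [this, PN_all N]
  rfl

end part2
end SCP

namespace SCP
open Matrix Finset Polynomial

section part3

/-- monic of degree `n` -/
def MD (p : ℚ[X]) (n : ℕ) : Prop := p.natDegree ≤ n ∧ p.coeff n = 1

theorem MD_step {p q : ℚ[X]} {n : ℕ} {r s t : ℚ} (hp : MD p n) (hq : MD q n) (c : ℚ)
    (h : r + t = 1) : MD (C r * ((X + C c) * p) + C s * q + C t * (X * q)) (n+1) ∧
    MD (C r * ((X + C c) * p) + C s * q + C t * (X * q) + C s) (n+1) := by
  have hd : (C r * ((X + C c) * p) + C s * q + C t * (X * q)).natDegree ≤ n + 1 := by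
    refine natDegree_add_le_of_degree_le (natDegree_add_le_of_degree_le ?_ ?_) ?_
    · refine (natDegree_C_mul_le _ _).trans ((natDegree_mul_le).trans ?_)
      rw [natDegree_X_add_C, add_comm]; exact Nat.add_le_add_right hp.1 1
    · exact (natDegree_C_mul_le _ _).trans (hq.1.trans (Nat.le_succ n))
    · refine (natDegree_C_mul_le _ _).trans ((natDegree_mul_le).trans ?_)
      rw [natDegree_X, add_comm]; exact Nat.add_le_add_right hq.1 1
  have hp0 : p.coeff (n+1) = 0 := coeff_eq_zero_of_natDegree_lt (Nat.lt_succ_of_le hp.1)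
  have hq0 : q.coeff (n+1) = 0 := coeff_eq_zero_of_natDegree_lt (Nat.lt_succ_of_le hq.1)
  have hc : (C r * ((X + C c) * p) + C s * q + C t * (X * q)).coeff (n+1) = 1 := by
    simp only [coeff_add, coeff_C_mul, add_mul, coeff_X_mul, hp0, hq0, hp.2, hq.2]
    linarith
  refine ⟨⟨hd, hc⟩, natDegree_add_le_of_degree_le hd (by simp), ?_⟩
  rw [coeff_add, hc, coeff_C_succ, add_zero]

theorem MD_zero : MD 1 0 := by simp [MD]

theorem exists_q (n : ℕ) : ∃ p q : ℚ[X], MD p (n+1) ∧ MD q n ∧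
    ∀ x : ℚ, (x+1/2)^(n+1) + (x-1/2)^(n+1) = 2 * p.eval x ∧
      (x+1/2)^(n+1) - (x-1/2)^(n+1) = (n+1) * q.eval x := by
  induction n with
  | zero => exact ⟨X, 1, by simp [MD], MD_zero, fun x => by
      constructor
      · simp; ring
      · simp; ring⟩
  | succ n ih =>
    obtain ⟨p, q, hp, hq, h⟩ := ih
    have hn : (n:ℚ) + 2 ≠ 0 := by positivity
    refine ⟨X * p + C ((n+1)/4 : ℚ) * q, C ((n+1)/(n+2) : ℚ) * (X * q) + C (1/(n+2) : ℚ) * p,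
      ⟨?_, ?_⟩, ⟨?_, ?_⟩, fun x => ?_⟩
    · refine natDegree_add_le_of_degree_le ((natDegree_mul_le).trans ?_)
        ((natDegree_C_mul_le _ _).trans (by have := hq.1; omega))
      rw [natDegree_X]; have := hp.1; omega
    · have : q.coeff (n+2) = 0 := coeff_eq_zero_of_natDegree_lt (by have := hq.1; omega)
      rw [coeff_add, coeff_X_mul, coeff_C_mul, this, hp.2]; simp
    · refine natDegree_add_le_of_degree_le ((natDegree_C_mul_le _ _).trans ((natDegree_mul_le).trans ?_))
        ((natDegree_C_mul_le _ _).trans hp.1)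
      rw [natDegree_X]; have := hq.1; omega
    · rw [coeff_add, coeff_C_mul, coeff_X_mul, coeff_C_mul, hq.2, hp.2]; field_simp; ring
    · obtain ⟨h1, h2⟩ := h x
      simp only [eval_add, eval_mul, eval_X, eval_C]
      rw [pow_succ, pow_succ (x - 1/2)]
      push_cast
      constructor
      · linear_combination x * h1 + (1/2) * h2
      · have e2 : ((n:ℚ)+1+1) * ((n+1)/(n+2) * (x * eval x q) + 1/(n+2) * eval x p)
            = (n+1) * (x * eval x q) + eval x p := by field_simp; ring
        rw [e2]
        linear_combination x * h2 + (1/2) * h1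

theorem exists_cd (n : ℕ) : ∃ c d : ℚ[X], MD c n ∧ MD d n ∧
    ∀ x : ℚ, (x+1/2)^(2*n+1) + (x-1/2)^(2*n+1) = 2 * x * c.eval (x^2) ∧
      (x+1/2)^(2*n+1) - (x-1/2)^(2*n+1) = (2*n+1) * d.eval (x^2) := by
  induction n with
  | zero => exact ⟨1, 1, MD_zero, MD_zero, fun x => by
      constructor
      · simp; ring
      · simp; ring⟩
  | succ n ih =>
    obtain ⟨c, d, hc, hd, h⟩ := ih
    have hn : 2 * (n:ℚ) + 3 ≠ 0 := by positivity
    refine ⟨_, _, (MD_step (r := 1) (s := (2*n+1)/2) (t := 0) hc hd (1/4) (by ring)).1,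
      (MD_step (r := (2*n+1)/(2*n+3)) (s := 0) (t := 2/(2*n+3)) hd hc (1/4) (by field_simp; ring)).1,
      fun x => ?_⟩
    obtain ⟨h1, h2⟩ := h x
    simp only [eval_add, eval_mul, eval_X, eval_C]
    have e : 2 * (n+1) + 1 = (2*n+1) + 2 := by ring
    rw [e, pow_add, pow_add (x - 1/2)]
    push_cast
    constructor
    · linear_combination (x^2+1/4) * h1 + x * h2
    · have e2 : (2 * ((n:ℚ)+1)+1) * ((2*n+1)/(2*n+3) * ((x^2 + 1/4) * eval (x^2) d) + 0 * eval (x^2) c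
            + 2/(2*n+3) * (x^2 * eval (x^2) c))
            = (2*n+1) * ((x^2+1/4) * eval (x^2) d) + 2 * (x^2 * eval (x^2) c) := by field_simp; ring
      rw [e2]
      linear_combination (x^2+1/4) * h2 + x * h1

theorem exists_ae (n : ℕ) : ∃ c d : ℚ[X], MD c n ∧ MD d n ∧
    ∀ x : ℚ, (x+1/2)^(2*n+2) + (x-1/2)^(2*n+2) - 2 * (1/2)^(2*n+2) = 2 * x^2 * c.eval (x^2) ∧
      (x+1/2)^(2*n+2) - (x-1/2)^(2*n+2) = (2*n+2) * (x * d.eval (x^2)) := by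
  induction n with
  | zero => exact ⟨1, 1, MD_zero, MD_zero, fun x => by simp; constructor <;> ring⟩
  | succ n ih =>
    obtain ⟨c, d, hc, hd, h⟩ := ih
    have hn : (n:ℚ) + 2 ≠ 0 := by positivity
    have k1 : MD (C (1:ℚ) * ((X + C (1/4:ℚ)) * c) + C (n+1:ℚ) * d + C (0:ℚ) * (X * d) + C ((1/2:ℚ)^(2*n+2))) (n+1) := by
      have := (MD_step (r := 1) (s := (n+1)) (t := 0) hc hd (1/4) (by ring)).1
      refine ⟨natDegree_add_le_of_degree_le this.1 (by simp), ?_⟩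
      rw [coeff_add, this.2, coeff_C_succ, add_zero]
    have k2 : MD (C ((n+1)/(n+2):ℚ) * ((X + C (1/4:ℚ)) * d) + C (0:ℚ) * c + C (1/(n+2):ℚ) * (X * c)
        + C ((1/2:ℚ)^(2*n+2)/(n+2))) (n+1) := by
      have := (MD_step (r := (n+1)/(n+2)) (s := 0) (t := 1/(n+2)) hd hc (1/4)
        (by field_simp; ring)).1
      refine ⟨natDegree_add_le_of_degree_le this.1 (by simp), ?_⟩
      rw [coeff_add, this.2, coeff_C_succ, add_zero]
    refine ⟨_, _, k1, k2, fun x => ?_⟩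
    obtain ⟨h1, h2⟩ := h x
    simp only [eval_add, eval_mul, eval_X, eval_C]
    have e : 2 * (n+1) + 2 = (2*n+2) + 2 := by ring
    rw [e, pow_add, pow_add (x - 1/2), pow_add (1/2:ℚ) (2*n+2) 2]
    set κ := (1/2:ℚ)^(2*n+2)
    push_cast
    constructor
    · linear_combination (x^2+1/4) * h1 + x * h2
    · have e2 : (2 * ((n:ℚ) + 1) + 2) * (x * ((n+1)/(n+2) * ((x^2+1/4) * eval (x^2) d) + 0 * eval (x^2) c
          + 1/(n+2) * (x^2 * eval (x^2) c) + κ/(n+2)))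
          = 2 * x * ((n+1) * ((x^2+1/4) * eval (x^2) d) + x^2 * eval (x^2) c + κ) := by
        field_simp; ring
      rw [e2]
      linear_combination ((x^2+1/4) * h2 + x * h1)

theorem det_MD {k : ℕ} (p : Fin k → ℚ[X]) (hp : ∀ i, MD (p i) i) (z t w : Fin k → ℚ) :
    (Matrix.of fun j i : Fin k => w i * (z j * (p i).eval (t j))).det
      = (∏ i, w i) * ((∏ j, z j) * (vandermonde t).det) := by
  have h2 : ∀ i, (p i).Monic := fun i => monic_of_natDegree_le_of_coeff_eq_one _ (hp i).1 (hp i).2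
  have h1 : ∀ i, (p i).natDegree = i := fun i => by
    apply le_antisymm (hp i).1
    apply le_natDegree_of_ne_zero
    rw [(hp i).2]; exact one_ne_zero
  rw [det_eval_matrixOfPolynomials_eq_det_vandermonde t p h1 h2, ← det_mul_column, ← det_mul_row]
  rfl

theorem sum_det {k : ℕ} (t : Fin k → Finset ℕ) (h : Fin k → ℕ → Fin k → ℚ) :
    ∑ μ ∈ Fintype.piFinset t, (Matrix.of fun j i => h j (μ j) i).det
      = (Matrix.of fun j i => ∑ x ∈ t j, h j x i).det := by
  have := (detRowAlternating (R := ℚ) (n := Fin k)).toMultilinearMap.map_sum_finset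
    (g := fun j x => h j x) t
  have e : (Matrix.of fun j i => ∑ x ∈ t j, h j x i) = (fun j => ∑ x ∈ t j, h j x) := by
    ext j i; simp [Finset.sum_apply]
  rw [e]
  exact this.symm

theorem det_grow {k : ℕ} (F : Fin k → Fin (k+1) → ℚ) :
    (Matrix.of fun j i : Fin k => F i j.castSucc - F i j.succ).det
      = (-1)^k * (Matrix.of fun j i : Fin (k+1) =>
          (Fin.cons 1 (fun i => F i j) : Fin (k+1) → ℚ) i).det := by
  set A := (Matrix.of fun j i : Fin (k+1) =>
          (Fin.cons 1 (fun i => F i j) : Fin (k+1) → ℚ) i)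
  set B : Matrix (Fin (k+1)) (Fin (k+1)) ℚ := Matrix.of fun j i =>
    (Fin.cons (A 0 i) (fun j => A j.succ i - A j.castSucc i) : Fin (k+1) → ℚ) j
  have hAB : A.det = B.det := by
    apply det_eq_of_forall_row_eq_smul_add_pred (fun _ => 1)
    · intro j; simp [B]
    · intro i j; simp [B]
  rw [hAB, det_succ_column_zero, Fin.sum_univ_succ]
  have h0 : ∀ i : Fin k, B i.succ 0 = 0 := by intro i; simp [B, A]
  simp only [h0]
  have h1 : B 0 0 = 1 := by simp [B, A]
  have h2 : B.submatrix (Fin.succAbove 0) Fin.succ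
      = -(Matrix.of fun j i : Fin k => F i j.castSucc - F i j.succ) := by
    ext i j; simp [B, A]
  rw [h1, h2, det_neg]
  simp [← mul_assoc, ← mul_pow]

theorem det_stay {k : ℕ} (F : Fin k → Fin (k+1) → ℚ) (h : ∀ i, F i (Fin.last k) = 0) :
    (Matrix.of fun j i : Fin k => F i j.castSucc - F i j.succ).det
      = (Matrix.of fun j i : Fin k => F i j.castSucc).det := by
  rw [det_grow, det_succ_row _ (Fin.last k), Fin.sum_univ_succ]
  simp only [Matrix.of_apply, Fin.cons_succ, h, Fin.cons_zero, mul_zero, zero_mul,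
    Finset.sum_const_zero, add_zero, mul_one]
  rw [← mul_assoc, Fin.val_last, Fin.val_zero, add_zero, ← mul_pow]
  simp only [mul_neg, mul_one, neg_neg, one_pow, one_mul]
  congr 1
  ext i j; simp

theorem telescope (F f : ℚ → ℚ) (hF : ∀ x, F (x+1/2) - F (x-1/2) = f x) (α : ℚ) (lo d : ℕ) :
    ∑ t ∈ Icc lo (lo + d), f (t + α) = F (((lo + d : ℕ):ℚ) + α + 1/2) - F (lo + α - 1/2) := by
  induction d with
  | zero => simp [← hF]
  | succ d ih =>
    rw [← add_assoc, Finset.sum_Icc_succ_top (by omega), ih, ← hF]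
    push_cast
    have : (lo:ℚ) + d + 1 + α - 1/2 = lo + d + α + 1/2 := by ring
    rw [this]; ring

/-- extension by zero -/
def ext0 {k : ℕ} (μ : Fin k → ℕ) : ℕ → ℕ := fun i => if h : i < k then μ ⟨i, h⟩ else 0

def cnt (s : ℕ → ℕ) : ℕ → (ℕ → ℕ) → ℕ
  | 0, _ => 1
  | n+1, l => ∑ μ ∈ Fintype.piFinset (fun i : Fin (s n) => Icc (l (i+1)) (l i)), cnt s n (ext0 μ)

/-- coordinates -/
def xc (n : ℕ) (l : ℕ → ℕ) (i : ℕ) : ℚ := (l i : ℚ) + ((n:ℚ) - 1)/2 - i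

theorem box_sum {k n : ℕ} (l : ℕ → ℕ) (hl : ∀ i, l (i+1) ≤ l i) (F f : Fin k → ℚ → ℚ)
    (hF : ∀ i x, F i (x+1/2) - F i (x-1/2) = f i x) :
    ∑ μ ∈ Fintype.piFinset (fun i : Fin k => Icc (l (i+1)) (l i)),
      (Matrix.of fun j i : Fin k => f i (xc n (ext0 μ) j)).det
    = (Matrix.of fun j i : Fin k => F i (xc (n+1) l j) - F i (xc (n+1) l (j+1))).det := by
  have e : ∀ μ : Fin k → ℕ, (Matrix.of fun j i : Fin k => f i (xc n (ext0 μ) j))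
      = Matrix.of fun j i : Fin k => (fun j x i => f i ((x:ℚ) + (((n:ℚ) - 1)/2 - (j:ℕ))) : Fin k → ℕ → Fin k → ℚ) j (μ j) i := by
    intro μ; ext j i
    simp only [Matrix.of_apply, xc, ext0, j.2, dif_pos]
    congr 1; ring
  refine (Finset.sum_congr rfl fun μ _ => congrArg det (e μ)).trans ((sum_det (fun i : Fin k => Icc (l (i+1)) (l i))
    (fun j x i => f i ((x:ℚ) + (((n:ℚ) - 1)/2 - (j:ℕ))))).trans ?_)
  congr 1
  ext j i
  simp only [Matrix.of_apply]
  obtain ⟨d, hd⟩ := Nat.exists_eq_add_of_le (hl j)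
  rw [hd, telescope (F i) (f i) (hF i), ← hd]
  unfold xc
  congr 2
  · push_cast; ring
  · push_cast; ring

theorem ext0_anti {k : ℕ} {l : ℕ → ℕ} {μ : Fin k → ℕ}
    (hμ : μ ∈ Fintype.piFinset (fun i : Fin k => Icc (l (i+1)) (l i))) :
    ∀ i, ext0 μ (i+1) ≤ ext0 μ i := by
  intro i
  rw [Fintype.mem_piFinset] at hμ
  unfold ext0
  by_cases h : i + 1 < k
  · have h' : i < k := by omega
    have a := hμ ⟨i+1, h⟩
    have b := hμ ⟨i, h'⟩
    rw [Finset.mem_Icc] at a b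
    simp only [h, h', dif_pos]
    exact a.2.trans b.1
  · simp [h]

theorem ext0_supp {k : ℕ} (μ : Fin k → ℕ) : ∀ i, k ≤ i → ext0 μ i = 0 := by
  intro i hi; simp [ext0, Nat.not_lt.mpr hi]

def eps : ℕ → ℚ
  | 0 => 1
  | k+1 => eps k * (-1)^k

theorem abs_eps (k : ℕ) : |eps k| = 1 := by
  induction k with
  | zero => simp [eps]
  | succ k ih => simp [eps, abs_mul, ih]

def cT (n : ℕ) : ℚ := ∏ i ∈ range n, 1 / (i.factorial : ℚ)
def cE (n : ℕ) : ℚ := ∏ i ∈ range n, 1 / ((2*i).factorial : ℚ)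
def cO (n : ℕ) : ℚ := ∏ i ∈ range n, 1 / ((2*i+1).factorial : ℚ)

theorem cT_pos (n : ℕ) : 0 < cT n := prod_pos fun i _ => by positivity
theorem cE_pos (n : ℕ) : 0 < cE n := prod_pos fun i _ => by positivity
theorem cO_pos (n : ℕ) : 0 < cO n := prod_pos fun i _ => by positivity


theorem prod_fact (n : ℕ) : ∏ i : Fin n, (((i:ℕ):ℚ) + 1) = (n.factorial : ℚ) := by
  rw [Fin.prod_univ_eq_prod_range (fun i => (i:ℚ) + 1) n, ← Finset.prod_range_add_one_eq_factorial]
  push_cast; rfl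

theorem cE_cO (n : ℕ) : cE n = cO n * ∏ i : Fin n, (2 * ((i:ℕ):ℚ) + 1) := by
  rw [Fin.prod_univ_eq_prod_range (fun i => 2 * (i:ℚ) + 1) n]
  unfold cE cO
  rw [← Finset.prod_mul_distrib]
  apply Finset.prod_congr rfl
  intro i _
  rw [Nat.factorial_succ]
  push_cast
  have : ((2*i).factorial : ℚ) ≠ 0 := by positivity
  have : (2 * (i:ℚ) + 1) ≠ 0 := by positivity
  field_simp

theorem cO_cE (n : ℕ) : cO n = cE (n+1) * ∏ i : Fin n, (2 * ((i:ℕ):ℚ) + 2) := by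
  rw [Fin.prod_univ_eq_prod_range (fun i => 2 * (i:ℚ) + 2) n]
  unfold cE cO
  rw [Finset.prod_range_succ', mul_right_comm, ← Finset.prod_mul_distrib]
  simp only [mul_zero, Nat.factorial_zero, Nat.cast_one, div_one, mul_one]
  apply Finset.prod_congr rfl
  intro i _
  rw [show 2 * (i+1) = (2*i+1)+1 by ring, Nat.factorial_succ (2*i+1)]
  push_cast
  have : ((2*i+1).factorial : ℚ) ≠ 0 := by positivity
  have : (2 * (i:ℚ) + 2) ≠ 0 := by positivity
  have : (2 * (i:ℚ) + 1 + 1) ≠ 0 := by positivity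
  field_simp
  ring

theorem cT_even (m : ℕ) : cT (2*m) = cE m * cO m := by
  induction m with
  | zero => simp [cT, cE, cO]
  | succ m ih =>
    have : 2 * (m+1) = (2*m+1)+1 := by ring
    unfold cT cE cO at *
    rw [this, Finset.prod_range_succ, Finset.prod_range_succ, ih, Finset.prod_range_succ, Finset.prod_range_succ]
    ring

theorem cT_odd (m : ℕ) : cT (2*m+1) = cE (m+1) * cO m := by
  have := cT_even m
  unfold cT cE cO at *
  rw [Finset.prod_range_succ, this, Finset.prod_range_succ]
  ring

theorem cnt_tri (n : ℕ) : ∀ l : ℕ → ℕ, (∀ i, l (i+1) ≤ l i) →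
    (cnt id n l : ℚ) = cT n * (eps n * (vandermonde (fun i : Fin n => xc n l i)).det) := by
  induction n with
  | zero => intro l _; simp [cnt, cT, eps]
  | succ n ih =>
    intro l hl
    choose p q hp hq hpq using exists_q
    have h1 : (cnt id (n+1) l : ℚ) = cT n * eps n *
        ∑ μ ∈ Fintype.piFinset (fun i : Fin n => Icc (l (i+1)) (l i)),
          (vandermonde (fun i : Fin n => xc n (ext0 μ) i)).det := by
      rw [cnt]; push_cast; rw [Finset.mul_sum]
      apply Finset.sum_congr rfl
      intro μ hμ
      rw [ih _ (ext0_anti hμ), mul_assoc]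
    have h2 := box_sum (n := n) l hl (fun (i : Fin n) x => x^((i:ℕ)+1))
      (fun i x => ((i:ℕ)+1) * (1 * (q i).eval x)) (fun i x => by rw [(hpq i x).2, one_mul])
    have h3 : ∀ μ : Fin n → ℕ, _ = _ := fun μ => det_MD (fun i : Fin n => q i) (fun i => hq i) (fun _ => 1)
      (fun j : Fin n => xc n (ext0 μ) j) (fun i => ((i:ℕ):ℚ)+1)
    simp only [h3] at h2
    simp only [prod_const_one, one_mul] at h2
    rw [← Finset.mul_sum, prod_fact] at h2
    have h4 := det_grow (fun (i : Fin n) (j : Fin (n+1)) => (xc (n+1) l j)^((i:ℕ)+1))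
    simp only [Fin.val_castSucc, Fin.val_succ] at h4
    rw [h4] at h2
    have h5 : (Matrix.of fun j i : Fin (n+1) =>
          (Fin.cons 1 (fun i : Fin n => (xc (n+1) l j)^((i:ℕ)+1)) : Fin (n+1) → ℚ) i)
        = vandermonde (fun i : Fin (n+1) => xc (n+1) l i) := by
      ext j i
      refine Fin.cases ?_ (fun i => ?_) i <;> simp [vandermonde_apply]
    rw [h5] at h2
    rw [h1, eps, mul_assoc (eps n), ← h2]
    have : cT n = cT (n+1) * n.factorial := by
      unfold cT
      rw [Finset.prod_range_succ, mul_assoc, one_div_mul_cancel (by positivity), mul_one]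
    rw [this]; ring

theorem cnt_trap (k : ℕ) :
    (∀ l : ℕ → ℕ, (∀ i, l (i+1) ≤ l i) → (∀ i, k ≤ i → l i = 0) →
    (cnt (· / 2) (2*k) l : ℚ) = cE k * (eps k * (vandermonde (fun i : Fin k => xc (2*k) l i ^ 2)).det)) ∧
    (∀ l : ℕ → ℕ, (∀ i, l (i+1) ≤ l i) → (∀ i, k ≤ i → l i = 0) →
    (cnt (· / 2) (2*k+1) l : ℚ) = cO k * (eps k * ((∏ i : Fin k, xc (2*k+1) l i) *
      (vandermonde (fun i : Fin k => xc (2*k+1) l i ^ 2)).det))) := by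
  have odd_of_even : ∀ k, (∀ l : ℕ → ℕ, (∀ i, l (i+1) ≤ l i) → (∀ i, k ≤ i → l i = 0) →
    (cnt (· / 2) (2*k) l : ℚ) = cE k * (eps k * (vandermonde (fun i : Fin k => xc (2*k) l i ^ 2)).det)) →
    (∀ l : ℕ → ℕ, (∀ i, l (i+1) ≤ l i) → (∀ i, k ≤ i → l i = 0) →
    (cnt (· / 2) (2*k+1) l : ℚ) = cO k * (eps k * ((∏ i : Fin k, xc (2*k+1) l i) *
      (vandermonde (fun i : Fin k => xc (2*k+1) l i ^ 2)).det))) := by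
    intro k ih l hl hs
    choose p q hp hq hpq using exists_cd
    have hk : 2 * k / 2 = k := by omega
    have h1 : (cnt (· / 2) (2*k+1) l : ℚ) = cE k * eps k *
        ∑ μ ∈ Fintype.piFinset (fun i : Fin k => Icc (l (i+1)) (l i)),
          (vandermonde (fun i : Fin k => xc (2*k) (ext0 μ) i ^ 2)).det := by
      rw [cnt]; rw [hk]; push_cast; rw [Finset.mul_sum]
      apply Finset.sum_congr rfl
      intro μ hμ
      rw [ih _ (ext0_anti hμ) (ext0_supp μ), mul_assoc]
    have h2 := box_sum (n := 2*k) l hl (fun (i : Fin k) x => x^(2*(i:ℕ)+1))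
      (fun i x => (2*(i:ℕ)+1) * (1 * (q i).eval (x^2))) (fun i x => by rw [(hpq i x).2, one_mul])
    have h3 : ∀ μ : Fin k → ℕ, _ = _ := fun μ => det_MD (fun i : Fin k => q i) (fun i => hq i) (fun _ => 1)
      (fun j : Fin k => xc (2*k) (ext0 μ) j ^ 2) (fun i => 2*((i:ℕ):ℚ)+1)
    simp only [h3] at h2
    simp only [prod_const_one, one_mul] at h2
    rw [← Finset.mul_sum] at h2
    have h4 := det_stay (fun (i : Fin k) (j : Fin (k+1)) => (xc (2*k+1) l j)^(2*(i:ℕ)+1))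
      (by
        intro i
        have : xc (2*k+1) l k = 0 := by
          simp [xc, hs k le_rfl]
        simp [this])
    simp only [Fin.val_castSucc, Fin.val_succ] at h4
    rw [h4] at h2
    have h5 : (Matrix.of fun j i : Fin k => (xc (2*k+1) l j)^(2*(i:ℕ)+1)).det
        = (∏ i : Fin k, xc (2*k+1) l i) *
      (vandermonde (fun i : Fin k => xc (2*k+1) l i ^ 2)).det := by
      rw [← det_mul_column]
      congr 1
      ext j i
      simp only [Matrix.of_apply, vandermonde_apply]
      rw [← pow_mul, pow_succ]; ring
    rw [h5] at h2
    rw [h1, ← h2, cE_cO]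
    ring
  have even_of_odd : ∀ k, (∀ l : ℕ → ℕ, (∀ i, l (i+1) ≤ l i) → (∀ i, k ≤ i → l i = 0) →
    (cnt (· / 2) (2*k+1) l : ℚ) = cO k * (eps k * ((∏ i : Fin k, xc (2*k+1) l i) *
      (vandermonde (fun i : Fin k => xc (2*k+1) l i ^ 2)).det))) →
     (∀ l : ℕ → ℕ, (∀ i, l (i+1) ≤ l i) → (∀ i, k+1 ≤ i → l i = 0) →
    (cnt (· / 2) (2*(k+1)) l : ℚ) = cE (k+1) * (eps (k+1) *
      (vandermonde (fun i : Fin (k+1) => xc (2*(k+1)) l i ^ 2)).det)) := by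
    intro k ih l hl hs
    choose p q hp hq hpq using exists_ae
    have hk : (2 * k + 1) / 2 = k := by omega
    have h1 : (cnt (· / 2) (2*k+1+1) l : ℚ) = cO k * eps k *
        ∑ μ ∈ Fintype.piFinset (fun i : Fin k => Icc (l (i+1)) (l i)),
          ((∏ i : Fin k, xc (2*k+1) (ext0 μ) i) *
          (vandermonde (fun i : Fin k => xc (2*k+1) (ext0 μ) i ^ 2)).det) := by
      rw [cnt]; rw [hk]; push_cast; rw [Finset.mul_sum]
      apply Finset.sum_congr rfl
      intro μ hμ
      rw [ih _ (ext0_anti hμ) (ext0_supp μ), mul_assoc]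
    have h2 := box_sum (n := 2*k+1) l hl (fun (i : Fin k) x => x^(2*(i:ℕ)+2))
      (fun i x => (2*(i:ℕ)+2) * (x * (q i).eval (x^2))) (fun i x => (hpq i x).2)
    have h3 : ∀ μ : Fin k → ℕ, _ = _ := fun μ => det_MD (fun i : Fin k => q i) (fun i => hq i)
      (fun j : Fin k => xc (2*k+1) (ext0 μ) j)
      (fun j : Fin k => xc (2*k+1) (ext0 μ) j ^ 2) (fun i => 2*((i:ℕ):ℚ)+2)
    simp only [h3] at h2
    rw [← Finset.mul_sum] at h2
    have h4 := det_grow (fun (i : Fin k) (j : Fin (k+1)) => (xc (2*k+1+1) l j)^(2*(i:ℕ)+2))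
    simp only [Fin.val_castSucc, Fin.val_succ] at h4
    rw [h4] at h2
    have h5 : (Matrix.of fun j i : Fin (k+1) =>
          (Fin.cons 1 (fun i : Fin k => (xc (2*k+1+1) l j)^(2*(i:ℕ)+2)) : Fin (k+1) → ℚ) i)
        = vandermonde (fun i : Fin (k+1) => xc (2*k+1+1) l i ^ 2) := by
      ext j i
      refine Fin.cases ?_ (fun i => ?_) i
      · simp [vandermonde_apply]
      · simp [vandermonde_apply, ← pow_mul, mul_add]
    rw [h5] at h2
    have e : 2 * (k+1) = 2*k+1+1 := by ring
    rw [e, h1, eps, mul_assoc (eps k), ← h2, cO_cE]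
    ring
  induction k with
  | zero =>
    have h0 : ∀ l : ℕ → ℕ, (∀ i, l (i+1) ≤ l i) → (∀ i, 0 ≤ i → l i = 0) →
      (cnt (· / 2) (2*0) l : ℚ) = cE 0 * (eps 0 * (vandermonde (fun i : Fin 0 => xc (2*0) l i ^ 2)).det) := by
      intro l _ _; simp [cnt, cE, eps]
    exact ⟨h0, odd_of_even 0 h0⟩
  | succ k ih =>
    have := even_of_odd k ih.2
    exact ⟨this, odd_of_even _ this⟩

end part3
end SCP

namespace SCP
open Matrix Finset Polynomial

section part4

theorem block_even {m : ℕ} (v : Fin (2*m) → ℚ) (x : Fin m → ℚ)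
    (h1 : ∀ (i : Fin m) (h : (i:ℕ) < 2*m), v ⟨i, h⟩ = x i)
    (h2 : ∀ (i : Fin m) (h : 2*m-1-(i:ℕ) < 2*m), v ⟨2*m-1-i, h⟩ = - x i) :
    |(vandermonde v).det| = 2^m * |∏ i, x i| * (vandermonde (fun i => x i ^ 2)).det ^ 2 := by
  let r : Fin m ⊕ Fin m → Fin (2*m) := Sum.elim (fun i => ⟨i, by omega⟩) (fun i => ⟨2*m-1-i, by omega⟩)
  let c : Fin m ⊕ Fin m → Fin (2*m) := Sum.elim (fun i => ⟨2*i, by omega⟩) (fun i => ⟨2*i+1, by omega⟩)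
  have hcard : Fintype.card (Fin m ⊕ Fin m) = Fintype.card (Fin (2*m)) := by simp; omega
  have hr : Function.Bijective r := by
    rw [Fintype.bijective_iff_injective_and_card]
    refine ⟨?_, hcard⟩
    rintro (i|i) (j|j) hij <;> simp [r, Fin.ext_iff] at hij ⊢ <;> omega
  have hc : Function.Bijective c := by
    rw [Fintype.bijective_iff_injective_and_card]
    refine ⟨?_, hcard⟩
    rintro (i|i) (j|j) hij <;> simp [c, Fin.ext_iff] at hij ⊢ <;> omega
  rw [← abs_det_submatrix_equiv_equiv (Equiv.ofBijective r hr) (Equiv.ofBijective c hc)]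
  set E := vandermonde (fun i => x i ^ 2)
  set O : Matrix (Fin m) (Fin m) ℚ := Matrix.of fun i j => x i * E i j
  have hO : O.det = (∏ i, x i) * E.det := det_mul_column _ _
  have hM : (vandermonde v).submatrix (Equiv.ofBijective r hr) (Equiv.ofBijective c hc)
      = fromBlocks 1 0 1 1 * fromBlocks E O 0 ((-2:ℚ) • O) := by
    rw [fromBlocks_multiply]
    ext (i|i) (j|j) <;>
    simp [r, c, vandermonde_apply, h1, h2, E, O, pow_mul, pow_succ] <;> ring
  rw [hM, det_mul, det_fromBlocks_zero₁₂, det_fromBlocks_zero₂₁, det_smul, hO]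
  simp only [det_one, one_mul, Fintype.card_fin, abs_mul, abs_pow, abs_neg, Nat.abs_ofNat]
  rw [← sq_abs E.det]; ring

theorem block_odd {m : ℕ} (v : Fin (2*m+1) → ℚ) (x : Fin m → ℚ)
    (h0 : ∀ h : m < 2*m+1, v ⟨m, h⟩ = 0)
    (h1 : ∀ (i : Fin m) (h : (i:ℕ) < 2*m+1), v ⟨i, h⟩ = x i)
    (h2 : ∀ (i : Fin m) (h : 2*m-(i:ℕ) < 2*m+1), v ⟨2*m-i, h⟩ = - x i) :
    |(vandermonde v).det| = 2^m * |∏ i, x i|^3 * (vandermonde (fun i => x i ^ 2)).det ^ 2 := by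
  let r : Fin (m+1) ⊕ Fin m → Fin (2*m+1) :=
    Sum.elim (Fin.cons ⟨m, by omega⟩ (fun i => ⟨i, by omega⟩)) (fun i => ⟨2*m-i, by omega⟩)
  let c : Fin (m+1) ⊕ Fin m → Fin (2*m+1) := Sum.elim (fun i => ⟨2*i, by omega⟩) (fun i => ⟨2*i+1, by omega⟩)
  have hcard : Fintype.card (Fin (m+1) ⊕ Fin m) = Fintype.card (Fin (2*m+1)) := by simp; omega
  have hr : Function.Bijective r := by
    rw [Fintype.bijective_iff_injective_and_card]
    refine ⟨?_, hcard⟩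
    rintro (i|i) (j|j) hij
    · revert hij
      refine Fin.cases ?_ (fun i => ?_) i <;> refine Fin.cases ?_ (fun j => ?_) j <;>
        simp [r, Fin.ext_iff] <;> omega
    · revert hij
      refine Fin.cases ?_ (fun i => ?_) i <;> simp [r, Fin.ext_iff] <;> omega
    · revert hij
      refine Fin.cases ?_ (fun j => ?_) j <;> simp [r, Fin.ext_iff] <;> omega
    · simp [r, Fin.ext_iff] at hij ⊢ ; omega
  have hc : Function.Bijective c := by
    rw [Fintype.bijective_iff_injective_and_card]
    refine ⟨?_, hcard⟩
    rintro (i|i) (j|j) hij <;> simp [c, Fin.ext_iff] at hij ⊢ <;> omega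
  rw [← abs_det_submatrix_equiv_equiv (Equiv.ofBijective r hr) (Equiv.ofBijective c hc)]
  set E := vandermonde (fun i => x i ^ 2)
  set E' := vandermonde (Fin.cons 0 (fun i => x i ^ 2) : Fin (m+1) → ℚ) with hE'
  set O : Matrix (Fin m) (Fin m) ℚ := Matrix.of fun i j => x i * E i j
  have hO : O.det = (∏ i, x i) * E.det := det_mul_column _ _
  have hEd : E'.det = (∏ i, x i)^2 * E.det := by
    rw [hE', det_vandermonde, Fin.prod_univ_succ, det_vandermonde]
    congr 1
    · rw [← Finset.prod_pow, Fin.prod_Ioi_zero]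
      simp
    · apply Finset.prod_congr rfl; intro i _
      rw [Fin.prod_Ioi_succ]
      simp
  let P : Matrix (Fin m) (Fin (m+1)) ℚ := Matrix.of fun i j => if j = i.succ then 1 else 0
  let O' : Matrix (Fin (m+1)) (Fin m) ℚ := Matrix.of fun i j => (Fin.cons 0 (fun i => O i j) : Fin (m+1) → ℚ) i
  have hE0 : ∀ j, E' 0 j = 0 ^ (j:ℕ) := fun j => rfl
  have hEs : ∀ i j, E' (Fin.succ i) j = (x i ^ 2) ^ (j:ℕ) := fun i j => rfl
  have hM : (vandermonde v).submatrix (Equiv.ofBijective r hr) (Equiv.ofBijective c hc)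
      = fromBlocks 1 0 P 1 * fromBlocks E' O' 0 ((-2:ℚ) • O) := by
    rw [fromBlocks_multiply]
    ext (i|i) (j|j)
    · refine Fin.cases ?_ (fun i => ?_) i <;>
      simp [r, c, vandermonde_apply, h0, h1, hE0, hEs, pow_mul]
    · refine Fin.cases ?_ (fun i => ?_) i <;>
      simp [r, c, vandermonde_apply, h0, h1, O', E, O, pow_mul, pow_succ]
      ring
    · simp [r, c, vandermonde_apply, h2, hEs, P, pow_mul, Matrix.mul_apply]
    · simp [r, c, vandermonde_apply, h2, O', P, E, O, pow_mul, pow_succ, Matrix.mul_apply]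
      ring
  rw [hM, det_mul, det_fromBlocks_zero₁₂, det_fromBlocks_zero₂₁, det_smul, hO, hEd]
  simp only [det_one, one_mul, Fintype.card_fin, abs_mul, abs_pow, abs_neg, Nat.abs_ofNat]
  rw [← sq_abs E.det]; ring

def AA (m b : ℕ) : Finset (Fin m → ℕ) :=
  by classical exact (Fintype.piFinset fun _ : Fin m => range (b+1)).filter (fun μ => Antitone μ)

theorem mem_AA {m b : ℕ} {μ : Fin m → ℕ} : μ ∈ AA m b ↔ (∀ i, μ i ≤ b) ∧ Antitone μ := by
  simp [AA]

theorem sum_AA {m b : ℕ} (G : (Fin m → ℕ) → ℚ) :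
    ∑ μ ∈ AA m b, G μ = ∑ f ∈ SM m (b+m), G (fun i => (f i.rev : ℕ) - (i.rev : ℕ)) := by
  symm
  have hge : ∀ f : Fin m → Fin (b+m), StrictMono f → ∀ i : Fin m, (i:ℕ) ≤ f i := by
    intro f hf
    have : ∀ n (h : n < m), n ≤ (f ⟨n, h⟩ : ℕ) := by
      intro n
      induction n with
      | zero => intro h; exact Nat.zero_le _
      | succ n ih =>
        intro h
        have h1 := ih (by omega)
        have h2 : f ⟨n, by omega⟩ < f ⟨n+1, h⟩ := hf (by simp [Fin.lt_def])
        rw [Fin.lt_def] at h2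
        omega
    intro i; exact this i i.2
  have hstep : ∀ f : Fin m → Fin (b+m), StrictMono f → ∀ d (i j : Fin m), (j:ℕ) = i + d →
      (f i : ℕ) + d ≤ f j := by
    intro f hf d
    induction d with
    | zero => intro i j h; have : i = j := by ext; omega
              subst this; simp
    | succ d ih =>
      intro i j h
      have h1 := ih i ⟨i+d, by omega⟩ rfl
      have h2 : f ⟨i+d, by omega⟩ < f j := hf (by rw [Fin.lt_def]; simp; omega)
      rw [Fin.lt_def] at h2
      omega
  refine Finset.sum_bij (fun f _ => fun i => (f i.rev : ℕ) - (i.rev : ℕ)) ?_ ?_ ?_ ?_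
  · intro f hf
    rw [mem_SM] at hf
    rw [mem_AA]
    constructor
    · intro i
      have h0 : 0 < m := i.pos
      have h1 := hstep f hf i i.rev ⟨m-1, by omega⟩ (by rw [Fin.val_rev]; simp; omega)
      have h2 := (f ⟨m-1, by omega⟩).2
      rw [Fin.val_rev] at *
      omega
    · intro i j hij
      rw [Fin.le_def] at hij
      have h1 := hstep f hf (j-i) j.rev i.rev (by rw [Fin.val_rev, Fin.val_rev]; omega)
      simp only [Fin.val_rev] at *
      omega
  · intro f hf g hg h
    rw [mem_SM] at hf hg
    ext i
    have h1 := congrFun h i.rev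
    have h2 := hge f hf i
    have h3 := hge g hg i
    simp only [Fin.rev_rev] at h1
    omega
  · intro μ hμ
    rw [mem_AA] at hμ
    refine ⟨fun j => ⟨μ j.rev + j, by have := hμ.1 j.rev; omega⟩, ?_, ?_⟩
    · rw [mem_SM]
      intro i j hij
      rw [Fin.lt_def] at *
      have := hμ.2 (Fin.rev_le_rev.mpr (le_of_lt hij : i ≤ j))
      simp only
      omega
    · funext i
      simp
  · intro f hf; rfl

theorem detV_nonneg {m : ℕ} (v : Fin m → ℚ) (hv : Monotone v) : 0 ≤ (vandermonde v).det := by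
  rw [det_vandermonde]
  refine prod_nonneg fun i _ => prod_nonneg fun j hj => ?_
  rw [Finset.mem_Ioi] at hj
  exact sub_nonneg.mpr (hv hj.le)

theorem abs_detV_rev {m : ℕ} (v : Fin m → ℚ) :
    |(vandermonde (fun i => v i.rev)).det| = |(vandermonde v).det| := by
  rw [← abs_det_submatrix_equiv_equiv Fin.revPerm (Equiv.refl _) (vandermonde v)]
  rfl

/-- self-complementary extension -/
def sym (a b : ℕ) (l : ℕ → ℕ) : ℕ → ℕ := fun i => if i < a then b + l i - l (a-1-i) else 0

theorem sym_anti {a b : ℕ} {l : ℕ → ℕ} (h : ∀ i, l (i+1) ≤ l i) : ∀ i, sym a b l (i+1) ≤ sym a b l i := by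
  intro i
  unfold sym
  split_ifs with h1 h2 h2
  · have := h i
    have := h (a-1-(i+1))
    have e : a-1-(i+1)+1 = a-1-i := by omega
    rw [e] at this
    omega
  · omega
  · omega
  · omega

theorem ext0_anti' {m b : ℕ} {μ : Fin m → ℕ} (h : μ ∈ AA m b) : ∀ i, ext0 μ (i+1) ≤ ext0 μ i := by
  rw [mem_AA] at h
  intro i
  unfold ext0
  split_ifs with h1 h2 h2
  · exact h.2 (by simp [Fin.le_def])
  · omega
  · omega
  · omega

theorem ext0_le {m b : ℕ} {μ : Fin m → ℕ} (h : μ ∈ AA m b) : ∀ i, ext0 μ i ≤ b := by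
  rw [mem_AA] at h
  intro i
  unfold ext0
  split_ifs with h1
  · exact h.1 _
  · omega

theorem cnt_abs_tri {n : ℕ} {l : ℕ → ℕ} (hl : ∀ i, l (i+1) ≤ l i) (c : ℚ) :
    (cnt id n l : ℚ) = cT n * |(vandermonde (fun i : Fin n => xc n l i - c)).det| := by
  have h := cnt_tri n l hl
  have h2 : (0:ℚ) ≤ cnt id n l := Nat.cast_nonneg _
  rw [← abs_of_nonneg h2, h, abs_mul, abs_mul, abs_eps, one_mul, abs_of_pos (cT_pos n),
    det_vandermonde_sub]

theorem ssc_even {m b : ℕ} {μ : Fin m → ℕ} (h : μ ∈ AA m b) :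
    (cnt (· / 2) (2*m) (ext0 μ) : ℚ)
      = cE m * |(vandermonde (fun i : Fin m => xc (2*m) (ext0 μ) i ^ 2)).det| := by
  have h1 := (cnt_trap m).1 _ (ext0_anti' h) (ext0_supp μ)
  have h2 : (0:ℚ) ≤ cnt (· / 2) (2*m) (ext0 μ) := Nat.cast_nonneg _
  rw [← abs_of_nonneg h2, h1, abs_mul, abs_mul, abs_eps, one_mul, abs_of_pos (cE_pos m)]

theorem ssc_odd {m b : ℕ} {μ : Fin m → ℕ} (h : μ ∈ AA m b) :
    (cnt (· / 2) (2*m+1) (ext0 μ) : ℚ)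
      = cO m * (|∏ i : Fin m, xc (2*m+1) (ext0 μ) i| *
        |(vandermonde (fun i : Fin m => xc (2*m+1) (ext0 μ) i ^ 2)).det|) := by
  have h1 := (cnt_trap m).2 _ (ext0_anti' h) (ext0_supp μ)
  have h2 : (0:ℚ) ≤ cnt (· / 2) (2*m+1) (ext0 μ) := Nat.cast_nonneg _
  rw [← abs_of_nonneg h2, h1, abs_mul, abs_mul, abs_eps, one_mul, abs_mul, abs_of_pos (cO_pos m)]

theorem sc_even {m b : ℕ} {μ : Fin m → ℕ} (h : μ ∈ AA m b) :
    (cnt id (2*m) (sym (2*m) b (ext0 μ)) : ℚ)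
      = cT (2*m) * (2^m * |∏ i : Fin m, xc (2*m) (ext0 μ) i| *
       |(vandermonde (fun i : Fin m => xc (2*m) (ext0 μ) i ^ 2)).det|^2) := by
  rw [cnt_abs_tri (sym_anti (ext0_anti' h)) b, block_even _ (fun i : Fin m => xc (2*m) (ext0 μ) i), sq_abs]
  · intro i hi
    have h1 := ext0_supp μ (2*m-1-i) (by omega)
    simp only [xc, sym, hi, if_true, h1, Nat.sub_zero]
    push_cast; ring
  · intro i hi
    have h1 := ext0_supp μ (2*m-1-i) (by omega)
    have h2 : 2*m-1-(2*m-1-(i:ℕ)) = i := by omega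
    simp only [xc, sym, hi, if_true, h1, h2]
    rw [Nat.cast_sub (by have := ext0_le h i; omega), Nat.cast_sub (by omega), Nat.cast_sub (by omega)]
    push_cast; ring

theorem sc_odd {m b : ℕ} {μ : Fin m → ℕ} (h : μ ∈ AA m b) :
    (cnt id (2*m+1) (sym (2*m+1) b (ext0 μ)) : ℚ)
      = cT (2*m+1) * (2^m * |∏ i : Fin m, xc (2*m+1) (ext0 μ) i|^3 *
       |(vandermonde (fun i : Fin m => xc (2*m+1) (ext0 μ) i ^ 2)).det|^2) := by
  rw [cnt_abs_tri (sym_anti (ext0_anti' h)) b, block_odd _ (fun i : Fin m => xc (2*m+1) (ext0 μ) i), sq_abs]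
  · intro hi
    have h1 := ext0_supp μ m (by omega)
    have h2 : 2*m+1-1-m = m := by omega
    simp only [xc, sym, hi, if_true, h1, h2]
    push_cast; simp
  · intro i hi
    have h1 := ext0_supp μ (2*m+1-1-i) (by omega)
    simp only [xc, sym, hi, if_true, h1, Nat.sub_zero]
    push_cast; ring
  · intro i hi
    have h1 := ext0_supp μ (2*m-i) (by omega)
    have h2 : 2*m+1-1-(2*m-(i:ℕ)) = i := by omega
    simp only [xc, sym, hi, if_true, h1, h2]
    rw [Nat.cast_sub (by have := ext0_le h i; omega), Nat.cast_sub (by omega)]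
    push_cast; ring

theorem Lm_tel {N : ℕ} (φ : ℕ → ℚ) (F : ℕ → ℚ) (hF : ∀ n, F (n+1) - F n = φ n) (x : Fin N) :
    ∑ y, Lm ℚ N x y * φ y = F (x+1) + F x - 2 * F 0 := by
  have h1 : ∀ n, ∑ y ∈ range n, φ y = F n - F 0 := by
    intro n; simp only [← hF]; exact Finset.sum_range_sub F n
  have h2 : ∀ y : Fin N, Lm ℚ N x y * φ y
      = (fun y => (if y < (x:ℕ) then φ y else 0) + (if y < (x:ℕ)+1 then φ y else 0)) (y:ℕ) := by
    intro y
    simp only [Lm, Matrix.of_apply, Fin.lt_def, Fin.ext_iff]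
    split_ifs <;> first | omega | ring
  rw [Finset.sum_congr rfl (fun y _ => h2 y), Fin.sum_univ_eq_sum_range (fun y => (if y < (x:ℕ) then φ y else 0) + (if y < (x:ℕ)+1 then φ y else 0)) N,
    Finset.sum_add_distrib,
    ← Finset.sum_filter, ← Finset.sum_filter]
  have e1 : (range N).filter (fun y => y < (x:ℕ)) = range x := by ext y; simp; omega
  have e2 : (range N).filter (fun y => y < (x:ℕ)+1) = range (x+1) := by ext y; simp; omega
  rw [e1, e2, h1, h1]; ring

theorem Y_mono {m N : ℕ} {f : Fin m → Fin N} (hf : StrictMono f) (c : ℚ) (hc : 0 ≤ c) :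
    Monotone (fun j => (((f j : ℕ) : ℚ) + c)^2) := by
  intro i j hij
  have h1 : ((f i : ℕ):ℚ) ≤ (f j : ℕ) := by exact_mod_cast hf.monotone hij
  have h2 : (0:ℚ) ≤ (f i : ℕ) := Nat.cast_nonneg _
  simp only
  nlinarith

theorem LA_even (m N : ℕ) :
    (∏ i : Fin m, (2 * ((i:ℕ):ℚ) + 1)) *
      (∑ f ∈ SM m N, (vandermonde (fun j => (((f j : ℕ):ℚ) + 1/2)^2)).det)^2
    = ∑ f ∈ SM m N, 2^m * (∏ j, (((f j : ℕ):ℚ) + 1/2)) *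
        (vandermonde (fun j => (((f j : ℕ):ℚ) + 1/2)^2)).det ^ 2 := by
  choose c d hc hd hcd using exists_cd
  set P := ∏ i : Fin m, (2 * ((i:ℕ):ℚ) + 1) with hP
  have hP0 : P ≠ 0 := by rw [hP]; exact prod_ne_zero_iff.mpr fun i _ => by positivity
  have h := main_LA (m := m) (N := N)
    (Matrix.of fun i y => (2 * ((i:ℕ):ℚ) + 1) * (1 * (d i).eval ((((y:ℕ):ℚ) + 1/2)^2)))
    (Matrix.of fun i y => 2 * ((((y:ℕ):ℚ) + 1/2) * (c i).eval ((((y:ℕ):ℚ) + 1/2)^2)))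
    (by
      intro i x
      have := Lm_tel (N := N) (fun y => (2 * ((i:ℕ):ℚ) + 1) * (1 * (d i).eval (((y:ℚ) + 1/2)^2)))
        (fun n => (n:ℚ)^(2*(i:ℕ)+1)) (by
          intro n
          have := (hcd i (n + 1/2)).2
          simp only [one_mul]
          rw [← this]; push_cast; ring) x
      simp only [Matrix.of_apply]
      rw [this]
      have h1 := (hcd i ((x:ℕ) + 1/2)).1
      rw [← mul_assoc, ← h1]
      push_cast
      rw [zero_pow (by omega)]; ring)
  have e1 : ∀ f : Fin m → Fin N, ((Matrix.of fun (i : Fin m) (y : Fin N) => (2 * ((i:ℕ):ℚ) + 1) *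
      (1 * (d i).eval ((((y:ℕ):ℚ) + 1/2)^2))).submatrix id f).det
      = P * (vandermonde (fun j => (((f j : ℕ):ℚ) + 1/2)^2)).det := by
    intro f
    rw [← det_transpose]
    have := det_MD (fun i : Fin m => d i) (fun i => hd i) (fun _ => 1)
      (fun j => (((f j : ℕ):ℚ) + 1/2)^2) (fun i => 2 * ((i:ℕ):ℚ) + 1)
    rw [prod_const_one, one_mul] at this
    exact this
  have e2 : ∀ f : Fin m → Fin N, ((Matrix.of fun (i : Fin m) (y : Fin N) => 2 *
      ((((y:ℕ):ℚ) + 1/2) * (c i).eval ((((y:ℕ):ℚ) + 1/2)^2))).submatrix id f).det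
      = 2^m * ((∏ j, (((f j : ℕ):ℚ) + 1/2)) * (vandermonde (fun j => (((f j : ℕ):ℚ) + 1/2)^2)).det) := by
    intro f
    rw [← det_transpose]
    have := det_MD (fun i : Fin m => c i) (fun i => hc i) (fun j => ((f j : ℕ):ℚ) + 1/2)
      (fun j => (((f j : ℕ):ℚ) + 1/2)^2) (fun i => 2)
    rw [prod_const, card_univ, Fintype.card_fin] at this
    exact this
  simp only [e1, e2] at h
  rw [← Finset.mul_sum, mul_pow] at h
  apply mul_left_cancel₀ hP0
  rw [Finset.mul_sum, ← mul_assoc, ← sq, h]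
  apply Finset.sum_congr rfl; intro f _; ring

theorem LA_odd (m N : ℕ) :
    (∏ i : Fin m, (2 * ((i:ℕ):ℚ) + 2)) *
      (∑ f ∈ SM m N, (∏ j, (((f j : ℕ):ℚ) + 1)) * (vandermonde (fun j => (((f j : ℕ):ℚ) + 1)^2)).det)^2
    = ∑ f ∈ SM m N, 2^m * (∏ j, (((f j : ℕ):ℚ) + 1))^3 *
        (vandermonde (fun j => (((f j : ℕ):ℚ) + 1)^2)).det ^ 2 := by
  choose c d hc hd hcd using exists_ae
  set P := ∏ i : Fin m, (2 * ((i:ℕ):ℚ) + 2) with hP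
  have hP0 : P ≠ 0 := by rw [hP]; exact prod_ne_zero_iff.mpr fun i _ => by positivity
  have h := main_LA (m := m) (N := N)
    (Matrix.of fun i y => (2 * ((i:ℕ):ℚ) + 2) * ((((y:ℕ):ℚ) + 1) * (d i).eval ((((y:ℕ):ℚ) + 1)^2)))
    (Matrix.of fun i y => 2 * ((((y:ℕ):ℚ) + 1)^2 * (c i).eval ((((y:ℕ):ℚ) + 1)^2)))
    (by
      intro i x
      have := Lm_tel (N := N) (fun y => (2 * ((i:ℕ):ℚ) + 2) * (((y:ℚ) + 1) * (d i).eval (((y:ℚ) + 1)^2)))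
        (fun n => ((n:ℚ) + 1/2)^(2*(i:ℕ)+2)) (by
          intro n
          have := (hcd i (n + 1)).2
          rw [← this]; push_cast; ring) x
      simp only [Matrix.of_apply]
      rw [this]
      have h1 := (hcd i ((x:ℕ) + 1)).1
      rw [← mul_assoc, ← h1]
      push_cast
      rw [zero_add]; ring)
  have e1 : ∀ f : Fin m → Fin N, ((Matrix.of fun (i : Fin m) (y : Fin N) => (2 * ((i:ℕ):ℚ) + 2) *
      ((((y:ℕ):ℚ) + 1) * (d i).eval ((((y:ℕ):ℚ) + 1)^2))).submatrix id f).det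
      = P * ((∏ j, (((f j : ℕ):ℚ) + 1)) * (vandermonde (fun j => (((f j : ℕ):ℚ) + 1)^2)).det) := by
    intro f
    rw [← det_transpose]
    exact det_MD (fun i : Fin m => d i) (fun i => hd i) (fun j => ((f j : ℕ):ℚ) + 1)
      (fun j => (((f j : ℕ):ℚ) + 1)^2) (fun i => 2 * ((i:ℕ):ℚ) + 2)
  have e2 : ∀ f : Fin m → Fin N, ((Matrix.of fun (i : Fin m) (y : Fin N) => 2 *
      ((((y:ℕ):ℚ) + 1)^2 * (c i).eval ((((y:ℕ):ℚ) + 1)^2))).submatrix id f).det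
      = 2^m * ((∏ j, (((f j : ℕ):ℚ) + 1))^2 * (vandermonde (fun j => (((f j : ℕ):ℚ) + 1)^2)).det) := by
    intro f
    rw [← det_transpose]
    have := det_MD (fun i : Fin m => c i) (fun i => hc i) (fun j => (((f j : ℕ):ℚ) + 1)^2)
      (fun j => (((f j : ℕ):ℚ) + 1)^2) (fun i => 2)
    rw [prod_const, card_univ, Fintype.card_fin, prod_pow] at this
    exact this
  simp only [e1, e2] at h
  rw [← Finset.mul_sum, mul_pow] at h
  apply mul_left_cancel₀ hP0
  rw [Finset.mul_sum, ← mul_assoc, ← sq, h]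
  apply Finset.sum_congr rfl; intro f _; ring

theorem SM_ge {m N : ℕ} {f : Fin m → Fin N} (hf : StrictMono f) (i : Fin m) : (i:ℕ) ≤ f i := by
  have : ∀ n (h : n < m), n ≤ (f ⟨n, h⟩ : ℕ) := by
    intro n
    induction n with
    | zero => intro h; exact Nat.zero_le _
    | succ n ih =>
      intro h
      have h1 := ih (by omega)
      have h2 : f ⟨n, by omega⟩ < f ⟨n+1, h⟩ := hf (by simp [Fin.lt_def])
      rw [Fin.lt_def] at h2
      omega
  exact this i i.2

theorem xc_f {m N a : ℕ} {f : Fin m → Fin N} (hf : StrictMono f) (i : Fin m) :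
    xc a (ext0 (fun i : Fin m => (f i.rev : ℕ) - (i.rev : ℕ))) i
      = ((f i.rev : ℕ):ℚ) + (((a:ℚ) - 1)/2 - m + 1) := by
  have := SM_ge hf i.rev
  simp only [xc, ext0, i.2, dif_pos]
  rw [Nat.cast_sub this, Fin.val_rev, Nat.cast_sub (by omega)]
  push_cast; ring

theorem final_even (m b : ℕ) :
    ∑ μ ∈ AA m b, cnt id (2*m) (sym (2*m) b (ext0 μ))
      = (∑ μ ∈ AA m b, cnt (· / 2) (2*m) (ext0 μ))^2 := by
  have : ((∑ μ ∈ AA m b, cnt id (2*m) (sym (2*m) b (ext0 μ)) : ℕ) : ℚ)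
      = ((∑ μ ∈ AA m b, cnt (· / 2) (2*m) (ext0 μ) : ℕ) : ℚ)^2 := by
    push_cast
    rw [Finset.sum_congr rfl (fun μ h => sc_even h), Finset.sum_congr rfl (fun μ h => ssc_even h),
      sum_AA (fun μ => cT (2*m) * (2^m * |∏ i : Fin m, xc (2*m) (ext0 μ) i| *
       |(vandermonde (fun i : Fin m => xc (2*m) (ext0 μ) i ^ 2)).det|^2)),
      sum_AA (fun μ => cE m * |(vandermonde (fun i : Fin m => xc (2*m) (ext0 μ) i ^ 2)).det|)]
    have e0 : (((2*m:ℕ):ℚ) - 1)/2 - m + 1 = 1/2 := by push_cast; ring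
    have e1 : ∀ f ∈ SM m (b+m), |(vandermonde (fun i : Fin m => xc (2*m)
          (ext0 (fun i : Fin m => (f i.rev : ℕ) - (i.rev : ℕ))) i ^ 2)).det|
        = (vandermonde (fun j => (((f j : ℕ):ℚ) + 1/2)^2)).det := by
      intro f hf
      rw [mem_SM] at hf
      simp only [xc_f hf, e0]
      rw [abs_detV_rev (fun j => (((f j : ℕ):ℚ) + 1/2)^2)]
      exact abs_of_nonneg (detV_nonneg _ (Y_mono hf _ (by norm_num)))
    have e2 : ∀ f ∈ SM m (b+m), |∏ i : Fin m, xc (2*m)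
          (ext0 (fun i : Fin m => (f i.rev : ℕ) - (i.rev : ℕ))) i|
        = ∏ j, (((f j : ℕ):ℚ) + 1/2) := by
      intro f hf
      rw [mem_SM] at hf
      simp only [xc_f hf, e0]
      rw [abs_of_nonneg (prod_nonneg fun i _ => by positivity)]
      exact Equiv.prod_comp Fin.revPerm (fun j => (((f j : ℕ):ℚ) + 1/2))
    rw [Finset.sum_congr rfl (fun f hf => by rw [e1 f hf, e2 f hf]),
      Finset.sum_congr (s₁ := SM m (b+m)) (f := fun f => cE m * _) rfl (fun f hf => by rw [e1 f hf]),
      ← Finset.mul_sum, ← Finset.mul_sum, ← LA_even, cT_even, mul_pow, sq (cE m)]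
    nth_rewrite 3 [cE_cO]
    ring
  exact_mod_cast this

theorem final_odd (m b : ℕ) :
    ∑ μ ∈ AA m b, cnt id (2*m+1) (sym (2*m+1) b (ext0 μ))
      = (∑ μ ∈ AA m b, cnt (· / 2) (2*m+1) (ext0 μ))^2 := by
  have : ((∑ μ ∈ AA m b, cnt id (2*m+1) (sym (2*m+1) b (ext0 μ)) : ℕ) : ℚ)
      = ((∑ μ ∈ AA m b, cnt (· / 2) (2*m+1) (ext0 μ) : ℕ) : ℚ)^2 := by
    push_cast
    rw [Finset.sum_congr rfl (fun μ h => sc_odd h), Finset.sum_congr rfl (fun μ h => ssc_odd h),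
      sum_AA (fun μ => cT (2*m+1) * (2^m * |∏ i : Fin m, xc (2*m+1) (ext0 μ) i|^3 *
       |(vandermonde (fun i : Fin m => xc (2*m+1) (ext0 μ) i ^ 2)).det|^2)),
      sum_AA (fun μ => cO m * (|∏ i : Fin m, xc (2*m+1) (ext0 μ) i| *
        |(vandermonde (fun i : Fin m => xc (2*m+1) (ext0 μ) i ^ 2)).det|))]
    have e0 : (((2*m+1:ℕ):ℚ) - 1)/2 - m + 1 = 1 := by push_cast; ring
    have e1 : ∀ f ∈ SM m (b+m), |(vandermonde (fun i : Fin m => xc (2*m+1)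
          (ext0 (fun i : Fin m => (f i.rev : ℕ) - (i.rev : ℕ))) i ^ 2)).det|
        = (vandermonde (fun j => (((f j : ℕ):ℚ) + 1)^2)).det := by
      intro f hf
      rw [mem_SM] at hf
      simp only [xc_f hf, e0]
      rw [abs_detV_rev (fun j => (((f j : ℕ):ℚ) + 1)^2)]
      exact abs_of_nonneg (detV_nonneg _ (Y_mono hf _ (by norm_num)))
    have e2 : ∀ f ∈ SM m (b+m), |∏ i : Fin m, xc (2*m+1)
          (ext0 (fun i : Fin m => (f i.rev : ℕ) - (i.rev : ℕ))) i|
        = ∏ j, (((f j : ℕ):ℚ) + 1) := by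
      intro f hf
      rw [mem_SM] at hf
      simp only [xc_f hf, e0]
      rw [abs_of_nonneg (prod_nonneg fun i _ => by positivity)]
      exact Equiv.prod_comp Fin.revPerm (fun j => (((f j : ℕ):ℚ) + 1))
    rw [Finset.sum_congr rfl (fun f hf => by rw [e1 f hf, e2 f hf]),
      Finset.sum_congr (s₁ := SM m (b+m)) (f := fun f => cO m * _) rfl (fun f hf => by rw [e1 f hf, e2 f hf]),
      ← Finset.mul_sum, ← Finset.mul_sum, ← LA_odd, cT_odd, mul_pow, sq (cO m)]
    nth_rewrite 2 [cO_cE]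
    ring
  exact_mod_cast this

theorem final_cnt (a b : ℕ) :
    ∑ μ ∈ AA (a/2) b, cnt id a (sym a b (ext0 μ))
      = (∑ μ ∈ AA (a/2) b, cnt (· / 2) a (ext0 μ))^2 := by
  obtain ⟨m, h | h⟩ := Nat.even_or_odd' a
  · have e : a/2 = m := by omega
    rw [e, h]; exact final_even m b
  · have e : a/2 = m := by omega
    rw [e, h]; exact final_odd m b

end part4
end SCP

namespace SCP
open Matrix Finset Polynomial

section part5

def IsPat (s : ℕ → ℕ) (n : ℕ) (l : ℕ → ℕ) (r : ℕ → ℕ → ℕ) : Prop :=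
  r n = l ∧ (∀ k, n < k → ∀ i, r k i = 0) ∧ (∀ k < n, ∀ i, s k ≤ i → r k i = 0) ∧
    (∀ k < n, ∀ i < s k, r (k+1) (i+1) ≤ r k i ∧ r k i ≤ r (k+1) i)

theorem ext0_apply {k : ℕ} (μ : Fin k → ℕ) (i : Fin k) : ext0 μ i = μ i := by
  simp [ext0]

theorem card_pat (s : ℕ → ℕ) (n : ℕ) : ∀ l : ℕ → ℕ,
    Finite {r // IsPat s n l r} ∧ Nat.card {r // IsPat s n l r} = cnt s n l := by
  induction n with
  | zero =>
    intro l
    have : Unique {r // IsPat s 0 l r} :=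
      { default := ⟨fun k => if k = 0 then l else 0, by simp, by
          intro k hk i; simp [show k ≠ 0 by omega], by intro k hk; omega, by intro k hk; omega⟩
        uniq := by
          rintro ⟨r, h1, h2, -, -⟩
          ext k i
          rcases Nat.eq_zero_or_pos k with h | h
          · subst h; simp [h1]
          · simp [h2 k h, show k ≠ 0 by omega] }
    exact ⟨inferInstance, by simp [cnt]⟩
  | succ n ih =>
    intro l
    let B := Fintype.piFinset (fun i : Fin (s n) => Icc (l (i+1)) (l i))
    have hfin : ∀ μ : B, Finite {r // IsPat s n (ext0 (μ : Fin (s n) → ℕ)) r} := fun μ => (ih _).1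
    let F : (Σ μ : B, {r // IsPat s n (ext0 (μ : Fin (s n) → ℕ)) r}) → {r // IsPat s (n+1) l r} :=
      fun p => ⟨fun k => if k = n+1 then l else p.2.1 k, by
        obtain ⟨⟨μ, hμ⟩, ⟨r, h1, h2, h3, h4⟩⟩ := p
        rw [Fintype.mem_piFinset] at hμ
        refine ⟨by simp, ?_, ?_, ?_⟩
        · intro k hk i
          simp only [show k ≠ n+1 by omega, if_false]
          exact h2 k (by omega) i
        · intro k hk i hi
          simp only [show k ≠ n+1 by omega, if_false]
          rcases Nat.lt_or_ge k n with h | h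
          · exact h3 k h i hi
          · have : k = n := by omega
            subst this; rw [h1]; exact ext0_supp _ _ hi
        · intro k hk i hi
          simp only [show k ≠ n+1 by omega, if_false]
          rcases Nat.lt_or_ge k n with h | h
          · simp only [show k + 1 ≠ n+1 by omega, if_false]
            exact h4 k h i hi
          · have : k = n := by omega
            subst this
            simp only [if_true]
            rw [h1]
            have e := ext0_apply μ ⟨i, hi⟩
            simp only at e
            rw [e]
            exact Finset.mem_Icc.mp (hμ ⟨i, hi⟩)⟩
    have hF : Function.Bijective F := by
      constructor
      · rintro ⟨⟨μ, hμ⟩, ⟨r, h⟩⟩ ⟨⟨μ', hμ'⟩, ⟨r', h'⟩⟩ e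
        have e1 : ∀ k, k ≠ n+1 → r k = r' k := by
          intro k hk
          have := congrFun (congrArg Subtype.val e) k
          simpa [F, hk] using this
        have e2 : r = r' := by
          funext k
          by_cases hk : k = n+1
          · subst hk; funext i; rw [h.2.1 _ (by omega), h'.2.1 _ (by omega)]
          · exact e1 k hk
        subst e2
        have e3 : μ = μ' := by
          funext i
          rw [← ext0_apply μ, ← ext0_apply μ', ← h.1, ← h'.1]
        subst e3
        rfl
      · rintro ⟨r, h1, h2, h3, h4⟩
        have hext : r n = ext0 (fun i : Fin (s n) => r n i) := by
          funext i
          unfold ext0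
          split_ifs with hi
          · rfl
          · exact h3 n (by omega) i (by omega)
        refine ⟨⟨⟨fun i => r n i, ?_⟩, ⟨fun k => if k = n+1 then 0 else r k, ?_, ?_, ?_, ?_⟩⟩, ?_⟩
        · rw [Fintype.mem_piFinset]; intro i
          rw [Finset.mem_Icc, ← h1]; exact h4 n (by omega) i i.2
        · simp [← hext]
        · intro k hk i
          by_cases hk' : k = n+1
          · simp [hk']
          · simp only [hk', if_false]; exact h2 k (by omega) i
        · intro k hk i hi
          simp only [show k ≠ n+1 by omega, if_false]
          exact h3 k (by omega) i hi
        · intro k hk i hi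
          simp only [show k ≠ n+1 by omega, show k+1 ≠ n+1 by omega, if_false]
          exact h4 k (by omega) i hi
        · apply Subtype.ext
          funext k
          by_cases hk' : k = n+1
          · simp [F, hk', h1]
          · simp [F, hk']
    refine ⟨Finite.of_surjective F hF.2, ?_⟩
    rw [← Nat.card_congr (Equiv.ofBijective F hF), Nat.card_sigma, cnt]
    rw [Finset.sum_congr rfl (fun (μ : B) _ => (ih (ext0 (μ : Fin (s n) → ℕ))).2)]
    exact Finset.sum_coe_sort B (fun μ => cnt s n (ext0 μ))

theorem card_union {m b : ℕ} (s : ℕ → ℕ) (a : ℕ) (S : (Fin m → ℕ) → (ℕ → ℕ))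
    (hS : ∀ μ ∈ AA m b, ∀ μ' ∈ AA m b, S μ = S μ' → μ = μ') (Q : (ℕ → ℕ → ℕ) → Prop)
    (hQ : ∀ r, Q r ↔ ∃ μ ∈ AA m b, IsPat s a (S μ) r) :
    Nat.card {r // Q r} = ∑ μ ∈ AA m b, cnt s a (S μ) := by
  have hfin : ∀ μ : AA m b, Finite {r // IsPat s a (S μ) r} := fun μ => (card_pat _ _ _).1
  let F : (Σ μ : AA m b, {r // IsPat s a (S μ) r}) → {r // Q r} :=
    fun p => ⟨p.2.1, (hQ _).mpr ⟨p.1.1, p.1.2, p.2.2⟩⟩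
  have hF : Function.Bijective F := by
    constructor
    · rintro ⟨⟨μ, hμ⟩, ⟨r, h⟩⟩ ⟨⟨μ', hμ'⟩, ⟨r', h'⟩⟩ e
      have e1 : r = r' := congrArg Subtype.val e
      subst e1
      have e2 := hS μ hμ μ' hμ' (h.1.symm.trans h'.1)
      subst e2
      rfl
    · rintro ⟨r, h⟩
      obtain ⟨μ, hμ, hr⟩ := (hQ r).mp h
      exact ⟨⟨⟨μ, hμ⟩, ⟨r, hr⟩⟩, rfl⟩
  rw [← Nat.card_congr (Equiv.ofBijective F hF), Nat.card_sigma]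
  rw [Finset.sum_congr rfl (fun (μ : AA m b) _ => (card_pat s a (S μ)).2)]
  exact Finset.sum_coe_sort (AA m b) (fun μ => cnt s a (S μ))

def SCPat (a b : ℕ) (r : ℕ → ℕ → ℕ) : Prop :=
  (∀ i < a, r a i + r a (a-1-i) = 2*b) ∧ (∀ k, a < k → ∀ i, r k i = 0) ∧
  (∀ k ≤ a, ∀ i, k ≤ i → r k i = 0) ∧
    (∀ k < a, ∀ i < k, r (k+1) (i+1) ≤ r k i ∧ r k i ≤ r (k+1) i)

def SSCPat (a b : ℕ) (r : ℕ → ℕ → ℕ) : Prop :=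
  (∀ i, r a i ≤ b) ∧ (∀ k, a < k → ∀ i, r k i = 0) ∧
  (∀ k ≤ a, ∀ i, k/2 ≤ i → r k i = 0) ∧
    (∀ k < a, ∀ i < k/2, r (k+1) (i+1) ≤ r k i ∧ r k i ≤ r (k+1) i)

theorem card_SCPat (a b : ℕ) :
    Nat.card {r // SCPat a b r} = ∑ μ ∈ AA (a/2) b, cnt id a (sym a b (ext0 μ)) := by
  refine card_union id a (fun μ => sym a b (ext0 μ)) ?_ _ ?_
  · intro μ hμ μ' hμ' e
    funext i
    have h := congrFun e i
    have h1 := ext0_supp μ (a-1-i) (by omega)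
    have h2 := ext0_supp μ' (a-1-i) (by omega)
    simp only [sym, h1, h2, ext0_apply, show (i:ℕ) < a by omega, if_true] at h
    omega
  · intro r
    constructor
    · rintro ⟨h1, h2, h3, h4⟩
      have hanti : ∀ i, r a (i+1) ≤ r a i := by
        intro i
        rcases Nat.lt_or_ge (i+1) a with h | h
        · have := h4 (a-1) (by omega) i (by omega)
          rw [show a - 1 + 1 = a by omega] at this
          omega
        · rw [h3 a le_rfl _ h]; omega
      have hA : Antitone (r a) := antitone_nat_of_succ_le hanti
      refine ⟨fun i => r a i - b, ?_, ?_, h2, fun k hk => h3 k hk.le, h4⟩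
      · rw [mem_AA]
        constructor
        · intro i
          have := h1 i (by omega)
          omega
        · intro i j hij
          have := hA (Fin.le_def.mp hij)
          simp only; omega
      · funext i
        unfold sym
        split_ifs with hi
        · have e1 := h1 i hi
          unfold ext0
          split_ifs with h5 h6 h6
          · omega
          · have := hA (show i ≤ a-1-i by omega)
            simp only; omega
          · have := hA (show a-1-i ≤ i by omega)
            simp only; omega
          · have : a - 1 - i = i := by omega
            rw [this] at e1
            omega
        · exact h3 a le_rfl i (by omega)
    · rintro ⟨μ, hμ, h1, h2, h3, h4⟩
      refine ⟨?_, h2, ?_, h4⟩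
      · intro i hi
        rw [h1]
        have e1 := ext0_le hμ i
        have e2 := ext0_le hμ (a-1-i)
        simp only [sym, hi, show a-1-i < a by omega, if_true, show a-1-(a-1-i) = i by omega]
        omega
      · intro k hk i hi
        rcases Nat.lt_or_ge k a with h | h
        · exact h3 k h i hi
        · have : k = a := by omega
          subst this
          rw [h1]; simp [sym, Nat.not_lt.mpr hi]

theorem card_SSCPat (a b : ℕ) :
    Nat.card {r // SSCPat a b r} = ∑ μ ∈ AA (a/2) b, cnt (· / 2) a (ext0 μ) := by
  refine card_union (· / 2) a (fun μ => ext0 μ) ?_ _ ?_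
  · intro μ hμ μ' hμ' e
    funext i
    have h := congrFun e i
    simpa only [ext0_apply] using h
  · intro r
    constructor
    · rintro ⟨h1, h2, h3, h4⟩
      have hanti : ∀ i, r a (i+1) ≤ r a i := by
        intro i
        rcases Nat.lt_or_ge (i+1) (a/2) with h | h
        · have := h4 (a-1) (by omega) i (by omega)
          rw [show a - 1 + 1 = a by omega] at this
          omega
        · rw [h3 a le_rfl _ h]; omega
      have hA : Antitone (r a) := antitone_nat_of_succ_le hanti
      refine ⟨fun i => r a i, ?_, ?_, h2, fun k hk => h3 k hk.le, h4⟩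
      · rw [mem_AA]
        exact ⟨fun i => h1 i, fun i j hij => hA (Fin.le_def.mp hij)⟩
      · funext i
        unfold ext0
        split_ifs with hi
        · rfl
        · exact h3 a le_rfl i (by omega)
    · rintro ⟨μ, hμ, h1, h2, h3, h4⟩
      refine ⟨?_, h2, ?_, h4⟩
      · intro i
        rw [h1]; exact ext0_le hμ i
      · intro k hk i hi
        rcases Nat.lt_or_ge k a with h | h
        · exact h3 k h i hi
        · have : k = a := by omega
          subst this
          rw [h1]; exact ext0_supp μ i hi

end part5
end SCP

namespace SCP
open Matrix Finset Polynomial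

section part6

def IsH (a c : ℕ) (h : ℕ → ℕ → ℕ) : Prop :=
  (∀ i j, h (i+1) j ≤ h i j) ∧ (∀ i j, h i (j+1) ≤ h i j) ∧ (∀ i j, h i j ≤ c) ∧
    (∀ i j, (¬ (i < a ∧ j < a)) → h i j = 0)

def TH (a c : ℕ) (h : ℕ → ℕ → ℕ) : Set (Fin a × Fin a × Fin c) := {x | (x.2.2 : ℕ) < h x.1 x.2.1}

theorem IsH.mono {a c : ℕ} {h : ℕ → ℕ → ℕ} (hh : IsH a c h) {i i' j j' : ℕ} (hi : i ≤ i') (hj : j ≤ j') :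
    h i' j' ≤ h i j := by
  have h1 : Antitone (fun i => h i j') := antitone_nat_of_succ_le (fun n => hh.1 n j')
  have h2 : Antitone (h i) := antitone_nat_of_succ_le (fun n => hh.2.1 i n)
  exact (h1 hi).trans (h2 hj)

theorem TH_lower {a c : ℕ} {h : ℕ → ℕ → ℕ} (hh : IsH a c h) : IsLowerSet (TH a c h) := by
  rintro ⟨i, j, k⟩ ⟨i', j', k'⟩ ⟨h1, h2, h3⟩ hx
  simp only [TH, Set.mem_ofPred_eq] at *
  have := hh.mono (Fin.le_def.mp h1) (Fin.le_def.mp h2)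
  have h3 := Fin.le_def.mp h3
  omega

theorem TH_comp {a c : ℕ} {h : ℕ → ℕ → ℕ} (hh : IsH a c h) :
    ppComplement (TH a c h) = TH a c h ↔ ∀ i < a, ∀ j < a, h i j + h (a-1-i) (a-1-j) = c := by
  constructor
  · intro e i hi j hj
    have key : ∀ k < c, (¬ (c - 1 - k < h (a-1-i) (a-1-j))) ↔ k < h i j := by
      intro k hk
      have := Set.ext_iff.mp e (⟨i, hi⟩, ⟨j, hj⟩, ⟨k, hk⟩)
      simp only [ppComplement, TH, Set.mem_ofPred_eq, Fin.val_rev] at this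
      rw [← this]
      rw [show a - (i+1) = a-1-i by omega, show a - (j+1) = a-1-j by omega,
        show c - (k+1) = c-1-k by omega]
    have b1 := hh.2.2.1 i j
    have b2 := hh.2.2.1 (a-1-i) (a-1-j)
    rcases Nat.lt_trichotomy (h i j + h (a-1-i) (a-1-j)) c with h1 | h1 | h1
    · have := key (h i j) (by omega)
      omega
    · exact h1
    · have := key (h i j - 1) (by omega)
      omega
  · intro e
    ext ⟨i, j, k⟩
    simp only [ppComplement, TH, Set.mem_ofPred_eq, Fin.val_rev]
    have := e i i.2 j j.2
    rw [show a - ((i:ℕ)+1) = a-1-i by omega, show a - ((j:ℕ)+1) = a-1-j by omega]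
    omega

theorem TH_trans {a c : ℕ} {h : ℕ → ℕ → ℕ} (hh : IsH a c h) :
    ppTranspose (TH a c h) = TH a c h ↔ ∀ i < a, ∀ j < a, h i j = h j i := by
  constructor
  · intro e i hi j hj
    have key : ∀ k < c, k < h j i ↔ k < h i j := by
      intro k hk
      exact Set.ext_iff.mp e (⟨i, hi⟩, ⟨j, hj⟩, ⟨k, hk⟩)
    have b1 := hh.2.2.1 i j
    have b2 := hh.2.2.1 j i
    rcases Nat.lt_trichotomy (h i j) (h j i) with h1 | h1 | h1
    · have := key (h i j) (by omega)
      omega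
    · exact h1
    · have := key (h j i) (by omega)
      omega
  · intro e
    ext ⟨i, j, k⟩
    simp only [ppTranspose, TH, Set.mem_ofPred_eq]
    rw [e i i.2 j j.2]

theorem TH_inj {a c : ℕ} {h h' : ℕ → ℕ → ℕ} (hh : IsH a c h) (hh' : IsH a c h')
    (e : TH a c h = TH a c h') : h = h' := by
  funext i j
  by_cases hij : i < a ∧ j < a
  · have key : ∀ k < c, k < h i j ↔ k < h' i j := by
      intro k hk
      exact Set.ext_iff.mp e (⟨i, hij.1⟩, ⟨j, hij.2⟩, ⟨k, hk⟩)
    have b1 := hh.2.2.1 i j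
    have b2 := hh'.2.2.1 i j
    rcases Nat.lt_trichotomy (h i j) (h' i j) with h1 | h1 | h1
    · have := key (h i j) (by omega)
      omega
    · exact h1
    · have := key (h' i j) (by omega)
      omega
  · rw [hh.2.2.2 i j hij, hh'.2.2.2 i j hij]

theorem TH_surj {a c : ℕ} {T : Set (Fin a × Fin a × Fin c)} (hT : IsLowerSet T) :
    ∃ h, IsH a c h ∧ TH a c h = T := by
  classical
  have hex : ∀ i j, ∃ n, ∀ (hi : i < a) (hj : j < a) (hn : n < c), ((⟨i, hi⟩, ⟨j, hj⟩, ⟨n, hn⟩) : Fin a × Fin a × Fin c) ∉ T :=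
    fun i j => ⟨c, fun _ _ hn => absurd hn (lt_irrefl _)⟩
  let h : ℕ → ℕ → ℕ := fun i j => Nat.find (hex i j)
  have hle : ∀ i j n, (∀ (hi : i < a) (hj : j < a) (hn : n < c),
      ((⟨i, hi⟩, ⟨j, hj⟩, ⟨n, hn⟩) : Fin a × Fin a × Fin c) ∉ T) → h i j ≤ n :=
    fun i j n hn => Nat.find_le (hex i j |> fun _ => hn)
  have hsp : ∀ i j (hi : i < a) (hj : j < a) (hn : h i j < c),
      ((⟨i, hi⟩, ⟨j, hj⟩, ⟨h i j, hn⟩) : Fin a × Fin a × Fin c) ∉ T := fun i j => Nat.find_spec (hex i j)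
  refine ⟨h, ⟨?_, ?_, ?_, ?_⟩, ?_⟩
  · intro i j
    refine hle _ _ _ fun hi hj hn hm => ?_
    refine hsp i j (by omega) hj hn (hT ?_ hm)
    exact ⟨by simp [Fin.le_def], le_rfl, le_rfl⟩
  · intro i j
    refine hle _ _ _ fun hi hj hn hm => ?_
    refine hsp i j hi (by omega) hn (hT ?_ hm)
    exact ⟨le_rfl, by simp [Fin.le_def], le_rfl⟩
  · intro i j
    exact hle _ _ _ fun _ _ hn => absurd hn (lt_irrefl _)
  · intro i j hij
    have := hle i j 0 (fun hi hj => absurd ⟨hi, hj⟩ hij)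
    omega
  · ext ⟨i, j, k⟩
    simp only [TH, Set.mem_ofPred_eq]
    constructor
    · intro hk
      by_contra hm
      have := hle i j k (fun _ _ _ => hm)
      omega
    · intro hm
      by_contra hk
      refine hsp i j i.2 j.2 (by omega) (hT ?_ hm)
      exact ⟨le_rfl, le_rfl, by simp [Fin.le_def]; omega⟩

theorem card_TH {a c : ℕ} (P : Set (Fin a × Fin a × Fin c) → Prop) (Q : (ℕ → ℕ → ℕ) → Prop)
    (hPQ : ∀ h, IsH a c h → (P (TH a c h) ↔ Q h)) :
    Nat.card {T : Set (Fin a × Fin a × Fin c) // IsLowerSet T ∧ P T} = Nat.card {h // IsH a c h ∧ Q h} := by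
  symm
  let F : {h // IsH a c h ∧ Q h} → {T : Set (Fin a × Fin a × Fin c) // IsLowerSet T ∧ P T} :=
    fun h => ⟨TH a c h.1, TH_lower h.2.1, (hPQ _ h.2.1).mpr h.2.2⟩
  refine Nat.card_congr (Equiv.ofBijective F ⟨?_, ?_⟩)
  · rintro ⟨h, hh⟩ ⟨h', hh'⟩ e
    exact Subtype.ext (TH_inj hh.1 hh'.1 (congrArg Subtype.val e))
  · rintro ⟨T, hT, hP⟩
    obtain ⟨h, hh, rfl⟩ := TH_surj hT
    exact ⟨⟨h, hh, (hPQ h hh).mp hP⟩, rfl⟩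

theorem card_SCH (a b : ℕ) :
    Nat.card {h // IsH a (2*b) h ∧ ∀ i < a, ∀ j < a, h i j + h (a-1-i) (a-1-j) = 2*b}
      = Nat.card {r // SCPat a b r} := by
  let F : {h // IsH a (2*b) h ∧ ∀ i < a, ∀ j < a, h i j + h (a-1-i) (a-1-j) = 2*b} →
      {r // SCPat a b r} := fun h => ⟨fun n i => if n ≤ a ∧ i < n then h.1 i (i+a-n) else 0, by
    obtain ⟨h, hh, hc⟩ := h
    refine ⟨?_, ?_, ?_, ?_⟩
    · intro i hi
      simp only [le_refl, hi, true_and, if_true, show a-1-i < a by omega, Nat.add_sub_cancel]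
      exact hc i hi i hi
    · intro k hk i
      simp [Nat.not_le.mpr hk]
    · intro k hk i hi
      simp [Nat.not_lt.mpr hi]
    · intro k hk i hi
      simp only [show k ≤ a by omega, hi, show k+1 ≤ a by omega, show i+1 < k+1 by omega,
        show i < k+1 by omega, true_and, if_true]
      exact ⟨hh.mono (by omega) (by omega), hh.mono (by omega) (by omega)⟩⟩
  refine Nat.card_congr (Equiv.ofBijective F ⟨?_, ?_⟩)
  · rintro ⟨h, hh, hc⟩ ⟨h', hh', hc'⟩ e
    apply Subtype.ext
    have key : ∀ i j, i ≤ j → j < a → h i j = h' i j := by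
      intro i j hij hj
      have := congrFun (congrFun (congrArg Subtype.val e) (a-(j-i))) i
      simp only [F, show a-(j-i) ≤ a by omega, show i < a-(j-i) by omega, true_and, if_true,
        show i + a - (a-(j-i)) = j by omega] at this
      exact this
    funext i j
    show h i j = h' i j
    by_cases hij : i < a ∧ j < a
    · rcases Nat.le_total i j with h1 | h1
      · exact key i j h1 hij.2
      · have e1 := hc i hij.1 j hij.2
        have e2 := hc' i hij.1 j hij.2
        have e3 := key (a-1-i) (a-1-j) (by omega) (by omega)
        omega
    · rw [hh.2.2.2 i j hij, hh'.2.2.2 i j hij]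
  · rintro ⟨r, h1, h2, h3, h4⟩
    have hle : ∀ d, ∀ i, r (a-d) i ≤ 2*b := by
      intro d
      induction d with
      | zero =>
        intro i
        rcases Nat.lt_or_ge i a with h | h
        · have := h1 i h; simp only [Nat.sub_zero]; omega
        · rw [h3 _ (by omega) i (by omega)]; omega
      | succ d ih =>
        intro i
        rcases Nat.lt_or_ge d a with hd | hd
        · rcases Nat.lt_or_ge i (a-(d+1)) with h | h
          · have e := (h4 (a-(d+1)) (by omega) i h).2
            rw [show a-(d+1)+1 = a-d by omega] at e
            exact e.trans (ih i)
          · rw [h3 _ (by omega) i h]; omega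
        · rw [show a-(d+1) = a-d by omega]; exact ih i
    let h : ℕ → ℕ → ℕ := fun i j => if i < a ∧ j < a then
      (if i ≤ j then r (a-(j-i)) i else 2*b - r (a-(i-j)) (a-1-i)) else 0
    have hA : ∀ i j, i ≤ j → j < a → h i j = r (a-(j-i)) i := by
      intro i j hij hj
      simp [h, hij, hj, show i < a by omega]
    have hB : ∀ i j, j < i → i < a → h i j = 2*b - r (a-(i-j)) (a-1-i) := by
      intro i j hij hj
      simp [h, Nat.not_le.mpr hij, hj, show j < a by omega]
    have hZ : ∀ i j, ¬ (i < a ∧ j < a) → h i j = 0 := by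
      intro i j hij
      simp only [h, hij, if_false]
    -- steps
    have s1 : ∀ p d, p + d + 1 < a → r (a-(d+1)) p ≤ r (a-d) p := by
      intro p d hp
      have := (h4 (a-(d+1)) (by omega) p (by omega)).2
      rwa [show a-(d+1)+1 = a-d by omega] at this
    have s2 : ∀ p d, p + d + 1 < a → r (a-d) (p+1) ≤ r (a-(d+1)) p := by
      intro p d hp
      have := (h4 (a-(d+1)) (by omega) p (by omega)).1
      rwa [show a-(d+1)+1 = a-d by omega] at this
    have hH : IsH a (2*b) h := by
      refine ⟨?_, ?_, ?_, hZ⟩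
      · intro i j
        by_cases hij : i + 1 < a ∧ j < a
        · rcases Nat.lt_trichotomy i j with hh | hh | hh
          · rw [hA (i+1) j (by omega) (by omega), hA i j (by omega) (by omega)]
            have := s2 i (j-(i+1)) (by omega)
            rwa [show j-(i+1)+1 = j-i by omega] at this
          · subst hh
            rw [hB (i+1) i (by omega) (by omega), hA i i le_rfl (by omega)]
            have := s2 (a-1-(i+1)) 0 (by omega)
            rw [show a-1-(i+1)+1 = a-1-i by omega] at this
            have e := h1 i (by omega)
            simp only [Nat.sub_self, Nat.sub_zero, zero_add, show i+1-i = 1 by omega] at *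
            omega
          · rw [hB (i+1) j (by omega) (by omega), hB i j (by omega) (by omega)]
            have := s2 (a-1-(i+1)) (i-j) (by omega)
            rw [show a-1-(i+1)+1 = a-1-i by omega, show i-j+1 = i+1-j by omega] at this
            omega
        · rw [hZ (i+1) j hij]; omega
      · intro i j
        by_cases hij : i < a ∧ j + 1 < a
        · rcases Nat.lt_or_ge j i with hh | hh
          · rcases Nat.lt_or_ge (j+1) i with hh' | hh'
            · rw [hB i (j+1) (by omega) (by omega), hB i j (by omega) (by omega)]
              have := s1 (a-1-i) (i-(j+1)) (by omega)
              rw [show i-(j+1)+1 = i-j by omega] at this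
              omega
            · have : i = j+1 := by omega
              subst this
              rw [hB (j+1) j (by omega) (by omega), hA (j+1) (j+1) le_rfl (by omega)]
              have := s1 (a-1-(j+1)) 0 (by omega)
              have e := h1 (j+1) (by omega)
              simp only [Nat.sub_self, Nat.sub_zero, zero_add, show j+1-j = 1 by omega] at *
              omega
          · rw [hA i (j+1) (by omega) (by omega), hA i j (by omega) (by omega)]
            have := s1 i (j-i) (by omega)
            rwa [show j-i+1 = j+1-i by omega] at this
        · rw [hZ i (j+1) hij]; omega
      · intro i j
        simp only [h]
        split_ifs
        · exact hle _ _
        · omega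
        · omega
    have hC : ∀ i < a, ∀ j < a, h i j + h (a-1-i) (a-1-j) = 2*b := by
      intro i hi j hj
      rcases Nat.lt_trichotomy i j with hh | hh | hh
      · rw [hA i j hh.le hj, hB (a-1-i) (a-1-j) (by omega) (by omega),
          show a-1-i-(a-1-j) = j-i by omega, show a-1-(a-1-i) = i by omega]
        have := hle (j-i) i
        omega
      · subst hh
        rw [hA i i le_rfl hi, hA _ _ le_rfl (by omega)]
        simp only [Nat.sub_self, Nat.sub_zero]
        exact h1 i hi
      · rw [hB i j hh hi, hA (a-1-i) (a-1-j) (by omega) (by omega),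
          show a-1-j-(a-1-i) = i-j by omega]
        have := hle (i-j) (a-1-i)
        omega
    refine ⟨⟨h, hH, hC⟩, ?_⟩
    apply Subtype.ext
    funext n i
    simp only [F]
    split_ifs with hn
    · rw [hA i (i+a-n) (by omega) (by omega), show a - (i+a-n-i) = n by omega]
    · symm
      rcases Nat.lt_or_ge a n with h | h
      · exact h2 n h i
      · exact h3 n h i (by omega)

theorem card_SSCH (a b : ℕ) :
    Nat.card {h // IsH a (2*b) h ∧ (∀ i < a, ∀ j < a, h i j = h j i) ∧
        ∀ i < a, ∀ j < a, h i j + h (a-1-i) (a-1-j) = 2*b}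
      = Nat.card {r // SSCPat a b r} := by
  have hge : ∀ h, IsH a (2*b) h → (∀ i < a, ∀ j < a, h i j = h j i) →
      (∀ i < a, ∀ j < a, h i j + h (a-1-i) (a-1-j) = 2*b) → ∀ i j, i + j + 1 ≤ a → b ≤ h i j := by
    intro h hh hs hc i j hij
    have e1 := hc i (by omega) j (by omega)
    have e2 := hs (a-1-i) (by omega) (a-1-j) (by omega)
    have e3 := hh.mono (show i ≤ a-1-j by omega) (show j ≤ a-1-i by omega)
    omega
  let F : {h // IsH a (2*b) h ∧ (∀ i < a, ∀ j < a, h i j = h j i) ∧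
        ∀ i < a, ∀ j < a, h i j + h (a-1-i) (a-1-j) = 2*b} →
      {r // SSCPat a b r} := fun h => ⟨fun n i => if n ≤ a ∧ i < n/2 then h.1 i (i+a-n) - b else 0, by
    obtain ⟨h, hh, hs, hc⟩ := h
    refine ⟨?_, ?_, ?_, ?_⟩
    · intro i
      have := hh.2.2.1 i (i+a-a)
      simp only
      split_ifs <;> omega
    · intro k hk i
      simp [Nat.not_le.mpr hk]
    · intro k hk i hi
      simp [Nat.not_lt.mpr hi]
    · intro k hk i hi
      simp only [show k ≤ a by omega, hi, show k+1 ≤ a by omega,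
        show i < (k+1)/2 by omega, true_and, if_true]
      have e1 := hh.mono (show i ≤ i+1 by omega) (show i+a-k ≤ i+1+a-(k+1) by omega)
      have e2 := hh.mono (le_refl i) (show i+a-(k+1) ≤ i+a-k by omega)
      split_ifs <;> omega⟩
  refine Nat.card_congr (Equiv.ofBijective F ⟨?_, ?_⟩)
  · rintro ⟨h, hh, hs, hc⟩ ⟨h', hh', hs', hc'⟩ e
    apply Subtype.ext
    have key : ∀ i j, i ≤ j → i + j + 1 < a → h i j = h' i j := by
      intro i j hij hj
      have := congrFun (congrFun (congrArg Subtype.val e) (a-(j-i))) i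
      simp only [F, show a-(j-i) ≤ a by omega, show i < (a-(j-i))/2 by omega, true_and, if_true,
        show i + a - (a-(j-i)) = j by omega] at this
      have e1 := hge h hh hs hc i j (by omega)
      have e2 := hge h' hh' hs' hc' i j (by omega)
      omega
    have key2 : ∀ i j, i ≤ j → j < a → h i j = h' i j := by
      intro i j hij hj
      rcases Nat.lt_or_ge (i+j+1) a with h1 | h1
      · exact key i j hij h1
      · have e1 := hc i (by omega) j (by omega)
        have e2 := hs (a-1-i) (by omega) (a-1-j) (by omega)
        have e1' := hc' i (by omega) j (by omega)
        have e2' := hs' (a-1-i) (by omega) (a-1-j) (by omega)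
        rcases Nat.lt_or_ge a (i+j+1) with h2 | h2
        · have := key (a-1-j) (a-1-i) (by omega) (by omega)
          omega
        · rw [show a-1-j = i by omega, show a-1-i = j by omega] at *
          omega
    funext i j
    show h i j = h' i j
    by_cases hij : i < a ∧ j < a
    · rcases Nat.le_total i j with h1 | h1
      · exact key2 i j h1 hij.2
      · rw [hs i hij.1 j hij.2, hs' i hij.1 j hij.2]
        exact key2 j i h1 hij.1
    · rw [hh.2.2.2 i j hij, hh'.2.2.2 i j hij]
  · rintro ⟨r, h1, h2, h3, h4⟩
    have st1 : ∀ n i, n < a → r n i ≤ r (n+1) i := by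
      intro n i hn
      rcases Nat.lt_or_ge i (n/2) with h | h
      · exact (h4 n hn i h).2
      · rw [h3 n hn.le i h]; omega
    have st2 : ∀ n i, n < a → r (n+1) (i+1) ≤ r n i := by
      intro n i hn
      rcases Nat.lt_or_ge i (n/2) with h | h
      · exact (h4 n hn i h).1
      · rw [h3 (n+1) hn (i+1) (by omega)]; omega
    have hle : ∀ d, ∀ i, r (a-d) i ≤ b := by
      intro d
      induction d with
      | zero => exact h1
      | succ d ih =>
        intro i
        rcases Nat.lt_or_ge d a with hd | hd
        · have e := st1 (a-(d+1)) i (by omega)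
          rw [show a-(d+1)+1 = a-d by omega] at e
          exact e.trans (ih i)
        · rw [show a-(d+1) = a-d by omega]; exact ih i
    let R : ℕ → ℕ → ℕ := fun i j => r (a-(max i j - min i j)) (min i j)
    have Rs : ∀ i j, R i j = R j i := by intro i j; simp only [R, max_comm, min_comm]
    have RA : ∀ i j, i ≤ j → R i j = r (a-(j-i)) i := by intro i j hij; simp [R, hij]
    have R0 : ∀ i j, i < a → j < a → a ≤ i + j + 1 → R i j = 0 := by
      intro i j hi hj hij
      refine h3 _ (by omega) _ ?_
      rcases Nat.le_total i j with h | h <;> simp [h] <;> omega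
    have Rle : ∀ i j, R i j ≤ b := fun i j => hle _ _
    have RB : ∀ i j, i < a → j + 1 < a → R i (j+1) ≤ R i j := by
      intro i j hi hj
      rcases Nat.lt_or_ge j i with h | h
      · rw [Rs i (j+1), Rs i j, RA (j+1) i (by omega), RA j i (by omega)]
        have := st2 (a-(i-j)) j (by omega)
        rwa [show a-(i-j)+1 = a-(i-(j+1)) by omega] at this
      · rw [RA i (j+1) (by omega), RA i j h]
        have := st1 (a-(j+1-i)) i (by omega)
        rwa [show a-(j+1-i)+1 = a-(j-i) by omega] at this
    let h : ℕ → ℕ → ℕ := fun i j => if i < a ∧ j < a then b + R i j - R (a-1-i) (a-1-j) else 0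
    have hS : ∀ i j, h i j = h j i := by
      intro i j
      simp only [h, Rs i j, Rs (a-1-i), and_comm]
    have hM : ∀ i j, h i (j+1) ≤ h i j := by
      intro i j
      by_cases hij : i < a ∧ j + 1 < a
      · have hij' : i < a ∧ j < a := by omega
        simp only [h, hij, hij', true_and, and_true, if_true]
        have e1 := RB i j hij.1 hij.2
        have e2 := RB (a-1-i) (a-1-(j+1)) (by omega) (by omega)
        rw [show a-1-(j+1)+1 = a-1-j by omega] at e2
        omega
      · simp only [h, hij, if_false]; omega
    refine ⟨⟨h, ⟨?_, hM, ?_, ?_⟩, fun i _ j _ => hS i j, ?_⟩, ?_⟩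
    · intro i j
      rw [hS (i+1) j, hS i j]; exact hM j i
    · intro i j
      have := Rle i j
      simp only [h]
      split_ifs <;> omega
    · intro i j hij
      simp only [h, hij, if_false]
    · intro i hi j hj
      have e1 := Rle i j
      have e2 := Rle (a-1-i) (a-1-j)
      simp only [h, hi, hj, show a-1-i < a by omega, show a-1-j < a by omega, and_self, if_true,
        show a-1-(a-1-i) = i by omega, show a-1-(a-1-j) = j by omega]
      omega
    · apply Subtype.ext
      funext n i
      simp only [F]
      split_ifs with hn
      · have e1 := R0 (a-1-i) (a-1-(i+a-n)) (by omega) (by omega) (by omega)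
        have e2 := RA i (i+a-n) (by omega)
        rw [show a - (i+a-n-i) = n by omega] at e2
        simp only [h, show i < a by omega, show i+a-n < a by omega, and_self, if_true, e1, e2]
        omega
      · symm
        rcases Nat.lt_or_ge a n with h | h
        · exact h2 n h i
        · exact h3 n h i (by omega)

end part6
end SCP

theorem self_complementary_eq_symmetric_self_complementary_sq (a b : ℕ) :
    Nat.card {T : Set (Fin a × Fin a × Fin (2 * b)) //
        IsLowerSet T ∧ ppComplement T = T}
      = Nat.card {T : Set (Fin a × Fin a × Fin (2 * b)) //
          IsLowerSet T ∧ ppTranspose T = T ∧ ppComplement T = T} ^ 2 := by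
  rw [SCP.card_TH (fun T => ppComplement T = T) _ (fun h hh => SCP.TH_comp hh),
    SCP.card_TH (fun T => ppTranspose T = T ∧ ppComplement T = T) _
      (fun h hh => and_congr (SCP.TH_trans hh) (SCP.TH_comp hh)),
    SCP.card_SCH, SCP.card_SSCH, SCP.card_SCPat, SCP.card_SSCPat, SCP.final_cnt]
end
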